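/- Let n ≥ 2 be an integer. Let (E_j) be a sequence of Lebesgue-measurable subsets of ℝⁿ with 0 < vol(E_j) < ∞ satisfying lim_{j→∞} H^{n−1}(frontier(E_j)) / vol(E_j)^{(n−1)/n} = c_n. Then there exists a sequence of closed balls W_j ⊆ ℝⁿ (of suitable centers and radii) such that vol(E_j Δ W_j) / vol(E_j) → 0 as j → ∞, where Δ denotes the symmetric difference of sets. -/

import Mathlib

open MeasureTheory Filter
open scoped ENNReal

/-!
By scaling, let the sets have the volume of the unit ball. In any fixed direction, transport the
volumes of the slices of a set monotonically onto those of the unit ball. Together with the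
isoperimetric inequality in the slices and the AM-GM inequality, this transport proves the sharp
Sobolev inequality by induction on the dimension, with an explicit deficit. For an almost minimizing
set the deficit is small; moreover no slice that separates a definite amount of volume is small,
since cutting there would contradict the inequality for the two pieces. Hence the transport is
nearly a translation, and half-spaces in this direction cut the set as they cut a translate of the
unit ball.

The heights of these translates depend on the direction, but truncated first moments show that they
are asymptotically linear in it, so all directions share one centre. Finitely many half-spaces then
confine almost all of the set to a slightly larger ball around this centre, and equality of volumes
bounds the symmetric difference.

The Sobolev inequality applies to frontiers through mollified indicator functions: translating a
set by `h • θ` changes it by at most the volume swept out by its frontier, which bounds the total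
variation by the Hausdorff measure of the frontier, up to the factor relating Hausdorff and Lebesgue
measure. With the same factor the sphere measures at most `n ω_n`.
-/

namespace Isoperimetric

open Set Metric
open scoped NNReal Topology

/-- Euclidean `d`-space, with the `L²` norm. -/
abbrev 𝔼 (d : ℕ) : Type :=
  EuclideanSpace ℝ (Fin d)

/-! ### Integrals over the slices of a product -/

section ProductSlices

variable {X Y : Type*} [TopologicalSpace X] [TopologicalSpace Y] {g : X × Y → ℝ}

theorem hasCompactSupport_slice_right [R1Space Y] (hg : HasCompactSupport g) (x : X) :
    HasCompactSupport fun y => g (x, y) :=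
  .intro (hg.isCompact.image continuous_snd) fun y hy => by
    by_contra h
    exact hy ⟨(x, y), subset_tsupport _ h, rfl⟩

variable [MeasurableSpace Y] {μ : Measure Y}

theorem hasCompactSupport_integral_slice [R1Space X] (hg : HasCompactSupport g) :
    HasCompactSupport fun x => ∫ y, g (x, y) ∂μ :=
  .intro (hg.isCompact.image continuous_fst) fun x hx => by
    refine integral_eq_zero_of_ae (.of_forall fun y => ?_)
    by_contra h
    exact hx ⟨(x, y), subset_tsupport _ h, rfl⟩

theorem continuous_integral_slice [OpensMeasurableSpace Y] [IsFiniteMeasureOnCompacts μ]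
    (hgc : Continuous g) (hg : HasCompactSupport g) : Continuous fun x => ∫ y, g (x, y) ∂μ := by
  refine continuousOn_univ.1 (continuousOn_integral_of_compact_support (f := fun x y => g (x, y))
    (hg.isCompact.image continuous_snd) hgc.continuousOn fun x y _ hy => ?_)
  by_contra h
  exact hy ⟨(x, y), subset_tsupport _ h, rfl⟩

end ProductSlices

/-! ### Orthogonal splittings of a Euclidean space -/

section Splitting

variable {E F : Type*} [NormedAddCommGroup E] [InnerProductSpace ℝ E]
  [NormedAddCommGroup F] [InnerProductSpace ℝ F]

/-- `L` presents `E` as the orthogonal sum of the line spanned by the unit vector `L (1, 0)` and a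
copy of `F`. The domain `ℝ × F` carries the sup norm, so orthogonality is stated by Pythagoras. -/
def IsOrthogonalSplitting (L : (ℝ × F) ≃L[ℝ] E) : Prop :=
  ∀ t y, ‖L (t, y)‖ ^ 2 = t ^ 2 + ‖y‖ ^ 2

/-- The isometric embedding of `F` as the hyperplane orthogonal to the axis of the splitting `L`. -/
def hyperplaneEmbedding (L : (ℝ × F) ≃L[ℝ] E) : F →L[ℝ] E :=
  (L : (ℝ × F) →L[ℝ] E).comp (ContinuousLinearMap.inr ℝ ℝ F)

/-- The integral of `u` over the slice at height `t`. -/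
noncomputable def sliceIntegral [MeasureSpace F] (L : (ℝ × F) ≃L[ℝ] E) (u : E → ℝ) (t : ℝ) : ℝ :=
  ∫ y, u (L (t, y))

/-- The integral of the norm of the tangential gradient of `u` over the slice at height `t`. -/
noncomputable def sliceGradIntegral [MeasureSpace F] (L : (ℝ × F) ≃L[ℝ] E) (u : E → ℝ) (t : ℝ) :
    ℝ :=
  ∫ y, ‖fderiv ℝ (fun y => u (L (t, y))) y‖

variable {L : (ℝ × F) ≃L[ℝ] E} {u : E → ℝ}

theorem apply_splitting_eq (t : ℝ) (y : F) :
    L (t, y) = t • L (1, 0) + hyperplaneEmbedding L y := by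
  rw [hyperplaneEmbedding, ← map_smul]
  simp [← map_add]

theorem hasCompactSupport_comp_splitting {X : Type*} [Zero X] {v : E → X}
    (hv : HasCompactSupport v) : HasCompactSupport fun p => v (L p) :=
  hv.comp_homeomorph L.toHomeomorph

theorem hasFDerivAt_comp_splitting (hu : ContDiff ℝ 1 u) (p : ℝ × F) :
    HasFDerivAt (fun p => u (L p)) ((fderiv ℝ u (L p)).comp (L : (ℝ × F) →L[ℝ] E)) p :=
  (hu.differentiable one_ne_zero _).hasFDerivAt.comp p (L : (ℝ × F) →L[ℝ] E).hasFDerivAt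

theorem fderiv_slice (hu : ContDiff ℝ 1 u) (t : ℝ) (y : F) :
    fderiv ℝ (fun y => u (L (t, y))) y = (fderiv ℝ u (L (t, y))).comp (hyperplaneEmbedding L) :=
  ((hasFDerivAt_comp_splitting hu (t, y)).comp y (hasFDerivAt_prodMk_right t y)).fderiv

theorem continuous_norm_tangential_fderiv (hu : ContDiff ℝ 1 u) :
    Continuous fun p => ‖(fderiv ℝ u (L p)).comp (hyperplaneEmbedding L)‖ :=
  (((hu.continuous_fderiv one_ne_zero).comp L.continuous).clm_comp continuous_const).norm

theorem hasCompactSupport_norm_tangential_fderiv (hc : HasCompactSupport u) :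
    HasCompactSupport fun p => ‖(fderiv ℝ u (L p)).comp (hyperplaneEmbedding L)‖ :=
  (hasCompactSupport_comp_splitting (hc.fderiv ℝ)).comp_left
    (g := fun l : E →L[ℝ] ℝ => ‖l.comp (hyperplaneEmbedding L)‖) (by simp)

theorem hasLineDerivAt_comp_fst {G : ℝ → ℝ} (hG : Differentiable ℝ G) (p : ℝ × F) :
    HasLineDerivAt ℝ (fun p : ℝ × F => G p.1) (deriv G p.1) p (1, 0) := by
  have hfst : HasFDerivAt (fun p : ℝ × F => G p.1)
      (deriv G p.1 • ContinuousLinearMap.fst ℝ ℝ F) p :=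
    (hG p.1).hasDerivAt.comp_hasFDerivAt p hasFDerivAt_fst
  simpa using hfst.hasLineDerivAt (1, 0)

namespace IsOrthogonalSplitting

/-- The linear isometry underlying an orthogonal splitting, once `ℝ × F` is given the `L²` norm. -/
noncomputable def linearIsometryEquiv (hL : IsOrthogonalSplitting L) :
    WithLp 2 (ℝ × F) ≃ₗᵢ[ℝ] E where
  toLinearEquiv := (WithLp.linearEquiv 2 ℝ (ℝ × F)).trans L.toLinearEquiv
  norm_map' p := by
    rw [← sq_eq_sq₀ (norm_nonneg _) (norm_nonneg _), WithLp.prod_norm_sq_eq_of_L2,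
      Real.norm_eq_abs, sq_abs]
    exact hL p.ofLp.1 p.ofLp.2

variable (hL : IsOrthogonalSplitting L)
include hL

theorem inner_axis (t : ℝ) (y : F) : inner ℝ (L (1, 0)) (L (t, y)) = t :=
  (hL.linearIsometryEquiv.inner_map_map (WithLp.toLp 2 (1, 0)) (WithLp.toLp 2 (t, y))).trans
    (by simp)

/-- A functional dominates its value at the unit vectors `(-g, √(1 - g²) z)`. -/
theorem neg_mul_apply_axis_add_le_norm (l : E →L[ℝ] ℝ) {g : ℝ} (hg : |g| ≤ 1) {z : F}
    (hz : ‖z‖ ≤ 1) :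
    -(g * l (L (1, 0))) + √(1 - g ^ 2) * l (hyperplaneEmbedding L z) ≤ ‖l‖ := by
  have hg2 : 0 ≤ 1 - g ^ 2 := sub_nonneg.2 ((sq_le_one_iff_abs_le_one g).2 hg)
  have hnorm : ‖L (-g, √(1 - g ^ 2) • z)‖ ≤ 1 := by
    rw [← sq_le_one_iff₀ (norm_nonneg _), hL, norm_smul, mul_pow, Real.norm_eq_abs, sq_abs,
      Real.sq_sqrt hg2]
    nlinarith [pow_le_one₀ (norm_nonneg z) hz (n := 2)]
  calc -(g * l (L (1, 0))) + √(1 - g ^ 2) * l (hyperplaneEmbedding L z)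
      = l (L (-g, √(1 - g ^ 2) • z)) := by
        rw [apply_splitting_eq (-g)]
        simp
    _ ≤ ‖l‖ * ‖L (-g, √(1 - g ^ 2) • z)‖ := (le_abs_self _).trans (l.le_opNorm _)
    _ ≤ ‖l‖ := mul_le_of_le_one_right (norm_nonneg _) hnorm

theorem neg_mul_apply_axis_add_norm_le (l : E →L[ℝ] ℝ) {g : ℝ} (hg : |g| ≤ 1) :
    -(g * l (L (1, 0))) + √(1 - g ^ 2) * ‖l.comp (hyperplaneEmbedding L)‖ ≤ ‖l‖ := by
  have hz0 := hL.neg_mul_apply_axis_add_le_norm l hg (z := 0) (by simp)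
  simp only [map_zero, mul_zero, add_zero] at hz0
  rcases (Real.sqrt_nonneg (1 - g ^ 2)).eq_or_lt with h0 | h0
  · rwa [← h0, zero_mul, add_zero]
  suffices ‖l.comp (hyperplaneEmbedding L)‖ ≤ (‖l‖ + g * l (L (1, 0))) / √(1 - g ^ 2) by
    rw [le_div_iff₀ h0] at this
    linarith
  refine ContinuousLinearMap.opNorm_le_of_unit_norm (div_nonneg (by linarith) h0.le) fun z hz => ?_
  rw [le_div_iff₀ h0, ContinuousLinearMap.comp_apply, Real.norm_eq_abs, ← le_div_iff₀ h0, abs_le,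
    neg_le, le_div_iff₀ h0, le_div_iff₀ h0]
  have hpos := hL.neg_mul_apply_axis_add_le_norm l hg hz.le
  have hneg := hL.neg_mul_apply_axis_add_le_norm l hg (norm_neg z ▸ hz.le)
  rw [map_neg, map_neg] at hneg
  constructor <;> linarith

end IsOrthogonalSplitting

section Measure

variable [MeasurableSpace F] [BorelSpace F] [FiniteDimensional ℝ F]

theorem continuous_sliceIntegral (hu : Continuous u) (hc : HasCompactSupport u) :
    Continuous (sliceIntegral L u) :=
  continuous_integral_slice (g := fun p => u (L p)) (hu.comp L.continuous)
    (hasCompactSupport_comp_splitting hc)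

theorem hasCompactSupport_sliceIntegral (hc : HasCompactSupport u) :
    HasCompactSupport (sliceIntegral L u) :=
  hasCompactSupport_integral_slice (hasCompactSupport_comp_splitting hc)

theorem sliceGradIntegral_eq (hu : ContDiff ℝ 1 u) :
    sliceGradIntegral L u =
      fun t => ∫ y, ‖(fderiv ℝ u (L (t, y))).comp (hyperplaneEmbedding L)‖ := by
  ext t
  simp only [sliceGradIntegral, fderiv_slice hu]

theorem continuous_sliceGradIntegral (hu : ContDiff ℝ 1 u) (hc : HasCompactSupport u) :
    Continuous (sliceGradIntegral L u) := by
  rw [sliceGradIntegral_eq hu]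
  exact continuous_integral_slice (continuous_norm_tangential_fderiv hu)
    (hasCompactSupport_norm_tangential_fderiv hc)

theorem hasCompactSupport_sliceGradIntegral (hu : ContDiff ℝ 1 u) (hc : HasCompactSupport u) :
    HasCompactSupport (sliceGradIntegral L u) := by
  rw [sliceGradIntegral_eq hu]
  exact hasCompactSupport_integral_slice (hasCompactSupport_norm_tangential_fderiv hc)

theorem integral_mul_integral_slice {g : ℝ × F → ℝ} (hgc : Continuous g)
    (hg : HasCompactSupport g) {φ : ℝ → ℝ} (hφ : Continuous φ) :
    ∫ t, φ t * ∫ y, g (t, y) = ∫ p : ℝ × F, φ p.1 * g p := by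
  have hint : Integrable (fun p : ℝ × F => φ p.1 * g p) :=
    ((hφ.comp continuous_fst).mul hgc).integrable_of_hasCompactSupport hg.mul_left
  simp only [← integral_const_mul]
  exact (integral_prod _ hint).symm

theorem integral_deriv_fst_mul_comp_splitting (hu : ContDiff ℝ 1 u) (hc : HasCompactSupport u)
    {G : ℝ → ℝ} (hG : ContDiff ℝ 1 G) :
    ∫ p : ℝ × F, deriv G p.1 * u (L p) = -∫ p : ℝ × F, G p.1 * fderiv ℝ u (L p) (L (1, 0)) := by
  have hcL : HasCompactSupport fun p => u (L p) := hasCompactSupport_comp_splitting hc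
  have hcL' : HasCompactSupport fun p => fderiv ℝ u (L p) (L (1, 0)) :=
    hasCompactSupport_comp_splitting (v := fun x => fderiv ℝ u x (L (1, 0))) (hc.fderiv_apply ℝ _)
  have huL : Continuous fun p => u (L p) := hu.continuous.comp L.continuous
  have huL' : Continuous fun p => fderiv ℝ u (L p) (L (1, 0)) :=
    ((hu.continuous_fderiv one_ne_zero).comp L.continuous).clm_apply continuous_const
  have hG0 : Continuous fun p : ℝ × F => G p.1 := hG.continuous.comp continuous_fst
  have hG1 : Continuous fun p : ℝ × F => deriv G p.1 :=
    (hG.continuous_deriv le_rfl).comp continuous_fst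
  have byParts := integral_bilinear_hasLineDerivAt_right_eq_neg_left_of_integrable
    (μ := (volume : Measure ℝ).prod (volume : Measure F)) (v := (1, 0))
    (B := ContinuousLinearMap.mul ℝ ℝ)
    (f := fun p => G p.1) (f' := fun p => deriv G p.1)
    (g := fun p => u (L p)) (g' := fun p => fderiv ℝ u (L p) (L (1, 0)))
    ((hG1.mul huL).integrable_of_hasCompactSupport hcL.mul_left)
    ((hG0.mul huL').integrable_of_hasCompactSupport hcL'.mul_left)
    ((hG0.mul huL).integrable_of_hasCompactSupport hcL.mul_left)
    (fun p _ => hasLineDerivAt_comp_fst (hG.differentiable one_ne_zero) p)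
    (fun p _ => (hasFDerivAt_comp_splitting hu p).hasLineDerivAt (1, 0))
  exact (neg_eq_iff_eq_neg.2 byParts).symm

namespace IsOrthogonalSplitting

variable [MeasurableSpace E] [BorelSpace E] [FiniteDimensional ℝ E] (hL : IsOrthogonalSplitting L)
include hL

theorem measurePreserving : MeasurePreserving L volume volume :=
  hL.linearIsometryEquiv.measurePreserving.comp (WithLp.volume_preserving_toLp ℝ F)

theorem integral_comp (f : E → ℝ) : ∫ p, f (L p) = ∫ x, f x :=
  hL.measurePreserving.integral_comp L.toHomeomorph.measurableEmbedding f

theorem integral_sliceIntegral (hu : Continuous u) (hc : HasCompactSupport u) :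
    ∫ t, sliceIntegral L u t = ∫ x, u x := by
  rw [← hL.integral_comp]
  simpa [sliceIntegral] using integral_mul_integral_slice (hu.comp L.continuous)
    (hasCompactSupport_comp_splitting hc) (continuous_const (y := (1 : ℝ)))

/-- Test `∇u` against the unit fields `(-G, √(1 - G²) z)`, `‖z‖ ≤ 1`, and integrate the axial part
by parts. -/
theorem integral_deriv_mul_sliceIntegral_add_le (hu : ContDiff ℝ 1 u) (hc : HasCompactSupport u)
    {G : ℝ → ℝ} (hG : ContDiff ℝ 1 G) (hG1 : ∀ t, |G t| ≤ 1) :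
    ∫ t, (deriv G t * sliceIntegral L u t + √(1 - G t ^ 2) * sliceGradIntegral L u t) ≤
      ∫ x, ‖fderiv ℝ u x‖ := by
  have hGc := hG.continuous
  have hsqrt : Continuous fun t => √(1 - G t ^ 2) := by fun_prop
  have hsqrt_fst : Continuous fun p : ℝ × F => √(1 - G p.1 ^ 2) := hsqrt.comp continuous_fst
  have hfc := (hu.continuous_fderiv one_ne_zero).comp L.continuous
  have iaxial : Integrable fun p : ℝ × F => G p.1 * fderiv ℝ u (L p) (L (1, 0)) :=
    ((hGc.comp continuous_fst).mul (hfc.clm_apply continuous_const)).integrable_of_hasCompactSupport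
      (hasCompactSupport_comp_splitting (hc.fderiv_apply ℝ (L (1, 0)))).mul_left
  have itangential : Integrable fun p : ℝ × F =>
      √(1 - G p.1 ^ 2) * ‖(fderiv ℝ u (L p)).comp (hyperplaneEmbedding L)‖ :=
    (hsqrt_fst.mul (continuous_norm_tangential_fderiv hu)).integrable_of_hasCompactSupport
      (hasCompactSupport_norm_tangential_fderiv hc).mul_left
  have hG'c := hG.continuous_deriv le_rfl
  calc ∫ t, (deriv G t * sliceIntegral L u t + √(1 - G t ^ 2) * sliceGradIntegral L u t)
      = (∫ t, deriv G t * sliceIntegral L u t) + ∫ t, √(1 - G t ^ 2) * sliceGradIntegral L u t :=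
        integral_add
          ((hG'c.mul (continuous_sliceIntegral hu.continuous hc)).integrable_of_hasCompactSupport
            (hasCompactSupport_sliceIntegral hc).mul_left)
          ((hsqrt.mul (continuous_sliceGradIntegral hu hc)).integrable_of_hasCompactSupport
            (hasCompactSupport_sliceGradIntegral hu hc).mul_left)
    _ = (-∫ p : ℝ × F, G p.1 * fderiv ℝ u (L p) (L (1, 0))) + ∫ p : ℝ × F,
          √(1 - G p.1 ^ 2) * ‖(fderiv ℝ u (L p)).comp (hyperplaneEmbedding L)‖ := by
        rw [← integral_deriv_fst_mul_comp_splitting hu hc hG, sliceGradIntegral_eq hu,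
          integral_mul_integral_slice (continuous_norm_tangential_fderiv hu)
            (hasCompactSupport_norm_tangential_fderiv hc) hsqrt,
          ← integral_mul_integral_slice (g := fun p => u (L p))
            (hu.continuous.comp L.continuous) (hasCompactSupport_comp_splitting hc) hG'c]
        rfl
    _ = ∫ p : ℝ × F, (-(G p.1 * fderiv ℝ u (L p) (L (1, 0))) +
          √(1 - G p.1 ^ 2) * ‖(fderiv ℝ u (L p)).comp (hyperplaneEmbedding L)‖) := by
        rw [← integral_neg]
        exact (integral_add iaxial.neg itangential).symm
    _ ≤ ∫ p, ‖fderiv ℝ u (L p)‖ :=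
        integral_mono (iaxial.neg.add itangential)
          (hfc.norm.integrable_of_hasCompactSupport
            (hasCompactSupport_comp_splitting (hc.fderiv ℝ)).norm)
          fun p => hL.neg_mul_apply_axis_add_norm_le _ (hG1 _)
    _ = ∫ x, ‖fderiv ℝ u x‖ := hL.integral_comp fun x => ‖fderiv ℝ u x‖

end IsOrthogonalSplitting

end Measure

theorem exists_isOrthogonalSplitting [FiniteDimensional ℝ E] [FiniteDimensional ℝ F]
    (hEF : Module.finrank ℝ E = Module.finrank ℝ F + 1) {θ : E} (hθ : ‖θ‖ = 1) :
    ∃ L : (ℝ × F) ≃L[ℝ] E, IsOrthogonalSplitting L ∧ L (1, 0) = θ := by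
  have hrank : Module.finrank ℝ (WithLp 2 (ℝ × F)) = Module.finrank ℝ E := by
    rw [LinearEquiv.finrank_eq (WithLp.linearEquiv 2 ℝ (ℝ × F)), hEF]
    simp [add_comm]
  let e₀ : WithLp 2 (ℝ × F) ≃ₗᵢ[ℝ] E :=
    (stdOrthonormalBasis ℝ _).equiv (stdOrthonormalBasis ℝ E) (finCongr hrank)
  let v : E := e₀ (WithLp.toLp 2 (1, 0))
  have hv : ‖v‖ = ‖θ‖ := by
    rw [hθ, LinearIsometryEquiv.norm_map]
    simp
  let e : WithLp 2 (ℝ × F) ≃ₗᵢ[ℝ] E := e₀.trans (Submodule.reflection (ℝ ∙ (v - θ))ᗮ)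
  refine ⟨(WithLp.prodContinuousLinearEquiv 2 ℝ ℝ F).symm.trans e.toContinuousLinearEquiv,
    fun t y => ?_, Submodule.reflection_sub hv⟩
  have := WithLp.prod_norm_sq_eq_of_L2 (WithLp.toLp 2 (t, y))
  rw [← e.norm_map] at this
  simpa using this

end Splitting

/-! ### Sections and caps of the unit ball -/

section Ball

variable {d : ℕ}

/-- The volume `ω_d` of the unit ball of `ℝᵈ`. -/
noncomputable def ballVolume (d : ℕ) : ℝ :=
  volume.real (ball (0 : 𝔼 d) 1)

theorem ballVolume_pos (d : ℕ) : 0 < ballVolume d :=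
  ENNReal.toReal_pos (measure_ball_pos _ _ one_pos).ne' measure_ball_lt_top.ne

theorem volume_ball_eq [NeZero d] (x : 𝔼 d) {r : ℝ} (hr : 0 ≤ r) :
    volume (ball x r) = ENNReal.ofReal (ballVolume d * r ^ d) := by
  rw [Measure.addHaar_ball _ _ hr, mul_comm, ENNReal.ofReal_mul (ballVolume_pos d).le, ballVolume,
    measureReal_def, ENNReal.ofReal_toReal measure_ball_lt_top.ne, finrank_euclideanSpace_fin]

/-- The constant `n ω_n^{1/n}` of the isoperimetric inequality in `ℝⁿ`. -/
noncomputable def isoperimetricConst (n : ℕ) : ℝ :=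
  n * ballVolume n ^ (n : ℝ)⁻¹

theorem isoperimetricConst_pos (n : ℕ) [NeZero n] : 0 < isoperimetricConst n :=
  mul_pos (Nat.cast_pos.2 (NeZero.pos n)) (Real.rpow_pos_of_pos (ballVolume_pos n) _)

/-- The `d`-dimensional volume of the section of the unit ball of `ℝᵈ⁺¹` at height `s`. -/
noncomputable def ballSection (d : ℕ) (s : ℝ) : ℝ :=
  ballVolume d * √(1 - s ^ 2) ^ d

theorem continuous_ballSection (d : ℕ) : Continuous (ballSection d) := by
  unfold ballSection
  fun_prop

theorem ballSection_nonneg (d : ℕ) (s : ℝ) : 0 ≤ ballSection d s :=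
  mul_nonneg (ballVolume_pos d).le (pow_nonneg (Real.sqrt_nonneg _) d)

theorem ballSection_pos (d : ℕ) {s : ℝ} (hs : |s| < 1) : 0 < ballSection d s :=
  mul_pos (ballVolume_pos d)
    (pow_pos (Real.sqrt_pos.2 (sub_pos.2 ((sq_lt_one_iff_abs_lt_one s).2 hs))) d)

theorem ballSection_eq_zero [NeZero d] {s : ℝ} (hs : 1 ≤ |s|) : ballSection d s = 0 := by
  rw [ballSection, Real.sqrt_eq_zero_of_nonpos (sub_nonpos.2 ((one_le_sq_iff_one_le_abs s).2 hs)),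
    zero_pow (NeZero.ne d), mul_zero]

theorem ballSection_neg (d : ℕ) (s : ℝ) : ballSection d (-s) = ballSection d s := by
  simp [ballSection]

theorem volume_unitBall_eq_lintegral_ballSection [NeZero d] :
    volume (ball (0 : 𝔼 (d + 1)) 1) = ∫⁻ t, ENNReal.ofReal (ballSection d t) := by
  obtain ⟨L, hL, -⟩ := exists_isOrthogonalSplitting (F := 𝔼 d) (by simp)
    (show ‖(EuclideanSpace.single 0 1 : 𝔼 (d + 1))‖ = 1 by simp)
  rw [← hL.measurePreserving.measure_preimage measurableSet_ball.nullMeasurableSet,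
    Measure.volume_eq_prod, Measure.prod_apply (L.continuous.measurable measurableSet_ball)]
  refine lintegral_congr fun t => ?_
  rw [ballSection, ← volume_ball_eq 0 (Real.sqrt_nonneg _)]
  congr 1
  ext y
  simp only [mem_preimage, mem_ball_zero_iff]
  rw [Real.lt_sqrt (norm_nonneg _), ← sq_lt_one_iff₀ (norm_nonneg _), hL, lt_sub_iff_add_lt']

theorem integral_ballSection [NeZero d] : ∫ s in (-1)..1, ballSection d s = ballVolume (d + 1) := by
  rw [ballVolume, measureReal_def, volume_unitBall_eq_lintegral_ballSection,
    ← integral_eq_lintegral_of_nonneg_ae (.of_forall (ballSection_nonneg d))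
      (continuous_ballSection d).aestronglyMeasurable,
    intervalIntegral.integral_of_le (by norm_num)]
  refine setIntegral_eq_integral_of_forall_compl_eq_zero fun s hs => ballSection_eq_zero ?_
  by_contra! h
  exact hs (Ioo_subset_Ioc_self (abs_lt.1 h))

/-- The volume of the part of the unit ball of `ℝᵈ⁺¹` below height `s`, for `s ≥ -1`. -/
noncomputable def ballCap (d : ℕ) (s : ℝ) : ℝ :=
  ∫ x in (-1)..s, ballSection d x

theorem hasDerivAt_ballCap (d : ℕ) (s : ℝ) : HasDerivAt (ballCap d) (ballSection d s) s :=
  (continuous_ballSection d).integral_hasStrictDerivAt _ _ |>.hasDerivAt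

theorem continuous_ballCap (d : ℕ) : Continuous (ballCap d) :=
  continuous_iff_continuousAt.2 fun s => (hasDerivAt_ballCap d s).continuousAt

theorem strictMonoOn_ballCap (d : ℕ) : StrictMonoOn (ballCap d) (Icc (-1) 1) := by
  refine strictMonoOn_of_deriv_pos (convex_Icc _ _) (continuous_ballCap d).continuousOn
    fun s hs => ?_
  rw [interior_Icc] at hs
  exact (hasDerivAt_ballCap d s).deriv ▸ ballSection_pos d (abs_lt.2 hs)

theorem monotone_ballCap (d : ℕ) : Monotone (ballCap d) :=
  monotone_of_deriv_nonneg (fun s => (hasDerivAt_ballCap d s).differentiableAt)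
    fun s => (hasDerivAt_ballCap d s).deriv ▸ ballSection_nonneg d s

theorem ballCap_neg_one (d : ℕ) : ballCap d (-1) = 0 :=
  intervalIntegral.integral_same

theorem ballCap_one [NeZero d] : ballCap d 1 = ballVolume (d + 1) :=
  integral_ballSection

theorem ballCap_mem_Ioo [NeZero d] {s : ℝ} (hs : s ∈ Ioo (-1 : ℝ) 1) :
    ballCap d s ∈ Ioo 0 (ballVolume (d + 1)) := by
  have hs' := Ioo_subset_Icc_self hs
  constructor
  · rw [← ballCap_neg_one d]
    exact strictMonoOn_ballCap d ⟨le_rfl, by norm_num⟩ hs' hs.1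
  · rw [← ballCap_one]
    exact strictMonoOn_ballCap d hs' ⟨by norm_num, le_rfl⟩ hs.2

theorem exists_ballCap_eq [NeZero d] {m : ℝ} (hm : m ∈ Ioo 0 (ballVolume (d + 1))) :
    ∃ s ∈ Ioo (-1 : ℝ) 1, ballCap d s = m := by
  rw [← ballCap_neg_one d, ← ballCap_one] at hm
  exact intermediate_value_Ioo (by norm_num) (continuous_ballCap d).continuousOn hm

/-- The height at which the cap of the unit ball of `ℝᵈ⁺¹` has volume `m`, for `0 < m < ω_{d+1}`. -/
noncomputable def capHeight (d : ℕ) : ℝ → ℝ :=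
  Function.invFunOn (ballCap d) (Ioo (-1) 1)

theorem capHeight_mem [NeZero d] {m : ℝ} (hm : m ∈ Ioo 0 (ballVolume (d + 1))) :
    capHeight d m ∈ Ioo (-1) 1 :=
  Function.invFunOn_mem (exists_ballCap_eq hm)

theorem ballCap_capHeight [NeZero d] {m : ℝ} (hm : m ∈ Ioo 0 (ballVolume (d + 1))) :
    ballCap d (capHeight d m) = m :=
  Function.invFunOn_eq (exists_ballCap_eq hm)

theorem capHeight_ballCap {s : ℝ} (hs : s ∈ Ioo (-1) 1) : capHeight d (ballCap d s) = s :=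
  ((strictMonoOn_ballCap d).mono Ioo_subset_Icc_self).injOn.leftInvOn_invFunOn hs

theorem strictMonoOn_capHeight [NeZero d] :
    StrictMonoOn (capHeight d) (Ioo 0 (ballVolume (d + 1))) := fun x hx y hy hxy => by
  by_contra! h
  have := monotone_ballCap d h
  rw [ballCap_capHeight hx, ballCap_capHeight hy] at this
  exact hxy.not_ge this

theorem hasDerivAt_capHeight [NeZero d] {m : ℝ} (hm : m ∈ Ioo 0 (ballVolume (d + 1))) :
    HasDerivAt (capHeight d) (ballSection d (capHeight d m))⁻¹ m := by
  have hnhds := isOpen_Ioo.mem_nhds hm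
  have hsurj : Ioo (-1) 1 ⊆ capHeight d '' Ioo 0 (ballVolume (d + 1)) := fun s hs =>
    ⟨ballCap d s, ballCap_mem_Ioo hs, capHeight_ballCap hs⟩
  refine HasDerivAt.of_local_left_inverse ?_ (hasDerivAt_ballCap d _)
    (ballSection_pos d (abs_lt.2 (capHeight_mem hm))).ne'
    (mem_of_superset hnhds fun _ => ballCap_capHeight)
  exact strictMonoOn_capHeight.continuousAt_of_image_mem_nhds hnhds
    (mem_of_superset (isOpen_Ioo.mem_nhds (capHeight_mem hm)) hsurj)

end Ball

/-! ### Transport of a density on the line to the sections of the ball -/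

section Transport

theorem hasDerivAt_integral_Iic {A : ℝ → ℝ} (hA : Continuous A) (hint : Integrable A) (t : ℝ) :
    HasDerivAt (fun t => ∫ x in Iic t, A x) (A t) t := by
  have hsplit : (fun t => ∫ x in Iic t, A x) =
      fun t => (∫ x in Iic 0, A x) + ∫ x in (0 : ℝ)..t, A x := by
    ext t
    rw [← intervalIntegral.integral_Iic_sub_Iic hint.integrableOn hint.integrableOn,
      add_sub_cancel]
  rw [hsplit]
  exact (hA.integral_hasStrictDerivAt 0 t).hasDerivAt.const_add _

variable {d : ℕ} {δ : ℝ} {A G : ℝ → ℝ}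

/-- The volume of the cap that receives the mass of `A` below height `t`. An amount `δ ω_{d+1} / 2`
is kept back at either end, so that the target height stays strictly between `-1` and `1`. -/
noncomputable def transportedMass (d : ℕ) (δ : ℝ) (A : ℝ → ℝ) (t : ℝ) : ℝ :=
  ballVolume (d + 1) * (δ / 2 + (1 - δ) * ((∫ x in Iic t, A x) / ∫ x, A x))

/-- The ratio between mass of `A` and volume of the ball under the transport. -/
noncomputable def transportScale (d : ℕ) (δ : ℝ) (A : ℝ → ℝ) : ℝ :=
  (∫ x, A x) / ((1 - δ) * ballVolume (d + 1))

/-- `G` is the monotone map that transports the density `A` on the line to the density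
`ballSection d` on `(-1, 1)`, up to the mass `δ` kept back at the ends. -/
structure IsTransport (d : ℕ) (δ : ℝ) (A G : ℝ → ℝ) : Prop where
  contDiff : ContDiff ℝ 1 G
  abs_lt_one : ∀ t, |G t| < 1
  monotone : Monotone G
  ballCap_eq : ∀ t, ballCap d (G t) = transportedMass d δ A t
  deriv_eq : ∀ t, deriv G t = A t / (transportScale d δ A * ballSection d (G t))

theorem transportScale_pos (d : ℕ) (hmass : 0 < ∫ t, A t) (hδ : δ < 1) :
    0 < transportScale d δ A :=
  div_pos hmass (mul_pos (sub_pos.2 hδ) (ballVolume_pos _))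

theorem transportedMass_mem_Ioo (d : ℕ) (hint : Integrable A) (hnonneg : ∀ t, 0 ≤ A t)
    (hmass : 0 < ∫ t, A t) (hδ : δ ∈ Ioo (0 : ℝ) 1) (t : ℝ) :
    transportedMass d δ A t ∈ Ioo 0 (ballVolume (d + 1)) := by
  obtain ⟨hδ0, hδ1⟩ := hδ
  have hfrac0 : 0 ≤ (∫ x in Iic t, A x) / ∫ x, A x := div_nonneg (integral_nonneg hnonneg) hmass.le
  have hfrac1 : (∫ x in Iic t, A x) / ∫ x, A x ≤ 1 :=
    (div_le_one hmass).2 (setIntegral_le_integral hint (.of_forall hnonneg))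
  constructor
  · exact mul_pos (ballVolume_pos _) (by nlinarith)
  · exact mul_lt_of_lt_one_right (ballVolume_pos _) (by nlinarith)

theorem hasDerivAt_capHeight_transportedMass [NeZero d] (hA : Continuous A) (hint : Integrable A)
    (hnonneg : ∀ t, 0 ≤ A t) (hmass : 0 < ∫ t, A t) (hδ : δ ∈ Ioo (0 : ℝ) 1) (t : ℝ) :
    HasDerivAt (fun t => capHeight d (transportedMass d δ A t))
      (A t / (transportScale d δ A * ballSection d (capHeight d (transportedMass d δ A t)))) t := by
  have hm := transportedMass_mem_Ioo d hint hnonneg hmass hδ t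
  have hderiv := (hasDerivAt_capHeight hm).comp t
    (((((hasDerivAt_integral_Iic hA hint t).div_const (∫ x, A x)).const_mul (1 - δ)).const_add
      (δ / 2)).const_mul (ballVolume (d + 1)))
  have hsec := (ballSection_pos d (abs_lt.2 (capHeight_mem hm))).ne'
  have hδ1 : 1 - δ ≠ 0 := (sub_pos.2 hδ.2).ne'
  have hvol := (ballVolume_pos (d + 1)).ne'
  refine hderiv.congr_deriv ?_
  rw [transportScale]
  field_simp

theorem exists_isTransport [NeZero d] (hA : Continuous A) (hint : Integrable A)
    (hnonneg : ∀ t, 0 ≤ A t) (hmass : 0 < ∫ t, A t) (hδ : δ ∈ Ioo (0 : ℝ) 1) :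
    ∃ G, IsTransport d δ A G := by
  have hm := transportedMass_mem_Ioo d hint hnonneg hmass hδ
  have hderiv := hasDerivAt_capHeight_transportedMass (d := d) hA hint hnonneg hmass hδ
  have hlt t := abs_lt.2 (capHeight_mem (hm t))
  have hscale := transportScale_pos d hmass hδ.2
  refine ⟨fun t => capHeight d (transportedMass d δ A t), ?_, hlt, ?_,
    fun t => ballCap_capHeight (hm t), fun t => (hderiv t).deriv⟩
  · refine contDiff_one_iff_deriv.2 ⟨fun t => (hderiv t).differentiableAt, ?_⟩
    rw [funext fun t => (hderiv t).deriv]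
    exact hA.div (continuous_const.mul ((continuous_ballSection d).comp
      (continuous_iff_continuousAt.2 fun t => (hderiv t).continuousAt)))
      fun t => (mul_pos hscale (ballSection_pos d (hlt t))).ne'
  · refine monotone_of_deriv_nonneg (fun t => (hderiv t).differentiableAt) fun t => ?_
    rw [(hderiv t).deriv]
    exact div_nonneg (hnonneg t) (mul_nonneg hscale.le (ballSection_nonneg _ _))

theorem amgm_deficit [NeZero d] {ρ : ℝ} (hρ : 0 < ρ) :
    d + 1 + (√ρ - 1) ^ 2 ≤ ρ + d * ρ ^ (-(d : ℝ)⁻¹) := by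
  have hd : (0 : ℝ) < d := Nat.cast_pos.2 (NeZero.pos d)
  have hpow : 1 - Real.log ρ / d ≤ ρ ^ (-(d : ℝ)⁻¹) := by
    have := Real.add_one_le_exp (Real.log ρ * -(d : ℝ)⁻¹)
    rw [Real.rpow_def_of_pos hρ]
    linarith [show Real.log ρ / d = Real.log ρ * (d : ℝ)⁻¹ from div_eq_mul_inv _ _]
  have hdpow : d - Real.log ρ ≤ d * ρ ^ (-(d : ℝ)⁻¹) := by
    calc d - Real.log ρ = d * (1 - Real.log ρ / d) := by field_simp
      _ ≤ d * ρ ^ (-(d : ℝ)⁻¹) := by gcongr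
  have hlog : Real.log ρ ≤ 2 * (√ρ - 1) := by
    have := Real.log_le_sub_one_of_pos (Real.sqrt_pos.2 hρ)
    rw [Real.log_sqrt hρ.le] at this
    linarith
  nlinarith [Real.sq_sqrt hρ.le]

theorem ballSection_rpow_inv [NeZero d] (g : ℝ) :
    ballSection d g ^ (d : ℝ)⁻¹ = ballVolume d ^ (d : ℝ)⁻¹ * √(1 - g ^ 2) := by
  rw [ballSection, Real.mul_rpow (ballVolume_pos d).le (by positivity),
    Real.pow_rpow_inv_natCast (Real.sqrt_nonneg _) (NeZero.ne d)]

theorem mul_rpow_ballSection_div_le [NeZero d] {A a N g : ℝ} (ha : 0 < a)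
    (hN : isoperimetricConst d * A ≤ a ^ (d : ℝ)⁻¹ * N) :
    d * A * (ballSection d g / a) ^ (d : ℝ)⁻¹ ≤ √(1 - g ^ 2) * N := by
  rw [Real.div_rpow (ballSection_nonneg d g) ha.le, ballSection_rpow_inv, mul_div_assoc',
    div_le_iff₀ (by positivity)]
  calc d * A * (ballVolume d ^ (d : ℝ)⁻¹ * √(1 - g ^ 2))
      = √(1 - g ^ 2) * (isoperimetricConst d * A) := by
        rw [isoperimetricConst]
        ring
    _ ≤ √(1 - g ^ 2) * (a ^ (d : ℝ)⁻¹ * N) := by gcongr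
    _ = √(1 - g ^ 2) * N * a ^ (d : ℝ)⁻¹ := by ring

/-- The ratio of `a` to the section of a ball of volume `K ω_{d+1}`, which the AM-GM deficit forces
to be close to `1`. -/
noncomputable def sectionRatio (d : ℕ) (K a g : ℝ) : ℝ :=
  a / ballSection d g * K ^ (-((d : ℝ) / (d + 1)))

theorem sectionRatio_pos {K a g : ℝ} (hK : 0 < K) (ha : 0 < a) (hg : |g| < 1) :
    0 < sectionRatio d K a g :=
  mul_pos (div_pos ha (ballSection_pos d hg)) (Real.rpow_pos_of_pos hK _)

theorem rpow_mul_sectionRatio {K a g : ℝ} (hK : 0 < K) :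
    K ^ (-((d : ℝ) + 1)⁻¹) * sectionRatio d K a g = a / (K * ballSection d g) := by
  have hexp : -((d : ℝ) + 1)⁻¹ + -((d : ℝ) / (d + 1)) = -1 := by
    field_simp
    ring
  rw [sectionRatio, mul_left_comm, ← Real.rpow_add hK, hexp, Real.rpow_neg_one, div_mul_eq_div_div,
    div_right_comm, div_eq_mul_inv _ K, div_mul_eq_mul_div]

theorem rpow_mul_sectionRatio_rpow [NeZero d] {K a g : ℝ} (hK : 0 < K) (ha : 0 < a)
    (hg : |g| < 1) :
    K ^ (-((d : ℝ) + 1)⁻¹) * sectionRatio d K a g ^ (-(d : ℝ)⁻¹) =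
      (ballSection d g / a) ^ (d : ℝ)⁻¹ := by
  have hd : (0 : ℝ) < d := Nat.cast_pos.2 (NeZero.pos d)
  have hsec := ballSection_pos d hg
  have hexp : -((d : ℝ) / (d + 1)) * -(d : ℝ)⁻¹ = ((d : ℝ) + 1)⁻¹ := by field_simp
  rw [sectionRatio, Real.mul_rpow (by positivity) (by positivity), ← Real.rpow_mul hK.le, hexp,
    mul_left_comm, ← Real.rpow_add hK, neg_add_cancel, Real.rpow_zero, mul_one,
    Real.rpow_neg (by positivity), ← Real.inv_rpow (by positivity), inv_div]

theorem rpow_mul_amgm_deficit_le_of_pos [NeZero d] {A a N K g : ℝ} (hA : 0 ≤ A) (ha : 0 < a)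
    (hK : 0 < K)
    (hg : |g| < 1) (hN : isoperimetricConst d * A ≤ a ^ (d : ℝ)⁻¹ * N) :
    K ^ (-((d : ℝ) + 1)⁻¹) * A * (d + 1 + (√(sectionRatio d K a g) - 1) ^ 2) ≤
      A / (K * ballSection d g) * a + √(1 - g ^ 2) * N := by
  set ρ := sectionRatio d K a g with hρ
  calc K ^ (-((d : ℝ) + 1)⁻¹) * A * (d + 1 + (√ρ - 1) ^ 2)
      ≤ K ^ (-((d : ℝ) + 1)⁻¹) * A * (ρ + d * ρ ^ (-(d : ℝ)⁻¹)) := by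
        gcongr _ * _ * ?_
        exact amgm_deficit (sectionRatio_pos hK ha hg)
    _ = A * (K ^ (-((d : ℝ) + 1)⁻¹) * ρ) +
          d * A * (K ^ (-((d : ℝ) + 1)⁻¹) * ρ ^ (-(d : ℝ)⁻¹)) := by ring
    _ = A / (K * ballSection d g) * a + d * A * (ballSection d g / a) ^ (d : ℝ)⁻¹ := by
        rw [hρ, rpow_mul_sectionRatio hK, rpow_mul_sectionRatio_rpow hK ha hg, mul_div_left_comm,
          mul_comm a]
    _ ≤ A / (K * ballSection d g) * a + √(1 - g ^ 2) * N := by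
        linarith [mul_rpow_ballSection_div_le (g := g) ha hN]

theorem rpow_mul_amgm_deficit_le [NeZero d] {A a N K g : ℝ} (hA : 0 ≤ A) (ha : 0 ≤ a) (hN0 : 0 ≤ N)
    (hK : 0 < K) (hg : |g| < 1) (hN : isoperimetricConst d * A ≤ a ^ (d : ℝ)⁻¹ * N) :
    K ^ (-((d : ℝ) + 1)⁻¹) * A * (d + 1 + (√(sectionRatio d K a g) - 1) ^ 2) ≤
      A / (K * ballSection d g) * a + √(1 - g ^ 2) * N := by
  rcases ha.eq_or_lt with rfl | ha
  · rw [Real.zero_rpow (inv_ne_zero (NeZero.ne _)), zero_mul] at hN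
    obtain rfl : A = 0 := (nonpos_of_mul_nonpos_right hN (isoperimetricConst_pos d)).antisymm hA
    simp only [mul_zero, zero_mul, zero_add]
    positivity
  · exact rpow_mul_amgm_deficit_le_of_pos hA ha hK hg hN

end Transport

/-! ### The sharp Sobolev inequality by induction on the dimension -/

section Sobolev

/-- The inequality `d ω_d^{1/d} ‖w‖_q^q ≤ ‖w‖₁^{1/d} ‖∇w‖₁` on `ℝᵈ`, with `q = 1 + 1/d`. -/
def GagliardoNirenbergInequality (d : ℕ) : Prop :=
  ∀ w : 𝔼 d → ℝ, ContDiff ℝ 1 w → HasCompactSupport w → (∀ x, 0 ≤ w x) →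
    isoperimetricConst d * ∫ x, w x ^ (1 + (d : ℝ)⁻¹) ≤
      (∫ x, w x) ^ (d : ℝ)⁻¹ * ∫ x, ‖fderiv ℝ w x‖

/-- The sharp Sobolev inequality `(d + 1) ω_{d+1}^{1/(d+1)} ‖u‖_q ≤ ‖∇u‖₁` on `ℝᵈ⁺¹`, with
`q = 1 + 1/d`. -/
def SobolevInequality (d : ℕ) : Prop :=
  ∀ u : 𝔼 (d + 1) → ℝ, ContDiff ℝ 1 u → HasCompactSupport u → (∀ x, 0 ≤ u x) →
    isoperimetricConst (d + 1) * (∫ x, u x ^ (1 + (d : ℝ)⁻¹)) ^ ((d : ℝ) / (d + 1)) ≤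
      ∫ x, ‖fderiv ℝ u x‖

/-- What is used of a function `u ≥ 0` on `ℝᵈ⁺¹` in a given direction: `A`, `a` and `N` stand for
the slice integrals of `u ^ (1 + 1/d)`, of `u` and of the tangential gradient of `u`, and `P` for
the total variation of `u`. -/
structure IsSliceProfile (d : ℕ) (A a N : ℝ → ℝ) (P : ℝ) : Prop where
  continuous_power : Continuous A
  hasCompactSupport_power : HasCompactSupport A
  continuous_slice : Continuous a
  hasCompactSupport_slice : HasCompactSupport a
  continuous_grad : Continuous N
  hasCompactSupport_grad : HasCompactSupport N
  power_nonneg : ∀ t, 0 ≤ A t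
  slice_nonneg : ∀ t, 0 ≤ a t
  grad_nonneg : ∀ t, 0 ≤ N t
  const_mul_power_le : ∀ t, isoperimetricConst d * A t ≤ a t ^ (d : ℝ)⁻¹ * N t
  integral_le : ∀ G : ℝ → ℝ, ContDiff ℝ 1 G → (∀ t, |G t| ≤ 1) →
    ∫ t, (deriv G t * a t + √(1 - G t ^ 2) * N t) ≤ P

/-- The inverse of the radius of the ball, as large as the mass of `A`, that is rescaled to the
unit ball by the transport. -/
noncomputable def transportDilation (d : ℕ) (δ : ℝ) (A : ℝ → ℝ) : ℝ :=
  transportScale d δ A ^ (-((d : ℝ) + 1)⁻¹)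

/-- The integrand of the loss in the slice inequality when it is tested with the transport `G`. -/
noncomputable def transportDeficit (d : ℕ) (δ : ℝ) (A a N G : ℝ → ℝ) (t : ℝ) : ℝ :=
  deriv G t * a t + √(1 - G t ^ 2) * N t - (d + 1) * transportDilation d δ A * A t

theorem transportDilation_pos (d : ℕ) {δ : ℝ} {A : ℝ → ℝ} (hmass : 0 < ∫ t, A t) (hδ : δ < 1) :
    0 < transportDilation d δ A :=
  Real.rpow_pos_of_pos (transportScale_pos d hmass hδ) _

namespace IsSliceProfile

variable {d : ℕ} {A a N G : ℝ → ℝ} {P δ : ℝ} (D : IsSliceProfile d A a N P)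
include D

theorem integrable_power : Integrable A :=
  D.continuous_power.integrable_of_hasCompactSupport D.hasCompactSupport_power

theorem integrable_slice : Integrable a :=
  D.continuous_slice.integrable_of_hasCompactSupport D.hasCompactSupport_slice

theorem integrable_test (hG : ContDiff ℝ 1 G) :
    Integrable fun t => deriv G t * a t + √(1 - G t ^ 2) * N t := by
  have hGc := hG.continuous
  have hsqrt : Continuous fun t => √(1 - G t ^ 2) := by fun_prop
  exact (((hG.continuous_deriv le_rfl).mul D.continuous_slice).integrable_of_hasCompactSupport
    D.hasCompactSupport_slice.mul_left).add
    ((hsqrt.mul D.continuous_grad).integrable_of_hasCompactSupport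
      D.hasCompactSupport_grad.mul_left)

theorem integrable_transportDeficit (hG : ContDiff ℝ 1 G) :
    Integrable (transportDeficit d δ A a N G) :=
  (D.integrable_test hG).sub (D.integrable_power.const_mul _)

theorem integral_transportDeficit_le (hG : ContDiff ℝ 1 G) (hG1 : ∀ t, |G t| ≤ 1) :
    ∫ t, transportDeficit d δ A a N G t ≤
      P - (d + 1) * transportDilation d δ A * ∫ t, A t := by
  rw [← integral_const_mul]
  exact (integral_sub (D.integrable_test hG) (D.integrable_power.const_mul _)).trans_le
    (sub_le_sub_right (D.integral_le G hG hG1) _)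

variable [NeZero d] (T : IsTransport d δ A G) (hmass : 0 < ∫ t, A t)

include T hmass in
theorem le_transportDeficit (hδ : δ < 1) (t : ℝ) :
    transportDilation d δ A * A t * (√(sectionRatio d (transportScale d δ A) (a t) (G t)) - 1) ^ 2 ≤
      transportDeficit d δ A a N G t := by
  have := rpow_mul_amgm_deficit_le (D.power_nonneg t) (D.slice_nonneg t) (D.grad_nonneg t)
    (transportScale_pos d hmass hδ) (T.abs_lt_one t) (D.const_mul_power_le t)
  rw [transportDeficit, T.deriv_eq, transportDilation]
  linarith

include T hmass in
theorem transportDeficit_nonneg (hδ : δ < 1) (t : ℝ) : 0 ≤ transportDeficit d δ A a N G t :=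
  (mul_nonneg (mul_nonneg (transportDilation_pos d hmass hδ).le (D.power_nonneg t))
    (sq_nonneg _)).trans (D.le_transportDeficit T hmass hδ t)

include hmass in
theorem transportDilation_mul_le (hδ : δ ∈ Ioo (0 : ℝ) 1) :
    (d + 1) * transportDilation d δ A * ∫ t, A t ≤ P := by
  obtain ⟨G, T⟩ := exists_isTransport (d := d) D.continuous_power D.integrable_power
    D.power_nonneg hmass hδ
  have hle := D.integral_transportDeficit_le (δ := δ) T.contDiff fun t => (T.abs_lt_one t).le
  have hnonneg : 0 ≤ ∫ t, transportDeficit d δ A a N G t :=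
    integral_nonneg fun t => D.transportDeficit_nonneg T hmass hδ.2 t
  linarith

end IsSliceProfile

theorem rpow_div_succ_eq_div {d : ℕ} {x : ℝ} (hx : 0 < x) :
    x ^ ((d : ℝ) / (d + 1)) = x / x ^ ((d : ℝ) + 1)⁻¹ := by
  have hexp : (d : ℝ) / (d + 1) = 1 - ((d : ℝ) + 1)⁻¹ := by
    field_simp
    ring
  rw [hexp, Real.rpow_sub hx, Real.rpow_one]

theorem transportDilation_zero_mul {d : ℕ} {A : ℝ → ℝ} (hmass : 0 < ∫ t, A t) :
    (d + 1) * transportDilation d 0 A * ∫ t, A t =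
      isoperimetricConst (d + 1) * (∫ t, A t) ^ ((d : ℝ) / (d + 1)) := by
  have hvol := ballVolume_pos (d + 1)
  rw [transportDilation, transportScale, sub_zero, one_mul, isoperimetricConst, Nat.cast_succ,
    Real.rpow_neg (by positivity), ← Real.inv_rpow (by positivity), inv_div,
    Real.div_rpow hvol.le hmass.le, rpow_div_succ_eq_div hmass]
  ring

theorem continuousAt_transportDilation {d : ℕ} {A : ℝ → ℝ} (hmass : 0 < ∫ t, A t) :
    ContinuousAt (fun δ => transportDilation d δ A) 0 := by
  refine ContinuousAt.rpow_const ?_ (.inl (transportScale_pos d hmass zero_lt_one).ne')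
  exact continuousAt_const.div (by fun_prop)
    (mul_pos (sub_pos.2 zero_lt_one) (ballVolume_pos (d + 1))).ne'

theorem IsSliceProfile.const_mul_rpow_le {d : ℕ} [NeZero d] {A a N : ℝ → ℝ} {P : ℝ}
    (D : IsSliceProfile d A a N P) :
    isoperimetricConst (d + 1) * (∫ t, A t) ^ ((d : ℝ) / (d + 1)) ≤ P := by
  have hd : (0 : ℝ) < d := Nat.cast_pos.2 (NeZero.pos d)
  rcases (integral_nonneg D.power_nonneg : 0 ≤ ∫ t, A t).eq_or_lt with hzero | hmass
  · rw [← hzero, Real.zero_rpow (by positivity), mul_zero]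
    exact (integral_nonneg fun t => by simpa using D.grad_nonneg t).trans
      (D.integral_le (fun _ => 0) contDiff_const (by simp))
  · rw [← transportDilation_zero_mul hmass]
    refine le_of_tendsto (x := 𝓝[>] (0 : ℝ))
      (((continuousAt_const.mul (continuousAt_transportDilation hmass)).mul
        continuousAt_const).tendsto.mono_left nhdsWithin_le_nhds) ?_
    filter_upwards [Ioo_mem_nhdsGT (zero_lt_one' ℝ)] with δ hδ
    exact D.transportDilation_mul_le hmass hδ

theorem hasCompactSupport_rpow {X : Type*} [TopologicalSpace X] {u : X → ℝ}
    (hu : HasCompactSupport u) {q : ℝ} (hq : q ≠ 0) : HasCompactSupport fun x => u x ^ q :=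
  hu.comp_left (g := fun x : ℝ => x ^ q) (Real.zero_rpow hq)

theorem isSliceProfile {d : ℕ} (hGN : GagliardoNirenbergInequality d)
    {L : (ℝ × 𝔼 d) ≃L[ℝ] 𝔼 (d + 1)} (hL : IsOrthogonalSplitting L) {u : 𝔼 (d + 1) → ℝ}
    (hu : ContDiff ℝ 1 u) (hc : HasCompactSupport u) (hnonneg : ∀ x, 0 ≤ u x) :
    IsSliceProfile d (sliceIntegral L fun x => u x ^ (1 + (d : ℝ)⁻¹)) (sliceIntegral L u)
      (sliceGradIntegral L u) (∫ x, ‖fderiv ℝ u x‖) where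
  continuous_power := continuous_sliceIntegral
    (hu.continuous.rpow_const fun _ => .inr (by positivity))
    (hasCompactSupport_rpow hc (by positivity))
  hasCompactSupport_power :=
    hasCompactSupport_sliceIntegral (hasCompactSupport_rpow hc (by positivity))
  continuous_slice := continuous_sliceIntegral hu.continuous hc
  hasCompactSupport_slice := hasCompactSupport_sliceIntegral hc
  continuous_grad := continuous_sliceGradIntegral hu hc
  hasCompactSupport_grad := hasCompactSupport_sliceGradIntegral hu hc
  power_nonneg _ := integral_nonneg fun _ => Real.rpow_nonneg (hnonneg _) _
  slice_nonneg _ := integral_nonneg fun _ => hnonneg _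
  grad_nonneg _ := integral_nonneg fun _ => norm_nonneg _
  const_mul_power_le t := hGN (fun y => u (L (t, y)))
    (hu.comp (L.contDiff.comp (contDiff_const.prodMk contDiff_id)))
    (hasCompactSupport_slice_right (hasCompactSupport_comp_splitting hc) t) fun _ => hnonneg _
  integral_le _ := hL.integral_deriv_mul_sliceIntegral_add_le hu hc

theorem GagliardoNirenbergInequality.sobolev {d : ℕ} [NeZero d]
    (hGN : GagliardoNirenbergInequality d) : SobolevInequality d := by
  intro u hu hc hnonneg
  obtain ⟨L, hL, -⟩ := exists_isOrthogonalSplitting (F := 𝔼 d) (by simp)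
    (show ‖(EuclideanSpace.single 0 1 : 𝔼 (d + 1))‖ = 1 by simp)
  rw [← hL.integral_sliceIntegral (hu.continuous.rpow_const fun _ => .inr (by positivity))
    (hasCompactSupport_rpow hc (by positivity))]
  exact (isSliceProfile hGN hL hu hc hnonneg).const_mul_rpow_le

theorem integral_rpow_le_mul_rpow {X : Type*} [TopologicalSpace X] [MeasurableSpace X]
    [OpensMeasurableSpace X] {μ : Measure X} [IsFiniteMeasureOnCompacts μ] {w : X → ℝ}
    (hw : Continuous w) (hc : HasCompactSupport w) (hnonneg : ∀ x, 0 ≤ w x) {d : ℕ} [NeZero d] :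
    ∫ x, w x ^ (1 + ((d : ℝ) + 1)⁻¹) ∂μ ≤
      (∫ x, w x ∂μ) ^ ((d : ℝ) + 1)⁻¹ * (∫ x, w x ^ (1 + (d : ℝ)⁻¹) ∂μ) ^ ((d : ℝ) / (d + 1)) := by
  have hd : (0 : ℝ) < d := Nat.cast_pos.2 (NeZero.pos d)
  have hconj : ((d : ℝ) + 1).HolderConjugate (1 + (d : ℝ)⁻¹) := by
    rw [Real.holderConjugate_iff]
    refine ⟨by linarith, ?_⟩
    field_simp
    ring
  have hholder := integral_mul_le_Lp_mul_Lq_of_nonneg (μ := μ) hconj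
    (f := fun x => w x ^ ((d : ℝ) + 1)⁻¹) (g := w)
    (.of_forall fun x => Real.rpow_nonneg (hnonneg x) _) (.of_forall hnonneg)
    ((hw.rpow_const fun _ => .inr (by positivity)).memLp_of_hasCompactSupport
      (hasCompactSupport_rpow hc (by positivity)))
    (hw.memLp_of_hasCompactSupport hc)
  have hprod x : w x ^ ((d : ℝ) + 1)⁻¹ * w x = w x ^ (1 + ((d : ℝ) + 1)⁻¹) := by
    rw [add_comm 1, Real.rpow_add_one' (hnonneg x) (by positivity)]
  have hroot x : (w x ^ ((d : ℝ) + 1)⁻¹) ^ ((d : ℝ) + 1) = w x :=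
    Real.rpow_inv_rpow (hnonneg x) (by positivity)
  have hexp : 1 / (1 + (d : ℝ)⁻¹) = (d : ℝ) / (d + 1) := by field_simp
  simpa only [hprod, hroot, hexp, one_div] using hholder

theorem SobolevInequality.gagliardoNirenberg_succ {d : ℕ} [NeZero d] (hS : SobolevInequality d) :
    GagliardoNirenbergInequality (d + 1) := by
  intro w hw hc hnonneg
  have hconst := isoperimetricConst_pos (d + 1)
  have hmass : 0 ≤ ∫ x, w x := integral_nonneg hnonneg
  have hholder := integral_rpow_le_mul_rpow (μ := volume) hw.continuous hc hnonneg (d := d)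
  rw [Nat.cast_succ]
  calc isoperimetricConst (d + 1) * ∫ x, w x ^ (1 + ((d : ℝ) + 1)⁻¹)
      ≤ isoperimetricConst (d + 1) * ((∫ x, w x) ^ ((d : ℝ) + 1)⁻¹ *
          (∫ x, w x ^ (1 + (d : ℝ)⁻¹)) ^ ((d : ℝ) / (d + 1))) := by gcongr
    _ = (∫ x, w x) ^ ((d : ℝ) + 1)⁻¹ * (isoperimetricConst (d + 1) *
          (∫ x, w x ^ (1 + (d : ℝ)⁻¹)) ^ ((d : ℝ) / (d + 1))) := by ring
    _ ≤ (∫ x, w x) ^ ((d : ℝ) + 1)⁻¹ * ∫ x, ‖fderiv ℝ w x‖ := by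
        gcongr
        exact hS w hw hc hnonneg

theorem two_mul_le_integral_abs_deriv {f : ℝ → ℝ} (hf : ContDiff ℝ 1 f) (hc : HasCompactSupport f)
    (t : ℝ) : 2 * f t ≤ ∫ x, |deriv f x| := by
  have hderiv x := (hf.differentiable one_ne_zero x).hasDerivAt
  have hint : Integrable (deriv f) :=
    (hf.continuous_deriv le_rfl).integrable_of_hasCompactSupport hc.deriv
  have hlim := hc.is_zero_at_infty
  rw [cocompact_eq_atBot_atTop, tendsto_sup] at hlim
  have hleft := integral_Iic_of_hasDerivAt_of_tendsto (a := t) hf.continuous.continuousWithinAt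
    (fun x _ => hderiv x) hint.integrableOn hlim.1
  have hright := integral_Ioi_of_hasDerivAt_of_tendsto (a := t) hf.continuous.continuousWithinAt
    (fun x _ => hderiv x) hint.integrableOn hlim.2
  have hleft_le : ∫ x in Iic t, deriv f x ≤ ∫ x in Iic t, |deriv f x| :=
    setIntegral_mono hint.integrableOn hint.abs.integrableOn fun x => le_abs_self _
  have hright_le : ∫ x in Ioi t, -deriv f x ≤ ∫ x in Ioi t, |deriv f x| :=
    setIntegral_mono hint.neg.integrableOn hint.abs.integrableOn fun x => neg_le_abs _
  rw [integral_neg] at hright_le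
  have hsplit := intervalIntegral.integral_Iic_add_Ioi (b := t) hint.abs.integrableOn
    hint.abs.integrableOn
  linarith

theorem two_mul_integral_sq_le {f : ℝ → ℝ} (hf : ContDiff ℝ 1 f) (hc : HasCompactSupport f)
    (hnonneg : ∀ t, 0 ≤ f t) : 2 * ∫ t, f t ^ 2 ≤ (∫ t, f t) * ∫ t, |deriv f t| := by
  rw [← integral_const_mul, ← integral_mul_const]
  simp only [sq]
  have hsq : Integrable fun t => f t * f t :=
    (hf.continuous.mul hf.continuous).integrable_of_hasCompactSupport hc.mul_left
  refine integral_mono (hsq.const_mul 2)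
    ((hf.continuous.integrable_of_hasCompactSupport hc).mul_const _) fun t => ?_
  have := mul_le_mul_of_nonneg_left (two_mul_le_integral_abs_deriv hf hc t) (hnonneg t)
  linarith

/-- The identification of the line with the one-dimensional Euclidean space. -/
noncomputable def lineIsometry : ℝ ≃ₗᵢ[ℝ] 𝔼 1 :=
  (stdOrthonormalBasis ℝ ℝ).equiv (stdOrthonormalBasis ℝ (𝔼 1)) (finCongr (by simp))

theorem ballVolume_one : ballVolume 1 = 2 := by
  have hpre : lineIsometry ⁻¹' ball 0 1 = ball 0 1 := by
    rw [lineIsometry.preimage_ball, map_zero]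
  have hvol : volume (lineIsometry ⁻¹' ball 0 1) = volume (ball (0 : 𝔼 1) 1) :=
    lineIsometry.measurePreserving.measure_preimage measurableSet_ball.nullMeasurableSet
  rw [ballVolume, measureReal_def, ← hvol, hpre, Real.volume_ball]
  simp

theorem abs_deriv_comp_lineIsometry_le {w : 𝔼 1 → ℝ} (hw : Differentiable ℝ w) (t : ℝ) :
    |deriv (fun t => w (lineIsometry t)) t| ≤ ‖fderiv ℝ w (lineIsometry t)‖ := by
  have hderiv : HasDerivAt (fun t => w (lineIsometry t))
      (fderiv ℝ w (lineIsometry t) (lineIsometry 1)) t :=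
    (hw _).hasFDerivAt.comp_hasDerivAt t (lineIsometry : ℝ →L[ℝ] 𝔼 1).hasDerivAt
  rw [hderiv.deriv]
  simpa using (fderiv ℝ w (lineIsometry t)).le_opNorm (lineIsometry 1)

theorem gagliardoNirenberg_one : GagliardoNirenbergInequality 1 := by
  intro w hw hc hnonneg
  have htransfer (f : 𝔼 1 → ℝ) : ∫ x, f x = ∫ t, f (lineIsometry t) :=
    (lineIsometry.measurePreserving.integral_comp
      lineIsometry.toHomeomorph.measurableEmbedding f).symm
  have hwe : ContDiff ℝ 1 fun t => w (lineIsometry t) := hw.comp lineIsometry.contDiff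
  have hce : HasCompactSupport fun t => w (lineIsometry t) :=
    hc.comp_homeomorph lineIsometry.toHomeomorph
  have hgrad : ∫ t, |deriv (fun t => w (lineIsometry t)) t| ≤
      ∫ t, ‖fderiv ℝ w (lineIsometry t)‖ :=
    integral_mono (((hwe.continuous_deriv le_rfl).integrable_of_hasCompactSupport hce.deriv).abs)
      (((hw.continuous_fderiv one_ne_zero).comp
        lineIsometry.continuous).norm.integrable_of_hasCompactSupport
          ((hc.fderiv ℝ).comp_homeomorph lineIsometry.toHomeomorph).norm)
      (abs_deriv_comp_lineIsometry_le (hw.differentiable one_ne_zero))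
  have hexp : (1 : ℝ) + 1 = (2 : ℕ) := by norm_num
  rw [htransfer, htransfer w, htransfer, isoperimetricConst, ballVolume_one]
  simp only [Nat.cast_one, inv_one, Real.rpow_one, one_mul, hexp, Real.rpow_natCast]
  exact (two_mul_integral_sq_le hwe hce fun t => hnonneg _).trans
    (mul_le_mul_of_nonneg_left hgrad (integral_nonneg fun t => hnonneg _))

theorem gagliardoNirenberg (d : ℕ) [NeZero d] : GagliardoNirenbergInequality d := by
  obtain ⟨k, rfl⟩ := Nat.exists_eq_succ_of_ne_zero (NeZero.ne d)
  induction k with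
  | zero => exact gagliardoNirenberg_one
  | succ k ih => exact ih.sobolev.gagliardoNirenberg_succ

theorem sobolev (d : ℕ) [NeZero d] : SobolevInequality d :=
  (gagliardoNirenberg d).sobolev

end Sobolev

/-! ### Transports of nearly optimal profiles -/

section Increments

theorem abs_sub_one_le_sq_sqrt_sub_one {ρ η : ℝ} (hρ : 0 ≤ ρ) (hη : 0 < η) :
    |ρ - 1| ≤ (1 + η⁻¹) * (√ρ - 1) ^ 2 + η := by
  have hyoung : 2 * |√ρ - 1| ≤ η⁻¹ * (√ρ - 1) ^ 2 + η := by
    have hsq : 0 ≤ η⁻¹ * (|√ρ - 1| - η) ^ 2 := by positivity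
    rw [sub_sq, sq_abs] at hsq
    field_simp at hsq ⊢
    linarith
  have hfactor : ρ - 1 = (√ρ - 1) ^ 2 + 2 * (√ρ - 1) := by
    linear_combination -Real.sq_sqrt hρ
  calc |ρ - 1| ≤ |(√ρ - 1) ^ 2| + |2 * (√ρ - 1)| := hfactor ▸ abs_add_le _ _
    _ = (√ρ - 1) ^ 2 + 2 * |√ρ - 1| := by rw [abs_sq, abs_mul, abs_two]
    _ ≤ (1 + η⁻¹) * (√ρ - 1) ^ 2 + η := by linarith

theorem abs_mul_mul_sub_one_le {ρ k x : ℝ} (hk : k ∈ Icc (0 : ℝ) 2) (hx : x ∈ Icc (0 : ℝ) 1) :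
    |ρ * k * x - 1| ≤ 2 * (|ρ - 1| * x) + |k - 1| + (1 - x) := by
  have hratio : |(ρ - 1) * (k * x)| ≤ 2 * (|ρ - 1| * x) := by
    rw [abs_mul, abs_of_nonneg (mul_nonneg hk.1 hx.1)]
    nlinarith [mul_nonneg (abs_nonneg (ρ - 1)) hx.1, hk.2]
  have hscale : |(k - 1) * x| ≤ |k - 1| := by
    rw [abs_mul, abs_of_nonneg hx.1]
    exact mul_le_of_le_one_right (abs_nonneg _) hx.2
  calc |ρ * k * x - 1| = |(ρ - 1) * (k * x) + (k - 1) * x + -(1 - x)| := by ring_nf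
    _ ≤ |(ρ - 1) * (k * x)| + |(k - 1) * x| + |-(1 - x)| := abs_add_three _ _ _
    _ ≤ 2 * (|ρ - 1| * x) + |k - 1| + (1 - x) := by
        rw [abs_neg, abs_of_nonneg (sub_nonneg.2 hx.2)]
        linarith

theorem mul_abs_mul_div_sub_one_le {A a k ρ η Z : ℝ} (ha : 0 < a) (hA : 0 ≤ A) (hAa : A ≤ a)
    (hk : 0 < k) (hk2 : k ≤ 2) (hη : 0 < η) (hρ : 0 ≤ ρ) (hZ : k * A * (√ρ - 1) ^ 2 ≤ Z) :
    a * |ρ * k * (A / a) - 1| ≤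
      (2 * η + |k - 1|) * a + 2 * (1 + η⁻¹) * k⁻¹ * Z + (a - A) := by
  have hdeficit : A * (√ρ - 1) ^ 2 ≤ k⁻¹ * Z := by
    rw [inv_mul_eq_div, le_div_iff₀ hk]
    linarith
  have hratio : A * |ρ - 1| ≤ (1 + η⁻¹) * (k⁻¹ * Z) + η * a :=
    calc A * |ρ - 1| ≤ A * ((1 + η⁻¹) * (√ρ - 1) ^ 2 + η) := by
          gcongr
          exact abs_sub_one_le_sq_sqrt_sub_one hρ hη
      _ = (1 + η⁻¹) * (A * (√ρ - 1) ^ 2) + η * A := by ring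
      _ ≤ (1 + η⁻¹) * (k⁻¹ * Z) + η * a := by gcongr
  calc a * |ρ * k * (A / a) - 1|
      ≤ a * (2 * (|ρ - 1| * (A / a)) + |k - 1| + (1 - A / a)) := by
        gcongr
        exact abs_mul_mul_sub_one_le ⟨hk.le, hk2⟩ ⟨by positivity, (div_le_one ha).2 hAa⟩
    _ = 2 * (A * |ρ - 1|) + |k - 1| * a + (a - A) := by field_simp
    _ ≤ (2 * η + |k - 1|) * a + 2 * (1 + η⁻¹) * k⁻¹ * Z + (a - A) := by linarith

theorem IsTransport.deriv_eq_sectionRatio_mul {d : ℕ} {A G : ℝ → ℝ} {δ : ℝ}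
    (T : IsTransport d δ A G) (hmass : 0 < ∫ t, A t) (hδ : δ < 1) {α t : ℝ} (hα : α ≠ 0) :
    deriv G t =
      sectionRatio d (transportScale d δ A) α (G t) * transportDilation d δ A * (A t / α) := by
  have hscale := transportScale_pos d hmass hδ
  have hsec := (ballSection_pos d (T.abs_lt_one t)).ne'
  have hexp : (transportScale d δ A)⁻¹ = transportScale d δ A ^ (-((d : ℝ) / (d + 1))) *
      transportScale d δ A ^ (-((d : ℝ) + 1)⁻¹) := by
    rw [← Real.rpow_add hscale, ← Real.rpow_neg_one]
    congr 1
    field_simp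
    ring
  calc deriv G t = (transportScale d δ A)⁻¹ * (A t / ballSection d (G t)) := by
        rw [T.deriv_eq]
        field_simp
    _ = _ := by
        rw [hexp, sectionRatio, transportDilation]
        field_simp

/-- A majorant of `a * |G' - 1|` for a transport `G`; its integral is small for nearly optimal
profiles. The parameter `η` is the weight of Young's inequality. -/
noncomputable def slopeError (d : ℕ) (δ η : ℝ) (A a N G : ℝ → ℝ) (t : ℝ) : ℝ :=
  (2 * η + |transportDilation d δ A - 1|) * a t +
    2 * (1 + η⁻¹) * (transportDilation d δ A)⁻¹ * transportDeficit d δ A a N G t + (a t - A t)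

namespace IsSliceProfile

variable {d : ℕ} {A a N G : ℝ → ℝ} {P δ η : ℝ} (D : IsSliceProfile d A a N P)
include D

theorem integrable_slopeError (hG : ContDiff ℝ 1 G) : Integrable (slopeError d δ η A a N G) :=
  ((D.integrable_slice.const_mul _).add ((D.integrable_transportDeficit hG).const_mul _)).add
    (D.integrable_slice.sub D.integrable_power)

theorem integral_slopeError_le (hη : 0 < η) (hmass : 0 < ∫ t, A t) (hδ : δ < 1)
    (hG : ContDiff ℝ 1 G) (hG1 : ∀ t, |G t| ≤ 1) :
    ∫ t, slopeError d δ η A a N G t ≤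
      (2 * η + |transportDilation d δ A - 1|) * (∫ t, a t) +
        2 * (1 + η⁻¹) * (transportDilation d δ A)⁻¹ *
          (P - (d + 1) * transportDilation d δ A * ∫ t, A t) + ∫ t, (a t - A t) := by
  have hdil := transportDilation_pos d hmass hδ
  have hslice := D.integrable_slice.const_mul (2 * η + |transportDilation d δ A - 1|)
  have hdeficit := (D.integrable_transportDeficit (δ := δ) hG).const_mul
    (2 * (1 + η⁻¹) * (transportDilation d δ A)⁻¹)
  have hgap : Integrable fun t => a t - A t := D.integrable_slice.sub D.integrable_power
  simp only [slopeError]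
  rw [integral_add (by exact hslice.add hdeficit) hgap, integral_add hslice hdeficit,
    integral_const_mul, integral_const_mul]
  gcongr
  exact D.integral_transportDeficit_le hG hG1

variable [NeZero d] (T : IsTransport d δ A G) (hmass : 0 < ∫ t, A t) (hδ : δ < 1)
  (hAa : ∀ t, A t ≤ a t) (hη : 0 < η)
include T hmass hδ hAa hη

theorem slopeError_nonneg (t : ℝ) : 0 ≤ slopeError d δ η A a N G t := by
  have hdil := transportDilation_pos d hmass hδ
  have hslice := D.slice_nonneg t
  have hdeficit := D.transportDeficit_nonneg T hmass hδ t
  have hgap := sub_nonneg.2 (hAa t)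
  unfold slopeError
  positivity

theorem slice_mul_abs_deriv_sub_one_le (hdil : transportDilation d δ A ≤ 2) {t : ℝ}
    (hat : 0 < a t) : a t * |deriv G t - 1| ≤ slopeError d δ η A a N G t := by
  rw [T.deriv_eq_sectionRatio_mul hmass hδ hat.ne']
  exact mul_abs_mul_div_sub_one_le hat (D.power_nonneg t) (hAa t)
    (transportDilation_pos d hmass hδ) hdil hη
    (sectionRatio_pos (transportScale_pos d hmass hδ) hat (T.abs_lt_one t)).le
    (D.le_transportDeficit T hmass hδ t)

theorem mul_abs_increment_sub_le (hdil : transportDilation d δ A ≤ 2) {κ t₁ t₂ : ℝ} (hκ : 0 < κ)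
    (ht : t₁ ≤ t₂) (hat : ∀ t ∈ Icc t₁ t₂, κ ≤ a t) :
    κ * |G t₂ - G t₁ - (t₂ - t₁)| ≤ ∫ t, slopeError d δ η A a N G t := by
  have hderiv := T.contDiff.continuous_deriv le_rfl
  have herr := D.integrable_slopeError (δ := δ) (η := η) T.contDiff
  have hFTC : G t₂ - G t₁ - (t₂ - t₁) = ∫ t in t₁..t₂, (deriv G t - 1) := by
    rw [intervalIntegral.integral_sub (hderiv.intervalIntegrable _ _) (by simp),
      intervalIntegral.integral_deriv_eq_sub (fun x _ => T.contDiff.differentiable one_ne_zero x)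
        (hderiv.intervalIntegrable _ _)]
    simp
  calc κ * |G t₂ - G t₁ - (t₂ - t₁)| ≤ κ * ∫ t in t₁..t₂, |deriv G t - 1| := by
        rw [hFTC]
        gcongr
        exact intervalIntegral.abs_integral_le_integral_abs ht
    _ = ∫ t in t₁..t₂, κ * |deriv G t - 1| := (intervalIntegral.integral_const_mul _ _).symm
    _ ≤ ∫ t in t₁..t₂, slopeError d δ η A a N G t := by
        refine intervalIntegral.integral_mono_on ht
          ((continuous_const.mul (hderiv.sub continuous_const).abs).intervalIntegrable _ _)
          herr.intervalIntegrable fun t htI => ?_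
        exact (mul_le_mul_of_nonneg_right (hat t htI) (abs_nonneg _)).trans
          (D.slice_mul_abs_deriv_sub_one_le T hmass hδ hAa hη hdil (hκ.trans_le (hat t htI)))
    _ ≤ ∫ t, slopeError d δ η A a N G t := by
        rw [intervalIntegral.integral_of_le ht]
        exact setIntegral_le_integral herr
          (.of_forall (D.slopeError_nonneg T hmass hδ hAa hη))

end IsSliceProfile

end Increments

section Asymptotics

theorem exists_one_add_le_rpow_add_rpow {p β : ℝ} (hp : p ∈ Ioo (0 : ℝ) 1) (hβ : 0 < β) :
    ∃ γ > 0, ∀ x ∈ Icc β (1 - β), 1 + γ ≤ x ^ p + (1 - x) ^ p := by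
  rcases (Icc β (1 - β)).eq_empty_or_nonempty with hempty | hne
  · exact ⟨1, one_pos, by simp [hempty]⟩
  have hcont : Continuous fun x : ℝ => x ^ p + (1 - x) ^ p :=
    (continuous_id.rpow_const fun _ => .inr hp.1.le).add
      ((continuous_const.sub continuous_id).rpow_const fun _ => .inr hp.1.le)
  obtain ⟨x₀, ⟨hx₀β, hx₀β'⟩, hmin⟩ := isCompact_Icc.exists_isMinOn hne hcont.continuousOn
  have hlt : x₀ < x₀ ^ p := Real.self_lt_rpow_of_lt_one (by linarith) (by linarith) hp.2
  have hlt' : 1 - x₀ < (1 - x₀) ^ p :=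
    Real.self_lt_rpow_of_lt_one (by linarith) (by linarith) hp.2
  refine ⟨x₀ ^ p + (1 - x₀) ^ p - 1, by linarith, fun x hx => ?_⟩
  linarith [isMinOn_iff.1 hmin x hx]

theorem exists_tendsto_apply_add {ι : Type*} {l : Filter ι} {G : ι → ℝ → ℝ}
    (hmono : ∀ j, Monotone (G j)) (hrange : ∀ σ ∈ Ioo (-1 : ℝ) 1, ∀ᶠ j in l, ∃ t, G j t = σ)
    (hincr : ∀ s ∈ Ico (0 : ℝ) 1, ∀ ε > 0, ∀ᶠ j in l, ∀ t₁ t₂, |G j t₁| ≤ s → |G j t₂| ≤ s →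
      |G j t₂ - G j t₁ - (t₂ - t₁)| ≤ ε) :
    ∃ c : ι → ℝ, ∀ s ∈ Ioo (-1 : ℝ) 1, Tendsto (fun j => G j (c j + s)) l (𝓝 s) := by
  have hinv : ∀ σ ∈ Ioo (-1 : ℝ) 1, ∀ᶠ j in l, G j (Function.invFun (G j) σ) = σ :=
    fun σ hσ => (hrange σ hσ).mono fun j hj => Function.invFun_eq hj
  have hdiff : ∀ σ ∈ Ioo (-1 : ℝ) 1,
      Tendsto (fun j => Function.invFun (G j) σ - Function.invFun (G j) 0) l (𝓝 σ) := by
    intro σ hσ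
    rw [Metric.tendsto_nhds]
    intro ε hε
    filter_upwards [hinv σ hσ, hinv 0 (by norm_num),
      hincr |σ| ⟨abs_nonneg _, abs_lt.2 hσ⟩ (ε / 2) (half_pos hε)] with j hj hj₀ hclose
    have := hclose (Function.invFun (G j) 0) (Function.invFun (G j) σ) (by simp [hj₀]) (by rw [hj])
    rw [hj, hj₀, sub_zero, abs_sub_comm] at this
    exact this.trans_lt (half_lt_self hε)
  refine ⟨fun j => Function.invFun (G j) 0, fun s hs => tendsto_order.2 ⟨fun x hx => ?_,
    fun x hx => ?_⟩⟩
  · obtain ⟨σ, hxσ, hσs⟩ := exists_between (max_lt hx hs.1)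
    rw [max_lt_iff] at hxσ
    have hσ : σ ∈ Ioo (-1 : ℝ) 1 := ⟨hxσ.2, hσs.trans hs.2⟩
    filter_upwards [hinv σ hσ, (hdiff σ hσ).eventually_lt_const hσs] with j hj hlt
    exact hxσ.1.trans_le (hj ▸ hmono j (by linarith))
  · obtain ⟨σ, hsσ, hσx⟩ := exists_between (lt_min hx hs.2)
    rw [lt_min_iff] at hσx
    have hσ : σ ∈ Ioo (-1 : ℝ) 1 := ⟨hs.1.trans hsσ, hσx.2⟩
    filter_upwards [hinv σ hσ, (hdiff σ hσ).eventually_const_lt hsσ] with j hj hlt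
    exact lt_of_le_of_lt (hj ▸ hmono j (by linarith)) hσx.1

/-- Slice profiles of functions which approximate the indicator functions of sets whose volume
and perimeter tend to those of the unit ball. The field `split_le` is the isoperimetric inequality
for the two parts into which such a set is cut by a hyperplane. -/
structure IsMinimizingProfile (d : ℕ) (A a N : ℕ → ℝ → ℝ) (P : ℕ → ℝ) : Prop where
  profile : ∀ j, IsSliceProfile d (A j) (a j) (N j) (P j)
  power_le_slice : ∀ j t, A j t ≤ a j t
  mass_pos : ∀ j, 0 < ∫ t, A j t
  tendsto_mass : Tendsto (fun j => ∫ t, A j t) atTop (𝓝 (ballVolume (d + 1)))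
  tendsto_gap : Tendsto (fun j => ∫ t, (a j t - A j t)) atTop (𝓝 0)
  tendsto_variation : Tendsto P atTop (𝓝 ((d + 1) * ballVolume (d + 1)))
  split_le : ∀ j t, isoperimetricConst (d + 1) * ((∫ x in Iic t, A j x) ^ ((d : ℝ) / (d + 1)) +
    ((∫ x, A j x) - ∫ x in Iic t, A j x) ^ ((d : ℝ) / (d + 1))) ≤ P j + 2 * a j t

theorem isoperimetricConst_succ_mul_rpow (d : ℕ) :
    isoperimetricConst (d + 1) * ballVolume (d + 1) ^ ((d : ℝ) / (d + 1)) =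
      (d + 1) * ballVolume (d + 1) := by
  have hvol := ballVolume_pos (d + 1)
  rw [isoperimetricConst, Nat.cast_succ, rpow_div_succ_eq_div hvol]
  field_simp

theorem rpow_add_sub_rpow_eq {m M p : ℝ} (hM : 0 < M) (hm : 0 ≤ m) (hmM : m ≤ M) :
    m ^ p + (M - m) ^ p = M ^ p * ((m / M) ^ p + (1 - m / M) ^ p) := by
  have hfrac : m / M ≤ 1 := (div_le_one hM).2 hmM
  rw [mul_add, ← Real.mul_rpow hM.le (by positivity), ← Real.mul_rpow hM.le (by linarith),
    mul_div_cancel₀ _ hM.ne', mul_sub, mul_one, mul_div_cancel₀ _ hM.ne']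

theorem exists_integral_Iic_eq_zero_and_eq_integral {A : ℝ → ℝ} (hA : HasCompactSupport A) :
    ∃ t₁ t₂, ∫ x in Iic t₁, A x = 0 ∧ ∫ x in Iic t₂, A x = ∫ x, A x := by
  obtain ⟨R, hR⟩ := hA.isCompact.isBounded.subset_ball 0
  have hzero x (hx : R ≤ |x|) : A x = 0 := by
    refine image_eq_zero_of_notMem_tsupport fun hmem => ?_
    have := mem_ball_zero_iff.1 (hR hmem)
    rw [Real.norm_eq_abs] at this
    linarith
  refine ⟨-R, R, setIntegral_eq_zero_of_forall_eq_zero fun x hx => hzero x ?_,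
    setIntegral_eq_integral_of_forall_compl_eq_zero fun x hx => hzero x ?_⟩
  · exact (le_neg_of_le_neg hx).trans (neg_le_abs x)
  · exact (not_le.1 hx).le.trans (le_abs_self x)

namespace IsMinimizingProfile

variable {d : ℕ} {A a N : ℕ → ℝ → ℝ} {P : ℕ → ℝ} (S : IsMinimizingProfile d A a N P)
include S

theorem tendsto_integral_slice :
    Tendsto (fun j => ∫ t, a j t) atTop (𝓝 (ballVolume (d + 1))) := by
  refine (zero_add (ballVolume (d + 1)) ▸ S.tendsto_gap.add S.tendsto_mass).congr fun j => ?_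
  rw [integral_sub (S.profile j).integrable_slice (S.profile j).integrable_power, sub_add_cancel]

theorem exists_le_slice_of_mass_mem [NeZero d] {β : ℝ} (hβ : 0 < β) :
    ∃ κ > 0, ∀ᶠ j in atTop, ∀ t,
      (∫ x in Iic t, A j x) / (∫ x, A j x) ∈ Icc β (1 - β) → κ ≤ a j t := by
  have hd : (0 : ℝ) < d := Nat.cast_pos.2 (NeZero.pos d)
  have hvol := ballVolume_pos (d + 1)
  have hconst := isoperimetricConst_pos (d + 1)
  obtain ⟨γ, hγ, hgain⟩ := exists_one_add_le_rpow_add_rpow (p := (d : ℝ) / (d + 1))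
    ⟨by positivity, by rw [div_lt_one (by positivity)]; linarith⟩ hβ
  have hexcess : Tendsto (fun j => isoperimetricConst (d + 1) *
      ((∫ t, A j t) ^ ((d : ℝ) / (d + 1)) * (1 + γ)) - P j) atTop
      (𝓝 ((d + 1) * ballVolume (d + 1) * γ)) := by
    have hlim := (((S.tendsto_mass.rpow_const (p := (d : ℝ) / (d + 1)) (.inl hvol.ne')).mul_const
      (1 + γ)).const_mul (isoperimetricConst (d + 1))).sub S.tendsto_variation
    rw [← mul_assoc, isoperimetricConst_succ_mul_rpow] at hlim
    convert hlim using 2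
    ring
  have hpos : 0 < (d + 1) * ballVolume (d + 1) * γ := by positivity
  refine ⟨(d + 1) * ballVolume (d + 1) * γ / 4, by positivity, ?_⟩
  filter_upwards [hexcess.eventually_const_lt (half_lt_self hpos)] with j hj t ht
  have hsplit := S.split_le j t
  rw [rpow_add_sub_rpow_eq (S.mass_pos j) (integral_nonneg (S.profile j).power_nonneg)
    (setIntegral_le_integral (S.profile j).integrable_power
      (.of_forall (S.profile j).power_nonneg))] at hsplit
  have hmono : isoperimetricConst (d + 1) * ((∫ x, A j x) ^ ((d : ℝ) / (d + 1)) * (1 + γ)) ≤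
      P j + 2 * a j t := by
    refine le_trans ?_ hsplit
    have := S.mass_pos j
    gcongr ?_ * (?_ * ?_)
    exact hgain _ ht
  linarith

variable {G : ℕ → ℝ → ℝ} {δ : ℕ → ℝ}

theorem tendsto_transportDilation (hδ : Tendsto δ atTop (𝓝 0)) :
    Tendsto (fun j => transportDilation d (δ j) (A j)) atTop (𝓝 1) := by
  have hvol := (ballVolume_pos (d + 1)).ne'
  have hscale : Tendsto (fun j => transportScale d (δ j) (A j)) atTop
      (𝓝 (ballVolume (d + 1) / ((1 - 0) * ballVolume (d + 1)))) :=
    S.tendsto_mass.div ((hδ.const_sub 1).mul_const _) (by simpa using hvol)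
  rw [sub_zero, one_mul, div_self hvol] at hscale
  have := hscale.rpow_const (p := -((d : ℝ) + 1)⁻¹) (.inl one_ne_zero)
  rwa [Real.one_rpow] at this

variable [NeZero d] (hδ : ∀ j, δ j ∈ Ioo (0 : ℝ) 1) (hδ₀ : Tendsto δ atTop (𝓝 0))
  (T : ∀ j, IsTransport d (δ j) (A j) (G j))
include hδ hδ₀ T

theorem exists_mass_mem_of_abs_le {s : ℝ} (hs : s ∈ Ico (0 : ℝ) 1) :
    ∃ β > 0, ∀ᶠ j in atTop, ∀ t, |G j t| ≤ s →
      (∫ x in Iic t, A j x) / (∫ x, A j x) ∈ Icc β (1 - β) := by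
  have hvol := ballVolume_pos (d + 1)
  obtain ⟨hlow, -⟩ := ballCap_mem_Ioo (d := d) (s := -s) ⟨by linarith [hs.2], by linarith [hs.1]⟩
  obtain ⟨-, hhigh⟩ := ballCap_mem_Ioo (d := d) (s := s) ⟨by linarith [hs.1], hs.2⟩
  set β := min (ballCap d (-s) / ballVolume (d + 1)) (1 - ballCap d s / ballVolume (d + 1)) / 2
  have hβ : 0 < β :=
    half_pos (lt_min (div_pos hlow hvol) (sub_pos.2 ((div_lt_one hvol).2 hhigh)))
  have hβlow : 2 * β ≤ ballCap d (-s) / ballVolume (d + 1) :=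
    (mul_div_cancel₀ _ two_ne_zero).trans_le (min_le_left _ _)
  have hβhigh : 2 * β ≤ 1 - ballCap d s / ballVolume (d + 1) :=
    (mul_div_cancel₀ _ two_ne_zero).trans_le (min_le_right _ _)
  refine ⟨β, hβ, ?_⟩
  filter_upwards [hδ₀.eventually_lt_const hβ] with j hj t ht
  have hδpos := (hδ j).1
  have hfrac₀ : 0 ≤ (∫ x in Iic t, A j x) / ∫ x, A j x :=
    div_nonneg (integral_nonneg (S.profile j).power_nonneg) (S.mass_pos j).le
  have hfrac₁ : (∫ x in Iic t, A j x) / (∫ x, A j x) ≤ 1 :=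
    (div_le_one (S.mass_pos j)).2 (setIntegral_le_integral (S.profile j).integrable_power
      (.of_forall (S.profile j).power_nonneg))
  have hcap : ballCap d (G j t) / ballVolume (d + 1) =
      δ j / 2 + (1 - δ j) * ((∫ x in Iic t, A j x) / ∫ x, A j x) := by
    rw [(T j).ballCap_eq, transportedMass, mul_div_cancel_left₀ _ hvol.ne']
  have hcap_low := div_le_div_of_nonneg_right (monotone_ballCap d (abs_le.1 ht).1) hvol.le
  have hcap_high := div_le_div_of_nonneg_right (monotone_ballCap d (abs_le.1 ht).2) hvol.le
  constructor <;> nlinarith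

omit [NeZero d] in
theorem eventually_integral_slopeError_lt {η : ℝ} (hη : 0 < η) :
    ∀ᶠ j in atTop, ∫ t, slopeError d (δ j) η (A j) (a j) (N j) (G j) t <
      4 * η * ballVolume (d + 1) := by
  have hvol := ballVolume_pos (d + 1)
  have hdil := S.tendsto_transportDilation hδ₀
  have hbound := ((((hdil.sub_const 1).abs.const_add (2 * η)).mul S.tendsto_integral_slice).add
    (((hdil.inv₀ one_ne_zero).const_mul (2 * (1 + η⁻¹))).mul (S.tendsto_variation.sub
      ((hdil.const_mul ((d : ℝ) + 1)).mul S.tendsto_mass)))).add S.tendsto_gap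
  simp only [sub_self, abs_zero, add_zero, mul_one, mul_zero] at hbound
  filter_upwards [hbound.eventually_lt_const
    (show 2 * η * ballVolume (d + 1) < 4 * η * ballVolume (d + 1) by gcongr; norm_num)] with j hj
  exact ((S.profile j).integral_slopeError_le hη (S.mass_pos j) (hδ j).2 (T j).contDiff
    fun t => ((T j).abs_lt_one t).le).trans_lt hj

theorem eventually_abs_increment_sub_le {s : ℝ} (hs : s ∈ Ico (0 : ℝ) 1) {ε : ℝ} (hε : 0 < ε) :
    ∀ᶠ j in atTop, ∀ t₁ t₂, |G j t₁| ≤ s → |G j t₂| ≤ s →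
      |G j t₂ - G j t₁ - (t₂ - t₁)| ≤ ε := by
  obtain ⟨β, hβ, hmass⟩ := S.exists_mass_mem_of_abs_le hδ hδ₀ T hs
  obtain ⟨κ, hκ, hslice⟩ := S.exists_le_slice_of_mass_mem hβ
  have hvol := ballVolume_pos (d + 1)
  have hη : 0 < κ * ε / (4 * ballVolume (d + 1)) := by positivity
  filter_upwards [hmass, hslice, S.eventually_integral_slopeError_lt hδ hδ₀ T hη,
    (S.tendsto_transportDilation hδ₀).eventually_lt_const one_lt_two]
    with j hmass hslice herr hdil
  have hordered t₁ t₂ (ht : t₁ ≤ t₂) (h₁ : |G j t₁| ≤ s) (h₂ : |G j t₂| ≤ s) :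
      |G j t₂ - G j t₁ - (t₂ - t₁)| ≤ ε := by
    refine le_of_mul_le_mul_left (((S.profile j).mul_abs_increment_sub_le (T j) (S.mass_pos j)
      (hδ j).2 (S.power_le_slice j) hη hdil.le hκ ht fun t htI =>
        hslice t (hmass t (abs_le.2 ?_))).trans (herr.le.trans_eq ?_)) hκ
    · exact ⟨(abs_le.1 h₁).1.trans ((T j).monotone htI.1),
        ((T j).monotone htI.2).trans (abs_le.1 h₂).2⟩
    · field_simp
  intro t₁ t₂ h₁ h₂
  rcases le_total t₁ t₂ with ht | ht
  · exact hordered t₁ t₂ ht h₁ h₂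
  · have := hordered t₂ t₁ ht h₂ h₁
    rwa [← abs_neg, show -(G j t₁ - G j t₂ - (t₁ - t₂)) = G j t₂ - G j t₁ - (t₂ - t₁) by ring]
      at this

omit hδ in
theorem eventually_exists_transport_eq {σ : ℝ} (hσ : σ ∈ Ioo (-1 : ℝ) 1) :
    ∀ᶠ j in atTop, ∃ t, G j t = σ := by
  obtain ⟨hlow, hhigh⟩ := ballCap_mem_Ioo (d := d) hσ
  have hδ' : Tendsto (fun j => ballVolume (d + 1) * (δ j / 2)) atTop (𝓝 0) := by
    simpa using (hδ₀.div_const 2).const_mul (ballVolume (d + 1))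
  filter_upwards [hδ'.eventually_lt_const hlow, hδ'.eventually_lt_const (sub_pos.2 hhigh)]
    with j hjlow hjhigh
  obtain ⟨t₁, t₂, ht₁, ht₂⟩ :=
    exists_integral_Iic_eq_zero_and_eq_integral (S.profile j).hasCompactSupport_power
  have hcap₁ := (T j).ballCap_eq t₁
  have hcap₂ := (T j).ballCap_eq t₂
  rw [transportedMass, ht₁, zero_div, mul_zero, add_zero] at hcap₁
  rw [transportedMass, ht₂, div_self (S.mass_pos j).ne'] at hcap₂
  refine mem_range_of_exists_le_of_exists_ge (T j).contDiff.continuous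
    ⟨t₁, le_of_not_gt fun h => ?_⟩ ⟨t₂, le_of_not_gt fun h => ?_⟩
  · linarith [monotone_ballCap d h.le]
  · linarith [monotone_ballCap d h.le]

omit hδ hδ₀ T in
theorem exists_tendsto_integral_Iic :
    ∃ c : ℕ → ℝ, ∀ s ∈ Ioo (-1 : ℝ) 1,
      Tendsto (fun j => ∫ x in Iic (c j + s), A j x) atTop (𝓝 (ballCap d s)) := by
  have hvol := (ballVolume_pos (d + 1)).ne'
  obtain ⟨δ, -, hδ, hδ₀⟩ := exists_seq_strictAnti_tendsto' (zero_lt_one' ℝ)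
  choose G T using fun j => exists_isTransport (d := d) (S.profile j).continuous_power
    (S.profile j).integrable_power (S.profile j).power_nonneg (S.mass_pos j) (hδ j)
  obtain ⟨c, hc⟩ := exists_tendsto_apply_add (fun j => (T j).monotone)
    (fun σ hσ => S.eventually_exists_transport_eq hδ₀ T hσ)
    fun s hs ε hε => S.eventually_abs_increment_sub_le hδ hδ₀ T hs hε
  refine ⟨c, fun s hs => ?_⟩
  have hcap := ((continuous_ballCap d).tendsto s).comp (hc s hs)
  have hlim := S.tendsto_mass.mul ((((hcap.div_const (ballVolume (d + 1))).sub
    (hδ₀.div_const 2))).div (hδ₀.const_sub 1) (by norm_num))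
  rw [zero_div, sub_zero, sub_zero, div_one, mul_div_cancel₀ _ hvol] at hlim
  refine hlim.congr fun j => ?_
  have hδ₁ : 1 - δ j ≠ 0 := (sub_pos.2 (hδ j).2).ne'
  have hmass := (S.mass_pos j).ne'
  simp only [Pi.div_apply, Function.comp_apply, (T j).ballCap_eq, transportedMass]
  field_simp
  ring

end IsMinimizingProfile

end Asymptotics

/-! ### Cutting a function by a hyperplane -/

section Ramp

/-- A smooth step from `0` to `1` along the interval `[t₀, t₀ + h]`. -/
noncomputable def ramp (t₀ h t : ℝ) : ℝ :=
  Real.smoothTransition ((t - t₀) / h)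

theorem ramp_mem_Icc (t₀ h t : ℝ) : ramp t₀ h t ∈ Icc (0 : ℝ) 1 :=
  ⟨Real.smoothTransition.nonneg _, Real.smoothTransition.le_one _⟩

theorem contDiff_ramp (t₀ h : ℝ) : ContDiff ℝ 1 (ramp t₀ h) :=
  Real.smoothTransition.contDiff.comp (by fun_prop)

variable {t₀ h t : ℝ} (hh : 0 < h)
include hh

theorem ramp_eq_zero (ht : t ≤ t₀) : ramp t₀ h t = 0 :=
  Real.smoothTransition.zero_of_nonpos (div_nonpos_of_nonpos_of_nonneg (sub_nonpos.2 ht) hh.le)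

theorem ramp_eq_one (ht : t₀ + h ≤ t) : ramp t₀ h t = 1 :=
  Real.smoothTransition.one_of_one_le ((one_le_div hh).2 (by linarith))

theorem deriv_ramp_nonneg (t : ℝ) : 0 ≤ deriv (ramp t₀ h) t :=
  have hmono : Monotone (ramp t₀ h) := fun _ _ hle => Real.smoothTransition.monotone (by gcongr)
  hmono.deriv_nonneg

theorem deriv_ramp_eq_zero (ht : t ∉ Icc t₀ (t₀ + h)) : deriv (ramp t₀ h) t = 0 := by
  rcases lt_or_ge t t₀ with hlt | hge
  · have hzero : ramp t₀ h =ᶠ[𝓝 t] fun _ => 0 := by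
      filter_upwards [Iio_mem_nhds hlt] with x hx using ramp_eq_zero hh hx.le
    rw [hzero.deriv_eq, deriv_const]
  · have hone : ramp t₀ h =ᶠ[𝓝 t] fun _ => 1 := by
      filter_upwards [Ioi_mem_nhds (not_le.1 fun hle => ht ⟨hge, hle⟩)] with x hx
        using ramp_eq_one hh hx.le
    rw [hone.deriv_eq, deriv_const]

theorem hasCompactSupport_deriv_ramp : HasCompactSupport (deriv (ramp t₀ h)) :=
  .intro isCompact_Icc fun _ => deriv_ramp_eq_zero hh

theorem integrable_deriv_ramp : Integrable (deriv (ramp t₀ h)) :=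
  ((contDiff_ramp t₀ h).continuous_deriv le_rfl).integrable_of_hasCompactSupport
    (hasCompactSupport_deriv_ramp hh)

theorem integral_deriv_ramp : ∫ t, deriv (ramp t₀ h) t = 1 := by
  have hbot : Tendsto (ramp t₀ h) atBot (𝓝 0) := tendsto_const_nhds.congr' <| by
    filter_upwards [Iic_mem_atBot t₀] with x hx using (ramp_eq_zero hh hx).symm
  have htop : Tendsto (ramp t₀ h) atTop (𝓝 1) := tendsto_const_nhds.congr' <| by
    filter_upwards [Ici_mem_atTop (t₀ + h)] with x hx using (ramp_eq_one hh hx).symm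
  rw [integral_of_hasDerivAt_of_tendsto
    (fun x => ((contDiff_ramp t₀ h).differentiable one_ne_zero x).hasDerivAt)
    (integrable_deriv_ramp hh) hbot htop, sub_zero]

end Ramp

section Cut

theorem norm_fderiv_mul_le {E : Type*} [NormedAddCommGroup E] [NormedSpace ℝ E] {u φ : E → ℝ}
    {x : E} (hu : DifferentiableAt ℝ u x) (hφ : DifferentiableAt ℝ φ x) (hu0 : 0 ≤ u x)
    (hφ0 : 0 ≤ φ x) :
    ‖fderiv ℝ (fun x => u x * φ x) x‖ ≤ φ x * ‖fderiv ℝ u x‖ + u x * ‖fderiv ℝ φ x‖ := by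
  rw [fderiv_fun_mul hu hφ, add_comm]
  refine (norm_add_le _ _).trans_eq ?_
  rw [norm_smul, norm_smul, Real.norm_of_nonneg hu0, Real.norm_of_nonneg hφ0]

theorem integral_norm_fderiv_mul_add_le {E : Type*} [NormedAddCommGroup E] [NormedSpace ℝ E]
    [MeasurableSpace E] [OpensMeasurableSpace E] {μ : Measure E} [IsFiniteMeasureOnCompacts μ]
    {u φ : E → ℝ} (hu : ContDiff ℝ 1 u) (hc : HasCompactSupport u) (hu0 : ∀ x, 0 ≤ u x)
    (hφ : ContDiff ℝ 1 φ) (hφ01 : ∀ x, φ x ∈ Icc (0 : ℝ) 1) :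
    ∫ x, ‖fderiv ℝ (fun x => u x * φ x) x‖ ∂μ + ∫ x, ‖fderiv ℝ (fun x => u x * (1 - φ x)) x‖ ∂μ ≤
      ∫ x, ‖fderiv ℝ u x‖ ∂μ + 2 * ∫ x, u x * ‖fderiv ℝ φ x‖ ∂μ := by
  have hgrad {v : E → ℝ} (hv : ContDiff ℝ 1 v) (hcv : HasCompactSupport v) :
      Integrable (fun x => ‖fderiv ℝ v x‖) μ :=
    (hv.continuous_fderiv one_ne_zero).norm.integrable_of_hasCompactSupport (hcv.fderiv ℝ).norm
  have hleft : Integrable (fun x => ‖fderiv ℝ (fun x => u x * φ x) x‖) μ :=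
    hgrad (hu.mul hφ) hc.mul_right
  have hright : Integrable (fun x => ‖fderiv ℝ (fun x => u x * (1 - φ x)) x‖) μ :=
    hgrad (hu.mul (contDiff_const.sub hφ)) hc.mul_right
  have hcut : Integrable (fun x => u x * ‖fderiv ℝ φ x‖) μ :=
    (hu.continuous.mul (hφ.continuous_fderiv one_ne_zero).norm).integrable_of_hasCompactSupport
      hc.mul_right
  rw [← integral_add hleft hright, ← integral_const_mul,
    ← integral_add (hgrad hu hc) (hcut.const_mul 2)]
  refine integral_mono (hleft.add hright) ((hgrad hu hc).add (hcut.const_mul 2)) fun x => ?_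
  have hux := hu.differentiable one_ne_zero x
  have hφx := hφ.differentiable one_ne_zero x
  have hle := norm_fderiv_mul_le hux hφx (hu0 x) (hφ01 x).1
  have hle' := norm_fderiv_mul_le hux (hφx.const_sub 1) (hu0 x) (sub_nonneg.2 (hφ01 x).2)
  rw [fderiv_const_sub, norm_neg] at hle'
  simp only
  linarith

theorem norm_fderiv_comp_inner {E : Type*} [NormedAddCommGroup E] [InnerProductSpace ℝ E] {θ : E}
    (hθ : ‖θ‖ = 1) {χ : ℝ → ℝ} (hχ : Differentiable ℝ χ) (x : E) :
    ‖fderiv ℝ (fun x => χ (inner ℝ θ x)) x‖ = |deriv χ (inner ℝ θ x)| := by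
  have hderiv : HasFDerivAt (fun x => χ (inner ℝ θ x))
      (deriv χ (inner ℝ θ x) • innerSL ℝ θ) x :=
    HasDerivAt.comp_hasFDerivAt x (hχ _).hasDerivAt (innerSL ℝ θ).hasFDerivAt
  rw [hderiv.fderiv, norm_smul, innerSL_apply_norm, hθ, mul_one, Real.norm_eq_abs]

variable {d : ℕ} {L : (ℝ × 𝔼 d) ≃L[ℝ] 𝔼 (d + 1)} (hL : IsOrthogonalSplitting L)
  {u : 𝔼 (d + 1) → ℝ}
include hL

theorem IsOrthogonalSplitting.norm_axis : ‖L (1, 0)‖ = 1 := by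
  have := hL 1 0
  rwa [norm_zero, one_pow, zero_pow two_ne_zero, add_zero,
    pow_eq_one_iff_of_nonneg (norm_nonneg _) two_ne_zero] at this

theorem setIntegral_sliceIntegral_rpow_le {v : 𝔼 (d + 1) → ℝ} (hv : Continuous v)
    (hc : HasCompactSupport v) (hv0 : ∀ x, 0 ≤ v x) {q : ℝ} (hq : 0 < q) {S : Set ℝ}
    (hS : MeasurableSet S) (hvu : ∀ t ∈ S, ∀ y, v (L (t, y)) = u (L (t, y))) :
    ∫ t in S, sliceIntegral L (fun x => u x ^ q) t ≤ ∫ x, v x ^ q := by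
  have hcont : Continuous fun x => v x ^ q := hv.rpow_const fun _ => .inr hq.le
  have hsupp : HasCompactSupport fun x => v x ^ q := hasCompactSupport_rpow hc hq.ne'
  have heq : ∀ t ∈ S, sliceIntegral L (fun x => u x ^ q) t = sliceIntegral L (fun x => v x ^ q) t :=
    fun t ht => by simp only [sliceIntegral, hvu t ht]
  rw [← hL.integral_sliceIntegral hcont hsupp, setIntegral_congr_fun hS heq]
  exact setIntegral_le_integral
    ((continuous_sliceIntegral hcont hsupp).integrable_of_hasCompactSupport
      (hasCompactSupport_sliceIntegral hsupp))
    (.of_forall fun t => integral_nonneg fun y => Real.rpow_nonneg (hv0 _) _)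

variable (hu : ContDiff ℝ 1 u) (hc : HasCompactSupport u) (hu0 : ∀ x, 0 ≤ u x)
include hu hc

theorem integral_mul_norm_fderiv_ramp_le {t₀ h C : ℝ} (hh : 0 < h)
    (hC : ∀ t ∈ Icc t₀ (t₀ + h), sliceIntegral L u t ≤ C) :
    ∫ x, u x * ‖fderiv ℝ (fun x => ramp t₀ h (inner ℝ (L (1, 0)) x)) x‖ ≤ C := by
  have hramp := contDiff_ramp t₀ h
  have hderiv := hramp.continuous_deriv le_rfl
  have hnorm x : ‖fderiv ℝ (fun x => ramp t₀ h (inner ℝ (L (1, 0)) x)) x‖ =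
      deriv (ramp t₀ h) (inner ℝ (L (1, 0)) x) := by
    rw [norm_fderiv_comp_inner hL.norm_axis (hramp.differentiable one_ne_zero),
      abs_of_nonneg (deriv_ramp_nonneg hh _)]
  have hcont : Continuous fun x => u x * deriv (ramp t₀ h) (inner ℝ (L (1, 0)) x) := by
    have := hu.continuous
    fun_prop
  simp only [hnorm]
  rw [← hL.integral_sliceIntegral hcont hc.mul_right]
  simp only [sliceIntegral, hL.inner_axis, integral_mul_const]
  calc ∫ t, sliceIntegral L u t * deriv (ramp t₀ h) t
      ≤ ∫ t, C * deriv (ramp t₀ h) t := by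
        refine integral_mono (((continuous_sliceIntegral hu.continuous hc).mul
          hderiv).integrable_of_hasCompactSupport (hasCompactSupport_deriv_ramp hh).mul_left)
          ((integrable_deriv_ramp hh).const_mul C) fun t => ?_
        by_cases ht : t ∈ Icc t₀ (t₀ + h)
        · exact mul_le_mul_of_nonneg_right (hC t ht) (deriv_ramp_nonneg hh t)
        · simp only [deriv_ramp_eq_zero hh ht, mul_zero, le_refl]
    _ = C := by rw [integral_const_mul, integral_deriv_ramp hh, mul_one]

variable [NeZero d]
include hu0

theorem const_mul_rpow_add_rpow_le_of_forall_le {t₀ h C : ℝ} (hh : 0 < h)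
    (hC : ∀ t ∈ Icc t₀ (t₀ + h), sliceIntegral L u t ≤ C) :
    isoperimetricConst (d + 1) *
      ((∫ t in Iic t₀, sliceIntegral L (fun x => u x ^ (1 + (d : ℝ)⁻¹)) t) ^ ((d : ℝ) / (d + 1)) +
        (∫ t in Ioi (t₀ + h), sliceIntegral L (fun x => u x ^ (1 + (d : ℝ)⁻¹)) t) ^
          ((d : ℝ) / (d + 1))) ≤
      (∫ x, ‖fderiv ℝ u x‖) + 2 * C := by
  have hconst := isoperimetricConst_pos (d + 1)
  let φ : 𝔼 (d + 1) → ℝ := fun x => ramp t₀ h (inner ℝ (L (1, 0)) x)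
  have hφ : ContDiff ℝ 1 φ := (contDiff_ramp t₀ h).comp (contDiff_const.inner ℝ contDiff_id)
  have hφ01 x : φ x ∈ Icc (0 : ℝ) 1 := ramp_mem_Icc _ _ _
  have hA0 t : 0 ≤ sliceIntegral L (fun x => u x ^ (1 + (d : ℝ)⁻¹)) t :=
    integral_nonneg fun y => Real.rpow_nonneg (hu0 _) _
  have hpiece {ψ : 𝔼 (d + 1) → ℝ} (hψ : ContDiff ℝ 1 ψ) (hψ0 : ∀ x, 0 ≤ ψ x) {S : Set ℝ}
      (hS : MeasurableSet S) (hψS : ∀ t ∈ S, ∀ y, ψ (L (t, y)) = 1) :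
      isoperimetricConst (d + 1) *
        (∫ t in S, sliceIntegral L (fun x => u x ^ (1 + (d : ℝ)⁻¹)) t) ^ ((d : ℝ) / (d + 1)) ≤
        ∫ x, ‖fderiv ℝ (fun x => u x * ψ x) x‖ := by
    refine le_trans ?_ (sobolev d _ (hu.mul hψ) hc.mul_right fun x => mul_nonneg (hu0 x) (hψ0 x))
    gcongr
    · exact integral_nonneg hA0
    · exact setIntegral_sliceIntegral_rpow_le hL (hu.mul hψ).continuous hc.mul_right
        (fun x => mul_nonneg (hu0 x) (hψ0 x)) (by positivity) hS
        fun t ht y => by rw [hψS t ht y, mul_one]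
  have habove := hpiece (S := Ioi (t₀ + h)) hφ (fun x => (hφ01 x).1) measurableSet_Ioi
    fun t ht y => by simp only [φ, hL.inner_axis, ramp_eq_one hh (le_of_lt ht)]
  have hbelow := hpiece (S := Iic t₀) (contDiff_const.sub hφ)
    (fun x => sub_nonneg.2 (hφ01 x).2) measurableSet_Iic
    fun t ht y => by simp only [φ, hL.inner_axis, ramp_eq_zero hh ht, sub_zero]
  have hsum := integral_norm_fderiv_mul_add_le (μ := volume) hu hc hu0 hφ hφ01
  have hcut := integral_mul_norm_fderiv_ramp_le hL hu hc hh hC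
  rw [mul_add]
  linarith

theorem const_mul_rpow_add_rpow_le (t₀ : ℝ) :
    isoperimetricConst (d + 1) *
      ((∫ t in Iic t₀, sliceIntegral L (fun x => u x ^ (1 + (d : ℝ)⁻¹)) t) ^ ((d : ℝ) / (d + 1)) +
        ((∫ t, sliceIntegral L (fun x => u x ^ (1 + (d : ℝ)⁻¹)) t) -
          ∫ t in Iic t₀, sliceIntegral L (fun x => u x ^ (1 + (d : ℝ)⁻¹)) t) ^
            ((d : ℝ) / (d + 1))) ≤
      (∫ x, ‖fderiv ℝ u x‖) + 2 * sliceIntegral L u t₀ := by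
  have D := isSliceProfile (gagliardoNirenberg d) hL hu hc hu0
  set A := sliceIntegral L fun x => u x ^ (1 + (d : ℝ)⁻¹)
  have hint := D.integrable_power
  have hcdf : Continuous fun t => ∫ x in Iic t, A x :=
    continuous_iff_continuousAt.2 fun t =>
      (hasDerivAt_integral_Iic D.continuous_power hint t).continuousAt
  have hlhs : Continuous fun h : ℝ => isoperimetricConst (d + 1) *
      ((∫ t in Iic t₀, A t) ^ ((d : ℝ) / (d + 1)) +
        ((∫ t, A t) - ∫ t in Iic (t₀ + h), A t) ^ ((d : ℝ) / (d + 1))) :=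
    continuous_const.mul (continuous_const.add ((continuous_const.sub
      (hcdf.comp (continuous_const.add continuous_id))).rpow_const fun _ => .inr (by positivity)))
  refine le_of_forall_pos_le_add fun ε hε => ?_
  have hnear : ∀ᶠ t in 𝓝 t₀, sliceIntegral L u t < sliceIntegral L u t₀ + ε / 2 :=
    D.continuous_slice.continuousAt.eventually_lt_const (by linarith)
  obtain ⟨r, hr, hball⟩ := Metric.eventually_nhds_iff.1 hnear
  have hlim := (hlhs.tendsto 0).mono_left (nhdsWithin_le_nhds (s := Ioi 0))
  rw [add_zero] at hlim
  refine le_of_tendsto hlim ?_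
  filter_upwards [Ioo_mem_nhdsGT hr] with h ⟨hh, hhr⟩
  have hcut := const_mul_rpow_add_rpow_le_of_forall_le hL hu hc hu0 (t₀ := t₀)
    (C := sliceIntegral L u t₀ + ε / 2) hh fun t ht => (hball <| by
      rw [Real.dist_eq, abs_of_nonneg (sub_nonneg.2 ht.1)]
      linarith [ht.2]).le
  rw [← intervalIntegral.integral_Iic_add_Ioi (b := t₀ + h) hint.integrableOn hint.integrableOn,
    add_sub_cancel_left]
  linarith

end Cut

/-! ### Volume swept out by translating a hypersurface -/

section Sweep

/-- The factor by which the `d`-dimensional Hausdorff measure of Euclidean `d`-space exceeds its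
volume. -/
noncomputable def hausdorffFactor (d : ℕ) : ℝ≥0∞ :=
  haveI : (μH[Module.finrank ℝ (𝔼 d)] : Measure (𝔼 d)).IsAddHaarMeasure :=
    isAddHaarMeasure_hausdorffMeasure
  (μH[Module.finrank ℝ (𝔼 d)] : Measure (𝔼 d)).addHaarScalarFactor volume

theorem hausdorffFactor_ne_zero (d : ℕ) : hausdorffFactor d ≠ 0 := by
  have : (μH[Module.finrank ℝ (𝔼 d)] : Measure (𝔼 d)).IsAddHaarMeasure :=
    isAddHaarMeasure_hausdorffMeasure
  exact ENNReal.coe_ne_zero.2 (Measure.addHaarScalarFactor_pos_of_isAddHaarMeasure _ _).ne'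

theorem hausdorffFactor_ne_top (d : ℕ) : hausdorffFactor d ≠ ⊤ :=
  ENNReal.coe_ne_top

theorem hausdorffMeasure_eq_mul_volume {d : ℕ} (s : Set (𝔼 d)) :
    μH[d] s = hausdorffFactor d * volume s := by
  have : (μH[Module.finrank ℝ (𝔼 d)] : Measure (𝔼 d)).IsAddHaarMeasure :=
    isAddHaarMeasure_hausdorffMeasure
  have hsmul := Measure.isAddLeftInvariant_eq_smul
    (μH[Module.finrank ℝ (𝔼 d)] : Measure (𝔼 d)) volume
  calc μH[d] s = μH[Module.finrank ℝ (𝔼 d)] s := by rw [finrank_euclideanSpace_fin]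
    _ = hausdorffFactor d * volume s := by
      rw [hsmul]
      rfl

theorem volume_eq_mul_hausdorffMeasure {d : ℕ} (s : Set (𝔼 d)) :
    volume s = (hausdorffFactor d)⁻¹ * μH[d] s := by
  rw [hausdorffMeasure_eq_mul_volume, ← mul_assoc,
    ENNReal.inv_mul_cancel (hausdorffFactor_ne_zero d) (hausdorffFactor_ne_top d), one_mul]

/-- The region swept out by `T` when it is translated by `-s • θ` for `0 ≤ s ≤ h`. -/
def sweep {E : Type*} [NormedAddCommGroup E] [NormedSpace ℝ E] (θ : E) (h : ℝ) (T : Set E) :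
    Set E :=
  {y | ∃ s ∈ Icc 0 h, y + s • θ ∈ T}

theorem inter_frontier_nonempty_of_isPreconnected {X : Type*} [TopologicalSpace X] {C S : Set X}
    (hC : IsPreconnected C) (hCS : (C ∩ S).Nonempty) (hCSc : (C ∩ Sᶜ).Nonempty) :
    (C ∩ frontier S).Nonempty := by
  by_contra hempty
  have hcover : C ⊆ interior S ∪ interior Sᶜ := fun x hx => by
    rw [← compl_frontier_eq_union_interior]
    exact fun hfrontier => hempty ⟨x, hx, hfrontier⟩
  have hdisj : Disjoint (interior S) (interior Sᶜ) :=
    disjoint_compl_right.mono interior_subset interior_subset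
  rcases hC.subset_or_subset isOpen_interior isOpen_interior hdisj hcover with hin | hout
  · obtain ⟨x, hx, hxS⟩ := hCSc
    exact hxS (interior_subset (hin hx))
  · obtain ⟨x, hx, hxS⟩ := hCS
    exact interior_subset (hout hx) hxS

section NormedSpace

variable {E : Type*} [NormedAddCommGroup E] [NormedSpace ℝ E] {θ : E} {h : ℝ}

theorem sweep_iUnion {ι : Sort*} (T : ι → Set E) : sweep θ h (⋃ i, T i) = ⋃ i, sweep θ h (T i) := by
  ext y
  simp only [sweep, mem_ofPred_eq, mem_iUnion]
  grind

theorem mem_sweep_frontier (hh : 0 ≤ h) {S : Set E} {y : E} (hy : ¬(y + h • θ ∈ S ↔ y ∈ S)) :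
    y ∈ sweep θ h (frontier S) := by
  let segment := (fun s : ℝ => y + s • θ) '' Icc 0 h
  have hconn : IsPreconnected segment := isPreconnected_Icc.image _ (by fun_prop)
  have hstart : y ∈ segment := ⟨0, ⟨le_rfl, hh⟩, by simp⟩
  have hend : y + h • θ ∈ segment := ⟨h, ⟨hh, le_rfl⟩, rfl⟩
  have hmeets : (segment ∩ S).Nonempty ∧ (segment ∩ Sᶜ).Nonempty := by
    by_cases hyS : y ∈ S
    · exact ⟨⟨y, hstart, hyS⟩, ⟨_, hend, fun hmem => hy (iff_of_true hmem hyS)⟩⟩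
    · exact ⟨⟨_, hend, by_contra fun hmem => hy (iff_of_false hmem hyS)⟩, ⟨y, hstart, hyS⟩⟩
  obtain ⟨_, ⟨s, hs, rfl⟩, hfrontier⟩ :=
    inter_frontier_nonempty_of_isPreconnected hconn hmeets.1 hmeets.2
  exact ⟨s, hs, hfrontier⟩

end NormedSpace

variable {d : ℕ} {θ : 𝔼 (d + 1)} {h δ : ℝ}

namespace IsOrthogonalSplitting

variable {L : (ℝ × 𝔼 d) ≃L[ℝ] 𝔼 (d + 1)} (hL : IsOrthogonalSplitting L)
include hL

theorem norm_sq_eq (x : 𝔼 (d + 1)) : ‖x‖ ^ 2 = (L.symm x).1 ^ 2 + ‖(L.symm x).2‖ ^ 2 := by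
  simpa using hL (L.symm x).1 (L.symm x).2

theorem abs_fst_symm_le (x : 𝔼 (d + 1)) : |(L.symm x).1| ≤ ‖x‖ :=
  abs_le_of_sq_le_sq (by rw [hL.norm_sq_eq x]; exact le_add_of_nonneg_right (sq_nonneg _))
    (norm_nonneg _)

theorem lipschitzWith_snd_symm : LipschitzWith 1 fun x => (L.symm x).2 := by
  refine LipschitzWith.of_dist_le_mul fun x y => ?_
  rw [NNReal.coe_one, one_mul, dist_eq_norm, dist_eq_norm, ← Prod.snd_sub, ← map_sub]
  exact le_of_sq_le_sq (by rw [hL.norm_sq_eq (x - y)]; exact le_add_of_nonneg_left (sq_nonneg _))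
    (norm_nonneg _)

theorem preimage_sweep_subset {T : Set (𝔼 (d + 1))} (hT : ∀ x ∈ T, ∀ y ∈ T, dist x y ≤ δ)
    {z : 𝔼 (d + 1)} (hz : z ∈ T) :
    L ⁻¹' sweep (L (1, 0)) h T ⊆
      Icc ((L.symm z).1 - δ - h) ((L.symm z).1 + δ) ×ˢ ((fun x => (L.symm x).2) '' T) := by
  rintro ⟨t, y⟩ ⟨s, hs, hmem⟩
  have htranslate : L (t, y) + s • L (1, 0) = L (t + s, y) := by
    rw [← map_smul, ← map_add]
    simp
  rw [htranslate] at hmem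
  have hclose := (hL.abs_fst_symm_le (L (t + s, y) - z)).trans
    ((dist_eq_norm _ _).symm.trans_le (hT _ hmem _ hz))
  rw [map_sub, L.symm_apply_apply, Prod.fst_sub, abs_le] at hclose
  exact ⟨⟨by linarith [hclose.1, hs.2], by linarith [hclose.2, hs.1]⟩, ⟨_, hmem, by simp⟩⟩

end IsOrthogonalSplitting

theorem volume_sweep_le (hθ : ‖θ‖ = 1) {T : Set (𝔼 (d + 1))}
    (hT : ∀ x ∈ T, ∀ y ∈ T, dist x y ≤ δ) :
    volume (sweep θ h T) ≤
      ENNReal.ofReal (h + 2 * δ) * ((hausdorffFactor d)⁻¹ * μH[d] T) := by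
  rcases T.eq_empty_or_nonempty with rfl | ⟨z, hz⟩
  · simp [sweep]
  obtain ⟨L, hL, rfl⟩ := exists_isOrthogonalSplitting (F := 𝔼 d) (by simp) hθ
  calc volume (sweep (L (1, 0)) h T) = volume (L ⁻¹' sweep (L (1, 0)) h T) :=
        (hL.measurePreserving.measure_preimage_emb L.toHomeomorph.measurableEmbedding _).symm
    _ ≤ volume (Icc ((L.symm z).1 - δ - h) ((L.symm z).1 + δ) ×ˢ
          ((fun x => (L.symm x).2) '' T)) := measure_mono (hL.preimage_sweep_subset hT hz)
    _ = ENNReal.ofReal (h + 2 * δ) *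
          ((hausdorffFactor d)⁻¹ * μH[d] ((fun x => (L.symm x).2) '' T)) := by
        rw [Measure.volume_eq_prod, Measure.prod_prod, Real.volume_Icc,
          volume_eq_mul_hausdorffMeasure]
        ring_nf
    _ ≤ _ := by
        gcongr _ * (_ * ?_)
        simpa using hL.lipschitzWith_snd_symm.hausdorffMeasure_image_le (Nat.cast_nonneg d) T

variable {r : ℝ} {f : 𝔼 (d + 1) → ℝ≥0∞} {ε : ℝ≥0∞}

theorem setLIntegral_sweep_le_of_dist_le (hθ : ‖θ‖ = 1) (hr : h + δ ≤ r)
    (hf : ∀ x y, dist x y ≤ r → f x ≤ f y + ε) {T : Set (𝔼 (d + 1))} (hTm : MeasurableSet T)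
    (hT : ∀ x ∈ T, ∀ y ∈ T, dist x y ≤ δ) :
    ∫⁻ y in sweep θ h T, f y ≤
      ENNReal.ofReal (h + 2 * δ) * ((hausdorffFactor d)⁻¹ * ∫⁻ z in T, (f z + ε) ∂μH[d]) := by
  let c : ℝ≥0∞ := ⨅ z ∈ T, (f z + ε)
  have hfc : ∀ y ∈ sweep θ h T, f y ≤ c := by
    rintro y ⟨s, hs, hmem⟩
    refine le_iInf₂ fun z hz => hf _ _ ?_
    calc dist y z ≤ dist y (y + s • θ) + dist (y + s • θ) z := dist_triangle _ _ _
      _ ≤ h + δ := by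
        refine add_le_add ?_ (hT _ hmem _ hz)
        rw [dist_self_add_right, norm_smul, hθ, mul_one, Real.norm_of_nonneg hs.1]
        exact hs.2
      _ ≤ r := hr
  have hcT : c * μH[d] T ≤ ∫⁻ z in T, (f z + ε) ∂μH[d] := by
    rw [← setLIntegral_const]
    exact setLIntegral_mono' hTm fun z hz => iInf₂_le z hz
  calc ∫⁻ y in sweep θ h T, f y ≤ c * volume (sweep θ h T) := by
        rw [← setLIntegral_const]
        exact setLIntegral_mono measurable_const hfc
    _ ≤ c * (ENNReal.ofReal (h + 2 * δ) * ((hausdorffFactor d)⁻¹ * μH[d] T)) := by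
        gcongr
        exact volume_sweep_le hθ hT
    _ = ENNReal.ofReal (h + 2 * δ) * ((hausdorffFactor d)⁻¹ * (c * μH[d] T)) := by ring
    _ ≤ _ := by gcongr

theorem setLIntegral_sweep_le (hθ : ‖θ‖ = 1) (hδ : 0 < δ) (hr : h + δ ≤ r)
    (hf : ∀ x y, dist x y ≤ r → f x ≤ f y + ε) {S : Set (𝔼 (d + 1))} (hS : MeasurableSet S) :
    ∫⁻ y in sweep θ h S, f y ≤
      ENNReal.ofReal (h + 2 * δ) * ((hausdorffFactor d)⁻¹ * ∫⁻ z in S, (f z + ε) ∂μH[d]) := by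
  obtain ⟨B, hBm, hBbdd, hBdiam, hBcover, hBdisj⟩ :=
    SeparableSpace.exists_measurable_partition_diam_le (𝔼 (d + 1)) hδ
  have hpieces : S = ⋃ i, S ∩ B i := by rw [← inter_iUnion, hBcover, inter_univ]
  have hpiece : ∀ i, ∫⁻ y in sweep θ h (S ∩ B i), f y ≤ ENNReal.ofReal (h + 2 * δ) *
      ((hausdorffFactor d)⁻¹ * ∫⁻ z in S ∩ B i, (f z + ε) ∂μH[d]) := fun i =>
    setLIntegral_sweep_le_of_dist_le hθ hr hf (hS.inter (hBm i)) fun x hx y hy =>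
      (dist_le_diam_of_mem (hBbdd i) hx.2 hy.2).trans (hBdiam i)
  calc ∫⁻ y in sweep θ h S, f y = ∫⁻ y in ⋃ i, sweep θ h (S ∩ B i), f y := by
        rw [← sweep_iUnion, ← hpieces]
    _ ≤ ∑' i, ∫⁻ y in sweep θ h (S ∩ B i), f y := lintegral_iUnion_le _ _
    _ ≤ ∑' i, ENNReal.ofReal (h + 2 * δ) *
          ((hausdorffFactor d)⁻¹ * ∫⁻ z in S ∩ B i, (f z + ε) ∂μH[d]) :=
        ENNReal.tsum_le_tsum hpiece
    _ = _ := by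
        rw [ENNReal.tsum_mul_left, ENNReal.tsum_mul_left,
          ← lintegral_iUnion (fun i => hS.inter (hBm i)) fun i j hij =>
            (hBdisj hij).mono inter_subset_right inter_subset_right, ← hpieces]

end Sweep

/-! ### Smooth approximation of sets of finite perimeter -/

section Mollification

theorem tendsto_integral_abs_sub_of_integral_eq {α : Type*} [MeasurableSpace α] {μ : Measure α}
    {f : ℕ → α → ℝ} {g : α → ℝ} (hf : ∀ k, Integrable (f k) μ) (hg : Integrable g μ)
    (hf0 : ∀ k x, 0 ≤ f k x) (hg0 : ∀ x, 0 ≤ g x) (hint : ∀ k, ∫ x, f k x ∂μ = ∫ x, g x ∂μ)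
    (hlim : ∀ᵐ x ∂μ, Tendsto (fun k => f k x) atTop (𝓝 (g x))) :
    Tendsto (fun k => ∫ x, |f k x - g x| ∂μ) atTop (𝓝 0) := by
  have habs : ∀ k, ∫ x, |f k x - g x| ∂μ = 2 * ∫ x, max (g x - f k x) 0 ∂μ := fun k => by
    have hpos : Integrable (fun x => 2 * max (g x - f k x) 0) μ :=
      (hg.sub (hf k)).pos_part.const_mul 2
    have hsplit : ∀ x, |f k x - g x| = (f k x - g x) + 2 * max (g x - f k x) 0 := fun x => by
      rcases le_total (f k x) (g x) with hle | hle
      · rw [abs_of_nonpos (by linarith), max_eq_left (by linarith)]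
        ring
      · rw [abs_of_nonneg (by linarith), max_eq_right (by linarith)]
        ring
    simp only [hsplit]
    rw [integral_add (by exact (hf k).sub hg) hpos, integral_sub (hf k) hg, hint k, sub_self,
      zero_add, integral_const_mul]
  have hdom : Tendsto (fun k => ∫ x, max (g x - f k x) 0 ∂μ) atTop (𝓝 (∫ _, (0 : ℝ) ∂μ)) := by
    refine tendsto_integral_of_dominated_convergence g
      (fun k => (hg.sub (hf k)).pos_part.aestronglyMeasurable) hg
      (fun k => .of_forall fun x => ?_) ?_
    · rw [Real.norm_of_nonneg (le_max_right _ _)]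
      exact max_le (sub_le_self _ (hf0 k x)) (hg0 x)
    · filter_upwards [hlim] with x hx
      simpa using (hx.const_sub (g x)).max (tendsto_const_nhds (x := (0 : ℝ)))
  simpa [habs] using hdom.const_mul 2

section NormedSpace

variable {E : Type*} [NormedAddCommGroup E] [InnerProductSpace ℝ E] [FiniteDimensional ℝ E]
  [MeasurableSpace E] [BorelSpace E] {S : Set E} {ρ : E → ℝ}

/-- Smooth compactly supported probability densities. -/
structure IsMollifier (ρ : E → ℝ) : Prop where
  contDiff : ContDiff ℝ 1 ρ
  hasCompactSupport : HasCompactSupport ρ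
  nonneg : ∀ x, 0 ≤ ρ x
  integral_eq_one : ∫ x, ρ x = 1

theorem IsMollifier.integrable (hρ : IsMollifier ρ) : Integrable ρ :=
  hρ.contDiff.continuous.integrable_of_hasCompactSupport hρ.hasCompactSupport

/-- The convolution of the indicator of `S` with the density `ρ`. -/
noncomputable def mollify (S : Set E) (ρ : E → ℝ) : E → ℝ :=
  convolution ρ (S.indicator fun _ => (1 : ℝ)) (ContinuousLinearMap.lsmul ℝ ℝ) volume

theorem mollify_apply (x : E) :
    mollify S ρ x = ∫ y, ρ (x - y) * S.indicator (fun _ => (1 : ℝ)) y := by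
  rw [mollify, convolution_lsmul_swap]
  rfl

theorem integrable_indicator_one (hS : MeasurableSet S) (hSfin : volume S ≠ ⊤) :
    Integrable (S.indicator fun _ => (1 : ℝ)) :=
  (integrable_indicator_iff hS).2 (integrableOn_const hSfin)

section IsMollifier

variable (hS : MeasurableSet S) (hρ : IsMollifier ρ)
include hS hρ

theorem contDiff_mollify : ContDiff ℝ 1 (mollify S ρ) :=
  hρ.hasCompactSupport.contDiff_convolution_left (n := 1) _ hρ.contDiff
    ((locallyIntegrable_const (1 : ℝ)).indicator hS)

theorem integrable_mollify_integrand (x : E) :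
    Integrable fun y => ρ (x - y) * S.indicator (fun _ => (1 : ℝ)) y := by
  refine (hρ.integrable.comp_sub_left x).mul_bdd (c := 1)
    (measurable_const.indicator hS).aestronglyMeasurable (.of_forall fun y => ?_)
  by_cases hy : y ∈ S <;> simp [hy]

omit hS in
theorem mollify_nonneg (x : E) : 0 ≤ mollify S ρ x := by
  rw [mollify_apply]
  exact integral_nonneg fun y =>
    mul_nonneg (hρ.nonneg _) (indicator_nonneg (fun _ _ => zero_le_one) _)

theorem mollify_le_one (x : E) : mollify S ρ x ≤ 1 := by
  rw [mollify_apply]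
  refine (integral_mono (integrable_mollify_integrand hS hρ x) (hρ.integrable.comp_sub_left x)
    fun y => mul_le_of_le_one_right (hρ.nonneg _) ?_).trans_eq
      ((integral_sub_left_eq_self ρ volume x).trans hρ.integral_eq_one)
  by_cases hy : y ∈ S <;> simp [hy]

theorem integrable_mollify (hSfin : volume S ≠ ⊤) : Integrable (mollify S ρ) :=
  hρ.integrable.integrable_convolution _ (integrable_indicator_one hS hSfin)

theorem integral_mollify (hSfin : volume S ≠ ⊤) :
    ∫ x, mollify S ρ x = ∫ x, S.indicator (fun _ => (1 : ℝ)) x := by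
  refine (integral_convolution (μ := volume) (ContinuousLinearMap.lsmul ℝ ℝ) hρ.integrable
    (integrable_indicator_one hS hSfin)).trans ?_
  simp [hρ.integral_eq_one]

theorem enorm_mollify_add_sub_le {θ : E} {h : ℝ} (hh : 0 ≤ h) (x : E) :
    ‖mollify S ρ (x + h • θ) - mollify S ρ x‖ₑ ≤
      ∫⁻ y in sweep θ h (frontier S), ENNReal.ofReal (ρ (x - y)) := by
  let χ : E → ℝ := S.indicator fun _ => 1
  have hshift : mollify S ρ (x + h • θ) = ∫ y, ρ (x - y) * χ (y + h • θ) := by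
    rw [mollify_apply, ← integral_add_right_eq_self _ (h • θ)]
    simp only [add_sub_add_right_eq_sub, χ]
  have hshift_int : Integrable fun y => ρ (x - y) * χ (y + h • θ) := by
    simpa only [add_sub_add_right_eq_sub] using
      (integrable_mollify_integrand hS hρ (x + h • θ)).comp_add_right (h • θ)
  rw [hshift, mollify_apply, ← integral_sub hshift_int (integrable_mollify_integrand hS hρ x)]
  refine (enorm_integral_le_lintegral_enorm _).trans
    ((lintegral_mono fun y => ?_).trans (lintegral_indicator_le _ _))
  by_cases hy : y ∈ sweep θ h (frontier S)
  · rw [indicator_of_mem hy, ← ofReal_norm, ← mul_sub, norm_mul, Real.norm_of_nonneg (hρ.nonneg _)]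
    refine ENNReal.ofReal_le_ofReal (mul_le_of_le_one_right (hρ.nonneg _) ?_)
    by_cases hend : y + h • θ ∈ S <;> by_cases hstart : y ∈ S <;> simp [χ, hend, hstart]
  · have hiff : y + h • θ ∈ S ↔ y ∈ S := not_not.1 ((mem_sweep_frontier hh).mt hy)
    by_cases hstart : y ∈ S <;> simp [χ, hiff, hstart]

end IsMollifier

theorem exists_isMollifier_integral_abs_sub_lt (hS : MeasurableSet S) (hSfin : volume S ≠ ⊤)
    {η : ℝ} (hη : 0 < η) :
    ∃ ρ : E → ℝ, IsMollifier ρ ∧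
      ∫ x, |mollify S ρ x - S.indicator (fun _ => (1 : ℝ)) x| < η := by
  let φ : ℕ → ContDiffBump (0 : E) := fun k =>
    { rIn := 1 / ((k : ℝ) + 1)
      rOut := 2 * (1 / ((k : ℝ) + 1))
      rIn_pos := by positivity
      rIn_lt_rOut := lt_mul_of_one_lt_left (by positivity) one_lt_two }
  have hφ : ∀ k, IsMollifier ((φ k).normed volume) := fun k =>
    ⟨(φ k).contDiff_normed, (φ k).hasCompactSupport_normed, (φ k).nonneg_normed,
      (φ k).integral_normed⟩
  have hrOut : Tendsto (fun k => (φ k).rOut) atTop (𝓝 0) := by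
    simpa [φ] using (tendsto_one_div_add_atTop_nhds_zero_nat (𝕜 := ℝ)).const_mul 2
  have hae : ∀ᵐ x : E, Tendsto (fun k => mollify S ((φ k).normed volume) x) atTop
      (𝓝 (S.indicator (fun _ => (1 : ℝ)) x)) :=
    ContDiffBump.ae_convolution_tendsto_right_of_locallyIntegrable (K := 2) hrOut
      (.of_forall fun k => le_rfl) ((locallyIntegrable_const (1 : ℝ)).indicator hS)
  have hlim := tendsto_integral_abs_sub_of_integral_eq
    (fun k => integrable_mollify hS (hφ k) hSfin) (integrable_indicator_one hS hSfin)
    (fun k => mollify_nonneg (hφ k)) (indicator_nonneg fun _ _ => zero_le_one)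
    (fun k => integral_mollify hS (hφ k) hSfin) hae
  obtain ⟨k, hk⟩ := (hlim.eventually_lt_const hη).exists
  exact ⟨_, hφ k, hk⟩

theorem exists_cutoff (E : Type*) [NormedAddCommGroup E] [InnerProductSpace ℝ E]
    [FiniteDimensional ℝ E] :
    ∃ C : ℝ, ∀ R : ℝ, 0 < R → ∃ χ : E → ℝ, ContDiff ℝ 1 χ ∧ HasCompactSupport χ ∧
      (∀ x, χ x ∈ Icc (0 : ℝ) 1) ∧ (∀ x, ‖x‖ ≤ R → χ x = 1) ∧ ∀ x, ‖fderiv ℝ χ x‖ ≤ C / R := by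
  let φ : ContDiffBump (0 : E) := ⟨1, 2, one_pos, one_lt_two⟩
  have hφ : ContDiff ℝ 1 φ := φ.contDiff
  obtain ⟨C, hC⟩ := (φ.hasCompactSupport.fderiv (𝕜 := ℝ)).exists_bound_of_continuous
    (hφ.continuous_fderiv one_ne_zero)
  refine ⟨C, fun R hR => ⟨fun x => φ (R⁻¹ • x), hφ.comp (contDiff_const_smul _),
    φ.hasCompactSupport.comp_homeomorph (Homeomorph.smulOfNeZero R⁻¹ (inv_ne_zero hR.ne')),
    fun x => ⟨φ.nonneg, φ.le_one⟩, fun x hx => φ.one_of_mem_closedBall ?_, fun x => ?_⟩⟩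
  · rw [mem_closedBall_zero_iff, norm_smul, norm_inv, Real.norm_of_nonneg hR.le]
    exact (inv_mul_le_one₀ hR).2 hx
  · rw [fderiv_comp_smul, norm_smul, norm_inv, Real.norm_of_nonneg hR.le, div_eq_inv_mul]
    exact mul_le_mul_of_nonneg_left (hC _) (inv_nonneg.2 hR.le)

theorem exists_hasCompactSupport_approx {u : E → ℝ} (hu : ContDiff ℝ 1 u) (hu0 : ∀ x, 0 ≤ u x)
    (hu_int : Integrable u) (hgrad_int : Integrable (fderiv ℝ u)) {η : ℝ} (hη : 0 < η) :
    ∃ v : E → ℝ, ContDiff ℝ 1 v ∧ HasCompactSupport v ∧ (∀ x, v x ∈ Icc 0 (u x)) ∧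
      ∫ x, (u x - v x) < η ∧ ∫ x, ‖fderiv ℝ v x‖ ≤ (∫ x, ‖fderiv ℝ u x‖) + η := by
  obtain ⟨C, hC⟩ := exists_cutoff E
  choose χ hχ hχc hχ01 hχ_one hχ_grad using fun k : ℕ => hC (k + 1) k.cast_add_one_pos
  have hv : ∀ k x, u x * χ k x ∈ Icc 0 (u x) := fun k x =>
    ⟨mul_nonneg (hu0 x) (hχ01 k x).1, mul_le_of_le_one_right (hu0 x) (hχ01 k x).2⟩
  have hlim : Tendsto (fun k => ∫ x, (u x - u x * χ k x)) atTop (𝓝 (∫ _ : E, (0 : ℝ))) := by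
    refine tendsto_integral_of_dominated_convergence u (fun k => ?_) hu_int
      (fun k => .of_forall fun x => ?_) (.of_forall fun x => ?_)
    · exact (hu.continuous.sub (hu.continuous.mul (hχ k).continuous)).aestronglyMeasurable
    · rw [Real.norm_of_nonneg (sub_nonneg.2 (hv k x).2)]
      exact sub_le_self _ (hv k x).1
    · refine tendsto_const_nhds.congr' ?_
      filter_upwards [eventually_ge_atTop ⌈‖x‖⌉₊] with k hk
      rw [hχ_one k x ((Nat.ceil_le.1 hk).trans (by linarith)), mul_one, sub_self]
  rw [integral_zero] at hlim
  have hlim_grad : Tendsto (fun k : ℕ => (∫ x, u x) * (C / ((k : ℝ) + 1))) atTop (𝓝 0) := by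
    simpa [div_eq_mul_inv] using
      ((tendsto_one_div_add_atTop_nhds_zero_nat (𝕜 := ℝ)).const_mul C).const_mul (∫ x, u x)
  obtain ⟨k, hk, hk_grad⟩ :=
    ((hlim.eventually_lt_const hη).and (hlim_grad.eventually_lt_const hη)).exists
  refine ⟨fun x => u x * χ k x, hu.mul (hχ k), (hχc k).mul_left, hv k, hk, ?_⟩
  have hpoint : ∀ x, ‖fderiv ℝ (fun x => u x * χ k x) x‖ ≤
      ‖fderiv ℝ u x‖ + u x * (C / ((k : ℝ) + 1)) := fun x =>
    (norm_fderiv_mul_le (hu.differentiable one_ne_zero x) ((hχ k).differentiable one_ne_zero x)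
      (hu0 x) (hχ01 k x).1).trans (add_le_add
        (mul_le_of_le_one_left (norm_nonneg _) (hχ01 k x).2)
        (mul_le_mul_of_nonneg_left (hχ_grad k x) (hu0 x)))
  calc ∫ x, ‖fderiv ℝ (fun x => u x * χ k x) x‖
      ≤ ∫ x, (‖fderiv ℝ u x‖ + u x * (C / ((k : ℝ) + 1))) :=
        integral_mono_of_nonneg (.of_forall fun x => norm_nonneg _)
          (hgrad_int.norm.add (hu_int.mul_const _)) (.of_forall hpoint)
    _ = (∫ x, ‖fderiv ℝ u x‖) + (∫ x, u x) * (C / ((k : ℝ) + 1)) := by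
        rw [integral_add hgrad_int.norm (hu_int.mul_const _), integral_mul_const]
    _ ≤ _ := by linarith

end NormedSpace

theorem enorm_fderiv_le_of_eventually_le {E F : Type*} [NormedAddCommGroup E] [NormedSpace ℝ E]
    [NormedAddCommGroup F] [NormedSpace ℝ F] {f : E → F} {x : E} {K : ℝ≥0∞}
    (hf : ∀ᶠ y in 𝓝 x, ‖f y - f x‖ₑ ≤ K * ‖y - x‖ₑ) : ‖fderiv ℝ f x‖ₑ ≤ K := by
  rcases eq_or_ne K ⊤ with rfl | hK
  · exact le_top
  rw [← ofReal_norm]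
  refine ENNReal.ofReal_le_of_le_toReal
    (norm_fderiv_le_of_lip' ℝ ENNReal.toReal_nonneg (hf.mono fun y hy => ?_))
  simpa using ENNReal.toReal_mono (ENNReal.mul_ne_top hK enorm_ne_top) hy

section Gradient

variable {d : ℕ} {S : Set (𝔼 (d + 1))} {ρ : 𝔼 (d + 1) → ℝ} (hS : MeasurableSet S)
  (hρ : IsMollifier ρ)
include hS hρ

/-- The frontier is decomposed into pieces of diameter `ε ‖y - x‖ / 2`. -/
theorem eventually_enorm_mollify_sub_le (x : 𝔼 (d + 1)) {ε : ℝ} (hε : 0 < ε) :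
    ∀ᶠ y in 𝓝 x, ‖mollify S ρ y - mollify S ρ x‖ₑ ≤
      ENNReal.ofReal (1 + ε) * ((hausdorffFactor d)⁻¹ *
        ∫⁻ z in frontier S, (ENNReal.ofReal (ρ (x - z)) + ENNReal.ofReal ε) ∂μH[d]) *
          ‖y - x‖ₑ := by
  obtain ⟨r, hr, hρr⟩ := Metric.uniformContinuous_iff.1
    (hρ.hasCompactSupport.uniformContinuous_of_continuous hρ.contDiff.continuous) ε hε
  have hosc : ∀ a b, dist a b ≤ r / 2 →
      ENNReal.ofReal (ρ (x - a)) ≤ ENNReal.ofReal (ρ (x - b)) + ENNReal.ofReal ε :=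
    fun a b hab => by
      rw [← ENNReal.ofReal_add (hρ.nonneg _) hε.le]
      have hlt := hρr (a := x - a) (b := x - b) (by rw [dist_sub_left]; linarith)
      rw [Real.dist_eq, abs_lt] at hlt
      exact ENNReal.ofReal_le_ofReal (by linarith [hlt.2])
  have hsmall : ∀ᶠ y in 𝓝 x, ‖y - x‖ + ε * ‖y - x‖ / 2 < r / 2 := by
    have hcont : Continuous fun y => ‖y - x‖ + ε * ‖y - x‖ / 2 := by fun_prop
    exact hcont.tendsto x |>.eventually_lt_const (by simpa using hr)
  filter_upwards [hsmall] with y hy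
  rcases eq_or_ne y x with rfl | hyx
  · simp
  have hpos : 0 < ‖y - x‖ := norm_pos_iff.2 (sub_ne_zero.2 hyx)
  have hunit : ‖(‖y - x‖⁻¹ • (y - x))‖ = 1 := norm_smul_inv_norm (sub_ne_zero.2 hyx)
  have hyeq : y = x + ‖y - x‖ • (‖y - x‖⁻¹ • (y - x)) := by
    rw [smul_inv_smul₀ hpos.ne', add_sub_cancel]
  have hbound := (enorm_mollify_add_sub_le hS hρ (θ := ‖y - x‖⁻¹ • (y - x)) hpos.le x).trans
    (setLIntegral_sweep_le hunit (by positivity) hy.le hosc isClosed_frontier.measurableSet)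
  rw [← hyeq] at hbound
  refine hbound.trans_eq ?_
  rw [← ofReal_norm (y - x), show ‖y - x‖ + 2 * (ε * ‖y - x‖ / 2) = (1 + ε) * ‖y - x‖ by ring,
    ENNReal.ofReal_mul (by positivity)]
  ring

variable (hfrontier : μH[d] (frontier S) ≠ ⊤)
include hfrontier

theorem enorm_fderiv_mollify_le (x : 𝔼 (d + 1)) :
    ‖fderiv ℝ (mollify S ρ) x‖ₑ ≤
      (hausdorffFactor d)⁻¹ * ∫⁻ z in frontier S, ENNReal.ofReal (ρ (x - z)) ∂μH[d] := by
  set I := ∫⁻ z in frontier S, ENNReal.ofReal (ρ (x - z)) ∂μH[d]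
  have hofReal : Tendsto ENNReal.ofReal (𝓝[>] 0) (𝓝 0) := by
    simpa using (ENNReal.tendsto_ofReal tendsto_id).mono_left (nhdsWithin_le_nhds (a := (0 : ℝ)))
  have hlim : Tendsto (fun ε : ℝ => ENNReal.ofReal (1 + ε) *
      ((hausdorffFactor d)⁻¹ * (I + ENNReal.ofReal ε * μH[d] (frontier S)))) (𝓝[>] 0)
      (𝓝 (1 * ((hausdorffFactor d)⁻¹ * (I + 0 * μH[d] (frontier S))))) := by
    refine ENNReal.Tendsto.mul ?_ (.inl one_ne_zero) ?_ (.inr ENNReal.one_ne_top)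
    · simpa using (ENNReal.tendsto_ofReal (tendsto_id.const_add 1)).mono_left
        (nhdsWithin_le_nhds (a := (0 : ℝ)))
    · exact ENNReal.Tendsto.const_mul
        (tendsto_const_nhds.add (ENNReal.Tendsto.mul_const hofReal (.inr hfrontier)))
        (.inr (ENNReal.inv_ne_top.2 (hausdorffFactor_ne_zero d)))
  rw [zero_mul, add_zero, one_mul] at hlim
  refine ge_of_tendsto hlim (eventually_mem_nhdsWithin.mono fun ε hε => ?_)
  have hle := enorm_fderiv_le_of_eventually_le (eventually_enorm_mollify_sub_le hS hρ x hε)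
  rwa [lintegral_add_right _ measurable_const, setLIntegral_const] at hle

theorem lintegral_enorm_fderiv_mollify_le :
    ∫⁻ x, ‖fderiv ℝ (mollify S ρ) x‖ₑ ≤ (hausdorffFactor d)⁻¹ * μH[d] (frontier S) := by
  have : IsFiniteMeasure ((μH[d] : Measure (𝔼 (d + 1))).restrict (frontier S)) :=
    isFiniteMeasure_restrict.2 hfrontier
  have hcont := hρ.contDiff.continuous
  have hmeas : Measurable fun p : 𝔼 (d + 1) × 𝔼 (d + 1) => ENNReal.ofReal (ρ (p.1 - p.2)) :=
    ENNReal.measurable_ofReal.comp (by fun_prop : Continuous _).measurable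
  have hmass : ∀ z, ∫⁻ x, ENNReal.ofReal (ρ (x - z)) = 1 := fun z => by
    rw [lintegral_sub_right_eq_self (fun x => ENNReal.ofReal (ρ x)) z,
      ← ofReal_integral_eq_lintegral_ofReal hρ.integrable (.of_forall hρ.nonneg),
      hρ.integral_eq_one, ENNReal.ofReal_one]
  calc ∫⁻ x, ‖fderiv ℝ (mollify S ρ) x‖ₑ
      ≤ ∫⁻ x, (hausdorffFactor d)⁻¹ *
          ∫⁻ z in frontier S, ENNReal.ofReal (ρ (x - z)) ∂μH[d] :=
        lintegral_mono (enorm_fderiv_mollify_le hS hρ hfrontier)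
    _ = (hausdorffFactor d)⁻¹ *
          ∫⁻ z in frontier S, (∫⁻ x, ENNReal.ofReal (ρ (x - z))) ∂μH[d] := by
        rw [lintegral_const_mul' _ _ (ENNReal.inv_ne_top.2 (hausdorffFactor_ne_zero d)),
          lintegral_lintegral_swap hmeas.aemeasurable]
    _ = (hausdorffFactor d)⁻¹ * μH[d] (frontier S) := by simp [hmass]

omit hρ in
theorem exists_contDiff_approx_indicator (hSfin : volume S ≠ ⊤) {η : ℝ} (hη : 0 < η) :
    ∃ v : 𝔼 (d + 1) → ℝ, ContDiff ℝ 1 v ∧ HasCompactSupport v ∧ (∀ x, v x ∈ Icc (0 : ℝ) 1) ∧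
      ∫ x, |v x - S.indicator (fun _ => (1 : ℝ)) x| ≤ η ∧
      ∫ x, ‖fderiv ℝ v x‖ ≤ ((hausdorffFactor d)⁻¹ * μH[d] (frontier S)).toReal + η := by
  obtain ⟨ρ, hρ, hclose⟩ := exists_isMollifier_integral_abs_sub_lt hS hSfin (half_pos hη)
  have hperim : (hausdorffFactor d)⁻¹ * μH[d] (frontier S) ≠ ⊤ :=
    ENNReal.mul_ne_top (ENNReal.inv_ne_top.2 (hausdorffFactor_ne_zero d)) hfrontier
  have hgrad := lintegral_enorm_fderiv_mollify_le hS hρ hfrontier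
  have hu := contDiff_mollify hS hρ
  have hu_int := integrable_mollify hS hρ hSfin
  have hgrad_int : Integrable (fderiv ℝ (mollify S ρ)) :=
    ⟨(hu.continuous_fderiv one_ne_zero).aestronglyMeasurable, hgrad.trans_lt hperim.lt_top⟩
  have hgrad_real : ∫ x, ‖fderiv ℝ (mollify S ρ) x‖ ≤
      ((hausdorffFactor d)⁻¹ * μH[d] (frontier S)).toReal := by
    rw [integral_norm_eq_lintegral_enorm hgrad_int.aestronglyMeasurable]
    exact ENNReal.toReal_mono hperim hgrad
  obtain ⟨v, hv, hvc, hv_mem, hv_close, hv_grad⟩ :=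
    exists_hasCompactSupport_approx hu (mollify_nonneg hρ) hu_int hgrad_int (half_pos hη)
  refine ⟨v, hv, hvc, fun x => ⟨(hv_mem x).1, (hv_mem x).2.trans (mollify_le_one hS hρ x)⟩, ?_,
    by linarith⟩
  have hu_abs : Integrable fun x => |mollify S ρ x - S.indicator (fun _ => (1 : ℝ)) x| :=
    (hu_int.sub (integrable_indicator_one hS hSfin)).abs
  have huv : Integrable fun x => mollify S ρ x - v x :=
    hu_int.sub (hv.continuous.integrable_of_hasCompactSupport hvc)
  calc ∫ x, |v x - S.indicator (fun _ => (1 : ℝ)) x|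
      ≤ ∫ x, (|mollify S ρ x - S.indicator (fun _ => (1 : ℝ)) x| + (mollify S ρ x - v x)) := by
        refine integral_mono_of_nonneg (.of_forall fun x => abs_nonneg _) (hu_abs.add huv)
          (.of_forall fun x => ?_)
        have htri := abs_sub_le (v x) (mollify S ρ x) (S.indicator (fun _ => (1 : ℝ)) x)
        rw [abs_sub_comm (v x) (mollify S ρ x), abs_of_nonneg (sub_nonneg.2 (hv_mem x).2)] at htri
        exact htri.trans_eq (add_comm _ _)
    _ = (∫ x, |mollify S ρ x - S.indicator (fun _ => (1 : ℝ)) x|) + ∫ x, (mollify S ρ x - v x) :=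
        integral_add hu_abs huv
    _ ≤ η := by linarith

end Gradient

end Mollification

/-! ### The Hausdorff measure of the unit sphere -/

section Sphere

open scoped Pointwise

theorem norm_inv_norm_smul_sub_le {E : Type*} [NormedAddCommGroup E] [InnerProductSpace ℝ E]
    {a b : E} (ha : 1 ≤ ‖a‖) (hb : 1 ≤ ‖b‖) : ‖‖a‖⁻¹ • a - ‖b‖⁻¹ • b‖ ≤ ‖a - b‖ := by
  have ha0 : 0 < ‖a‖ := one_pos.trans_le ha
  have hb0 : 0 < ‖b‖ := one_pos.trans_le hb
  refine le_of_sq_le_sq ?_ (norm_nonneg _)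
  have hunit : ‖a‖ * ‖b‖ * ‖‖a‖⁻¹ • a - ‖b‖⁻¹ • b‖ ^ 2 = 2 * (‖a‖ * ‖b‖) - 2 * inner ℝ a b := by
    rw [norm_sub_sq_real, norm_smul, norm_smul, norm_inv, norm_inv, norm_norm, norm_norm,
      inv_mul_cancel₀ ha0.ne', inv_mul_cancel₀ hb0.ne', real_inner_smul_left, real_inner_smul_right]
    field
  have hle : ‖‖a‖⁻¹ • a - ‖b‖⁻¹ • b‖ ^ 2 ≤ ‖a‖ * ‖b‖ * ‖‖a‖⁻¹ • a - ‖b‖⁻¹ • b‖ ^ 2 :=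
    le_mul_of_one_le_left (sq_nonneg _) (one_le_mul_of_one_le_of_one_le ha hb)
  linarith [norm_sub_sq_real a b, two_mul_le_add_sq ‖a‖ ‖b‖]

/-- The part of the closed unit ball seen from the origin in directions belonging to `T`. -/
def sphericalSector {E : Type*} [NormedAddCommGroup E] [NormedSpace ℝ E] (T : Set E) : Set E :=
  closedBall 0 1 ∩ (fun y => ‖y‖⁻¹ • y) ⁻¹' T

variable {d : ℕ}

theorem measurableSet_sphericalSector {T : Set (𝔼 (d + 1))} (hT : MeasurableSet T) :
    MeasurableSet (sphericalSector T) :=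
  isClosed_closedBall.measurableSet.inter
    (measurableSet_preimage (measurable_norm.inv.smul measurable_id) hT)

/-- The radial projection of the affine hyperplane `L (1, ·)` onto the unit sphere. -/
noncomputable def gnomonic (L : (ℝ × 𝔼 d) ≃L[ℝ] 𝔼 (d + 1)) (w : 𝔼 d) : 𝔼 (d + 1) :=
  ‖L (1, w)‖⁻¹ • L (1, w)

namespace IsOrthogonalSplitting

variable {L : (ℝ × 𝔼 d) ≃L[ℝ] 𝔼 (d + 1)} (hL : IsOrthogonalSplitting L) {T : Set (𝔼 (d + 1))}
  {c : ℝ}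
include hL

theorem one_le_norm_apply_one (w : 𝔼 d) : 1 ≤ ‖L (1, w)‖ :=
  le_of_sq_le_sq (by rw [hL 1 w, one_pow]; exact le_add_of_nonneg_right (sq_nonneg _))
    (norm_nonneg _)

theorem lipschitzWith_gnomonic : LipschitzWith 1 (gnomonic L) := by
  refine LipschitzWith.of_dist_le_mul fun x y => ?_
  rw [NNReal.coe_one, one_mul, dist_eq_norm, dist_eq_norm]
  refine (norm_inv_norm_smul_sub_le (hL.one_le_norm_apply_one x)
    (hL.one_le_norm_apply_one y)).trans_eq ?_
  rw [← map_sub, Prod.mk_sub_mk, sub_self, ← sq_eq_sq₀ (norm_nonneg _) (norm_nonneg _), hL]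
  ring

theorem subset_image_gnomonic (hTs : T ⊆ sphere 0 1) (hc : 0 < c)
    (hTc : ∀ x ∈ T, c ≤ inner ℝ (L (1, 0)) x) : T ⊆ gnomonic L '' (gnomonic L ⁻¹' T) := by
  rw [image_preimage_eq_inter_range]
  refine subset_inter subset_rfl fun x hx => ?_
  obtain ⟨⟨t, y⟩, rfl⟩ := L.surjective x
  have ht : 0 < t := hc.trans_le (hL.inner_axis t y ▸ hTc _ hx)
  have hnorm : ‖L (t, y)‖ = 1 := mem_sphere_zero_iff_norm.1 (hTs hx)
  have hscale : L (1, t⁻¹ • y) = t⁻¹ • L (t, y) := by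
    rw [← map_smul]
    simp [ht.ne']
  refine ⟨t⁻¹ • y, ?_⟩
  rw [gnomonic, hscale, norm_smul, hnorm, norm_inv, Real.norm_of_nonneg ht.le, mul_one, inv_inv,
    smul_inv_smul₀ ht.ne']

theorem hausdorffMeasure_le_volume_preimage_gnomonic (hTs : T ⊆ sphere 0 1) (hc : 0 < c)
    (hTc : ∀ x ∈ T, c ≤ inner ℝ (L (1, 0)) x) :
    μH[d] T ≤ hausdorffFactor d * volume (gnomonic L ⁻¹' T) := by
  rw [← hausdorffMeasure_eq_mul_volume]
  refine (measure_mono (hL.subset_image_gnomonic hTs hc hTc)).trans ?_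
  simpa using hL.lipschitzWith_gnomonic.hausdorffMeasure_image_le (Nat.cast_nonneg d) _

theorem smul_preimage_gnomonic_subset (hTc : ∀ x ∈ T, c ≤ inner ℝ (L (1, 0)) x) {t : ℝ}
    (ht : t ∈ Ioc 0 c) : t • gnomonic L ⁻¹' T ⊆ {y | L (t, y) ∈ sphericalSector T} := by
  rintro _ ⟨w, hw, rfl⟩
  have hscale : L (t, t • w) = t • L (1, w) := by
    rw [← map_smul]
    simp
  have hpos : 0 < ‖L (1, w)‖ := one_pos.trans_le (hL.one_le_norm_apply_one w)
  have hinner : c ≤ ‖L (1, w)‖⁻¹ := by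
    simpa only [gnomonic, real_inner_smul_right, hL.inner_axis, mul_one] using hTc _ hw
  have hball : ‖L (t, t • w)‖ ≤ 1 := by
    rw [hscale, norm_smul, Real.norm_of_nonneg ht.1.le]
    exact (le_inv_mul_iff₀' hpos).1 (by simpa using ht.2.trans hinner)
  have hdir : ‖L (t, t • w)‖⁻¹ • L (t, t • w) = gnomonic L w := by
    rw [hscale, norm_smul, Real.norm_of_nonneg ht.1.le, mul_inv, smul_smul, mul_right_comm,
      inv_mul_cancel₀ ht.1.ne', one_mul, gnomonic]
  exact ⟨mem_closedBall_zero_iff.2 hball, mem_preimage.2 (hdir ▸ hw)⟩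

theorem mul_volume_preimage_gnomonic_le (hT : MeasurableSet T) (hc : 0 < c)
    (hTc : ∀ x ∈ T, c ≤ inner ℝ (L (1, 0)) x) :
    ENNReal.ofReal (c ^ (d + 1) / (d + 1)) * volume (gnomonic L ⁻¹' T) ≤
      volume (sphericalSector T) := by
  have hemb : MeasurableEmbedding L := L.toHomeomorph.measurableEmbedding
  have hslice : ∀ t ∈ Ioc 0 c, ENNReal.ofReal (t ^ d) * volume (gnomonic L ⁻¹' T) ≤
      volume {y | L (t, y) ∈ sphericalSector T} := fun t ht => by
    refine le_of_eq_of_le ?_ (measure_mono (hL.smul_preimage_gnomonic_subset hTc ht))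
    rw [Measure.addHaar_smul, finrank_euclideanSpace_fin, abs_of_nonneg (pow_nonneg ht.1.le _)]
  have hpow : ∫⁻ t in Ioc 0 c, ENNReal.ofReal (t ^ d) = ENNReal.ofReal (c ^ (d + 1) / (d + 1)) := by
    rw [← ofReal_integral_eq_lintegral_ofReal
        (((continuous_pow d).intervalIntegrable 0 c).1), ← intervalIntegral.integral_of_le hc.le,
      integral_pow]
    · simp
    · filter_upwards [ae_restrict_mem measurableSet_Ioc] with t ht using pow_nonneg ht.1.le _
  calc ENNReal.ofReal (c ^ (d + 1) / (d + 1)) * volume (gnomonic L ⁻¹' T)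
      = ∫⁻ t in Ioc 0 c, ENNReal.ofReal (t ^ d) * volume (gnomonic L ⁻¹' T) := by
        rw [lintegral_mul_const _ (by fun_prop), hpow]
    _ ≤ ∫⁻ t in Ioc 0 c, volume {y | L (t, y) ∈ sphericalSector T} :=
        setLIntegral_mono' measurableSet_Ioc hslice
    _ ≤ ∫⁻ t, volume {y | L (t, y) ∈ sphericalSector T} := setLIntegral_le_lintegral _ _
    _ = volume (sphericalSector T) := by
        rw [← hL.measurePreserving.measure_preimage_emb hemb, Measure.volume_eq_prod,
          Measure.prod_apply (hemb.measurable (measurableSet_sphericalSector hT))]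
        rfl

end IsOrthogonalSplitting

theorem mul_hausdorffMeasure_le_volume_sphericalSector {T : Set (𝔼 (d + 1))} (hT : MeasurableSet T)
    (hTs : T ⊆ sphere 0 1) {δ : ℝ} (hTδ : ∀ x ∈ T, ∀ y ∈ T, dist x y ≤ δ)
    (hδ : 0 < 1 - δ ^ 2 / 2) :
    ENNReal.ofReal ((1 - δ ^ 2 / 2) ^ (d + 1)) * μH[d] T ≤
      hausdorffFactor d * ENNReal.ofReal (d + 1) * volume (sphericalSector T) := by
  rcases T.eq_empty_or_nonempty with rfl | ⟨θ, hθT⟩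
  · simp
  have hθ : ‖θ‖ = 1 := mem_sphere_zero_iff_norm.1 (hTs hθT)
  obtain ⟨L, hL, rfl⟩ := exists_isOrthogonalSplitting (F := 𝔼 d) (by simp) hθ
  set c := 1 - δ ^ 2 / 2
  have hTc : ∀ x ∈ T, c ≤ inner ℝ (L (1, 0)) x := fun x hx => by
    have hdist : ‖L (1, 0) - x‖ ^ 2 ≤ δ ^ 2 := by
      gcongr
      exact dist_eq_norm (L (1, 0)) x ▸ hTδ _ hθT x hx
    rw [norm_sub_sq_real, hθ, mem_sphere_zero_iff_norm.1 (hTs hx)] at hdist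
    simp only [c]
    linarith
  have hsplit : ENNReal.ofReal (c ^ (d + 1)) =
      ENNReal.ofReal (d + 1) * ENNReal.ofReal (c ^ (d + 1) / (d + 1)) := by
    rw [← ENNReal.ofReal_mul (by positivity), mul_div_cancel₀ _ (by positivity)]
  calc ENNReal.ofReal (c ^ (d + 1)) * μH[d] T
      ≤ ENNReal.ofReal (c ^ (d + 1)) * (hausdorffFactor d * volume (gnomonic L ⁻¹' T)) := by
        gcongr
        exact hL.hausdorffMeasure_le_volume_preimage_gnomonic hTs hδ hTc
    _ = hausdorffFactor d * ENNReal.ofReal (d + 1) *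
          (ENNReal.ofReal (c ^ (d + 1) / (d + 1)) * volume (gnomonic L ⁻¹' T)) := by
        rw [hsplit]
        ring
    _ ≤ _ := by
        gcongr
        exact hL.mul_volume_preimage_gnomonic_le hT hδ hTc

theorem mul_hausdorffMeasure_sphere_le (d : ℕ) {δ : ℝ} (hδ : δ ∈ Ioo (0 : ℝ) 1) :
    ENNReal.ofReal ((1 - δ ^ 2 / 2) ^ (d + 1)) * μH[d] (sphere (0 : 𝔼 (d + 1)) 1) ≤
      hausdorffFactor d * ENNReal.ofReal (d + 1) * volume (closedBall (0 : 𝔼 (d + 1)) 1) := by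
  obtain ⟨B, hBm, hBbdd, hBdiam, hBcover, hBdisj⟩ :=
    SeparableSpace.exists_measurable_partition_diam_le (𝔼 (d + 1)) hδ.1
  let T : ℕ → Set (𝔼 (d + 1)) := fun i => sphere 0 1 ∩ B i
  have hTm : ∀ i, MeasurableSet (T i) := fun i => isClosed_sphere.measurableSet.inter (hBm i)
  have hTdisj : Pairwise (Function.onFun Disjoint T) := fun i j hij =>
    (hBdisj hij).mono inter_subset_right inter_subset_right
  have hcover : sphere (0 : 𝔼 (d + 1)) 1 = ⋃ i, T i := by
    rw [← inter_iUnion, hBcover, inter_univ]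
  have hpiece : ∀ i, ENNReal.ofReal ((1 - δ ^ 2 / 2) ^ (d + 1)) * μH[d] (T i) ≤
      hausdorffFactor d * ENNReal.ofReal (d + 1) * volume (sphericalSector (T i)) := fun i =>
    mul_hausdorffMeasure_le_volume_sphericalSector (hTm i) inter_subset_left
      (fun x hx y hy => (dist_le_diam_of_mem (hBbdd i) hx.2 hy.2).trans (hBdiam i))
      (by nlinarith [hδ.1, hδ.2])
  have hdisj : Pairwise (Function.onFun Disjoint fun i => sphericalSector (T i)) := fun i j hij =>
    ((hTdisj hij).preimage _).mono inter_subset_right inter_subset_right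
  rw [hcover, measure_iUnion hTdisj hTm, ← ENNReal.tsum_mul_left]
  refine (ENNReal.tsum_le_tsum hpiece).trans ?_
  rw [ENNReal.tsum_mul_left, ← measure_iUnion hdisj fun i => measurableSet_sphericalSector (hTm i)]
  gcongr
  exact iUnion_subset fun i => inter_subset_left

theorem hausdorffMeasure_sphere_le (d : ℕ) :
    μH[d] (sphere (0 : 𝔼 (d + 1)) 1) ≤
      hausdorffFactor d * ENNReal.ofReal ((d + 1) * ballVolume (d + 1)) := by
  have hball : volume (closedBall (0 : 𝔼 (d + 1)) 1) = ENNReal.ofReal (ballVolume (d + 1)) := by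
    rw [Measure.addHaar_closedBall_eq_addHaar_ball, ballVolume,
      ofReal_measureReal measure_ball_lt_top.ne]
  have hlim : Tendsto (fun δ : ℝ => ENNReal.ofReal ((1 - δ ^ 2 / 2) ^ (d + 1)) *
      μH[d] (sphere (0 : 𝔼 (d + 1)) 1)) (𝓝[>] 0) (𝓝 (1 * μH[d] (sphere (0 : 𝔼 (d + 1)) 1))) := by
    refine ENNReal.Tendsto.mul_const ?_ (.inl one_ne_zero)
    have hcont : Continuous fun δ : ℝ => ENNReal.ofReal ((1 - δ ^ 2 / 2) ^ (d + 1)) :=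
      ENNReal.continuous_ofReal.comp (by fun_prop)
    simpa using (hcont.tendsto 0).mono_left nhdsWithin_le_nhds
  rw [one_mul] at hlim
  rw [ENNReal.ofReal_mul (by positivity), ← hball, ← mul_assoc]
  exact le_of_tendsto hlim (by
    filter_upwards [Ioo_mem_nhdsGT one_pos] with δ hδ using mul_hausdorffMeasure_sphere_le d hδ)

end Sphere

/-! ### Half-space volumes of almost minimizing sets -/

section HalfSpace

variable {E : Type*} [NormedAddCommGroup E] [InnerProductSpace ℝ E]

/-- The closed half-space of points whose component along `θ` is at most `t`. -/
def halfSpace (θ : E) (t : ℝ) : Set E :=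
  {x | inner ℝ θ x ≤ t}

theorem mem_halfSpace {θ : E} {t : ℝ} {x : E} : x ∈ halfSpace θ t ↔ inner ℝ θ x ≤ t :=
  Iff.rfl

theorem halfSpace_subset_halfSpace (θ : E) {s t : ℝ} (h : s ≤ t) :
    halfSpace θ s ⊆ halfSpace θ t := fun _ hx => le_trans hx h

theorem measurableSet_halfSpace [MeasurableSpace E] [BorelSpace E] (θ : E) (t : ℝ) :
    MeasurableSet (halfSpace θ t) :=
  (isClosed_le (by fun_prop) continuous_const).measurableSet

end HalfSpace

section IndicatorApproximation

variable {X : Type*} [MeasurableSpace X] {μ : Measure X} {S H : Set X} {f g : X → ℝ} {C : ℝ}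

theorem abs_setIntegral_sub_measureReal_le (hS : MeasurableSet S) (hSfin : μ S ≠ ⊤)
    (hf : Integrable f μ) (hg : Integrable g μ)
    (hfg : ∀ x, |f x - S.indicator (fun _ => (1 : ℝ)) x| ≤
      C * |g x - S.indicator (fun _ => (1 : ℝ)) x|) :
    |(∫ x in H, f x ∂μ) - μ.real (S ∩ H)| ≤
      C * ∫ x, |g x - S.indicator (fun _ => (1 : ℝ)) x| ∂μ := by
  have hind : Integrable (S.indicator fun _ => (1 : ℝ)) μ :=
    (integrable_indicator_iff hS).2 (integrableOn_const hSfin)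
  have hbound := (hg.sub hind).abs.const_mul C
  have hmeasure : μ.real (S ∩ H) = ∫ x in H, S.indicator (fun _ => (1 : ℝ)) x ∂μ := by
    rw [integral_indicator hS, setIntegral_const, measureReal_restrict_apply hS, smul_eq_mul,
      mul_one]
  rw [hmeasure, ← integral_sub hf.integrableOn hind.integrableOn, ← integral_const_mul]
  calc |∫ x in H, (f x - S.indicator (fun _ => (1 : ℝ)) x) ∂μ|
      ≤ ∫ x in H, |f x - S.indicator (fun _ => (1 : ℝ)) x| ∂μ := abs_integral_le_integral_abs
    _ ≤ ∫ x in H, C * |g x - S.indicator (fun _ => (1 : ℝ)) x| ∂μ :=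
        setIntegral_mono (hf.sub hind).abs.integrableOn hbound.integrableOn hfg
    _ ≤ _ := setIntegral_le_integral hbound (.of_forall fun x => (abs_nonneg _).trans (hfg x))

theorem abs_rpow_sub_le_two_mul {u q : ℝ} (hu : u ∈ Icc (0 : ℝ) 1) (hq : q ∈ Icc (1 : ℝ) 2) {i : ℝ}
    (hi : i = 0 ∨ i = 1) : |u ^ q - i| ≤ 2 * |u - i| := by
  have hpow0 : 0 ≤ u ^ q := Real.rpow_nonneg hu.1 q
  have hpow_le : u ^ q ≤ u := by
    simpa using Real.rpow_le_rpow_of_exponent_ge' hu.1 hu.2 zero_le_one hq.1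
  have hsq_le : u ^ 2 ≤ u ^ q := by
    simpa using Real.rpow_le_rpow_of_exponent_ge' hu.1 hu.2 (zero_le_one.trans hq.1) hq.2
  rcases hi with rfl | rfl
  · rw [sub_zero, sub_zero, abs_of_nonneg hpow0, abs_of_nonneg hu.1]
    linarith [hu.1]
  · rw [abs_of_nonpos (by linarith [hu.2]), abs_of_nonpos (by linarith [hu.2])]
    nlinarith [sq_nonneg (u - 1)]

end IndicatorApproximation

section AlmostMinimizing

variable {d : ℕ}

theorem IsOrthogonalSplitting.setIntegral_Iic_sliceIntegral {L : (ℝ × 𝔼 d) ≃L[ℝ] 𝔼 (d + 1)}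
    (hL : IsOrthogonalSplitting L) {f : 𝔼 (d + 1) → ℝ} (hf : Integrable f) (t : ℝ) :
    ∫ s in Iic t, sliceIntegral L f s = ∫ x in halfSpace (L (1, 0)) t, f x := by
  have hmeas := measurableSet_halfSpace (L (1, 0)) t
  have hindicator s y : (halfSpace (L (1, 0)) t).indicator f (L (s, y)) =
      (Iic t).indicator (fun s => f (L (s, y))) s := by
    simp only [indicator, mem_halfSpace, hL.inner_axis, mem_Iic]
  have hint : Integrable fun p => (halfSpace (L (1, 0)) t).indicator f (L p) :=
    (hL.measurePreserving.integrable_comp_emb L.toHomeomorph.measurableEmbedding).2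
      (hf.indicator hmeas)
  rw [← integral_indicator hmeas, ← hL.integral_comp, Measure.volume_eq_prod, integral_prod _ hint,
    ← integral_indicator measurableSet_Iic]
  refine integral_congr_ae (.of_forall fun s => ?_)
  by_cases hs : s ∈ Iic t <;> simp [hindicator, hs, sliceIntegral]

/-- `u` is a smooth compactly supported approximation of the indicator function of `S`, with error
`η` in `L¹` and with total variation at most `P`. -/
structure IsSmoothApprox (S : Set (𝔼 d)) (P η : ℝ) (u : 𝔼 d → ℝ) : Prop where
  contDiff : ContDiff ℝ 1 u
  hasCompactSupport : HasCompactSupport u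
  mem_Icc : ∀ x, u x ∈ Icc (0 : ℝ) 1
  integral_abs_sub_le : ∫ x, |u x - S.indicator (fun _ => (1 : ℝ)) x| ≤ η
  variation_le : ∫ x, ‖fderiv ℝ u x‖ ≤ P

namespace IsSmoothApprox

section Measure

variable {S : Set (𝔼 d)} {P η : ℝ} {u : 𝔼 d → ℝ} (h : IsSmoothApprox S P η u)
include h

theorem integrable : Integrable u :=
  h.contDiff.continuous.integrable_of_hasCompactSupport h.hasCompactSupport

theorem continuous_rpow {q : ℝ} (hq : 0 ≤ q) : Continuous fun x => u x ^ q :=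
  h.contDiff.continuous.rpow_const fun _ => .inr hq

theorem integrable_rpow {q : ℝ} (hq : 0 < q) : Integrable fun x => u x ^ q :=
  (h.continuous_rpow hq.le).integrable_of_hasCompactSupport
    (hasCompactSupport_rpow h.hasCompactSupport hq.ne')

theorem abs_setIntegral_sub_le (hS : MeasurableSet S) (hSfin : volume S ≠ ⊤) (H : Set (𝔼 d)) :
    |(∫ x in H, u x) - volume.real (S ∩ H)| ≤ η :=
  (abs_setIntegral_sub_measureReal_le hS hSfin h.integrable h.integrable
    fun _ => (one_mul _).ge).trans ((one_mul _).trans_le h.integral_abs_sub_le)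

theorem abs_setIntegral_rpow_sub_le (hS : MeasurableSet S) (hSfin : volume S ≠ ⊤) {q : ℝ}
    (hq : q ∈ Icc (1 : ℝ) 2) (H : Set (𝔼 d)) :
    |(∫ x in H, u x ^ q) - volume.real (S ∩ H)| ≤ 2 * η := by
  refine (abs_setIntegral_sub_measureReal_le hS hSfin
    (h.integrable_rpow (one_pos.trans_le hq.1)) h.integrable fun x =>
      abs_rpow_sub_le_two_mul (h.mem_Icc x) hq ?_).trans ?_
  · by_cases hx : x ∈ S <;> simp [hx]
  · gcongr
    exact h.integral_abs_sub_le

end Measure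

variable {S : Set (𝔼 (d + 1))} {P η : ℝ} {u : 𝔼 (d + 1) → ℝ} (h : IsSmoothApprox S P η u)
  {L : (ℝ × 𝔼 d) ≃L[ℝ] 𝔼 (d + 1)}
include h

theorem isSliceProfile [NeZero d] (hL : IsOrthogonalSplitting L) :
    IsSliceProfile d (sliceIntegral L fun x => u x ^ (1 + (d : ℝ)⁻¹)) (sliceIntegral L u)
      (sliceGradIntegral L u) P :=
  { Isoperimetric.isSliceProfile (gagliardoNirenberg d) hL h.contDiff h.hasCompactSupport
      fun x => (h.mem_Icc x).1 with
    integral_le := fun _ hG hG1 => (hL.integral_deriv_mul_sliceIntegral_add_le h.contDiff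
      h.hasCompactSupport hG hG1).trans h.variation_le }

theorem sliceIntegral_rpow_le {q : ℝ} (hq : 1 ≤ q) (t : ℝ) :
    sliceIntegral L (fun x => u x ^ q) t ≤ sliceIntegral L u t := by
  have hcont : Continuous fun y => u (L (t, y)) := h.contDiff.continuous.comp (by fun_prop)
  have hsupp : HasCompactSupport fun y => u (L (t, y)) :=
    hasCompactSupport_slice_right (hasCompactSupport_comp_splitting h.hasCompactSupport) t
  refine integral_mono_of_nonneg (.of_forall fun y => Real.rpow_nonneg (h.mem_Icc _).1 _)
    (hcont.integrable_of_hasCompactSupport hsupp) (.of_forall fun y => ?_)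
  simpa using Real.rpow_le_rpow_of_exponent_ge' (h.mem_Icc (L (t, y))).1 (h.mem_Icc _).2
    zero_le_one hq

end IsSmoothApprox

theorem one_add_inv_mem_Icc : 1 + (d : ℝ)⁻¹ ∈ Icc (1 : ℝ) 2 := by
  have hinv : (d : ℝ)⁻¹ ≤ 1 := Nat.cast_inv_le_one d
  exact ⟨le_add_of_nonneg_right (by positivity), by linarith⟩

theorem tendsto_of_abs_sub_le {ι : Type*} {l : Filter ι} {f g ε : ι → ℝ} {b : ℝ}
    (hfg : ∀ i, |f i - g i| ≤ ε i) (hε : Tendsto ε l (𝓝 0)) (hg : Tendsto g l (𝓝 b)) :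
    Tendsto f l (𝓝 b) := by
  simpa using (squeeze_zero_norm hfg hε).add hg

/-- Asymptotically, the half-spaces orthogonal to `θ` cut from the sets `E j`, seen from the height
`c j`, the same volumes as from the unit ball. -/
def HasBallCaps (E : ℕ → Set (𝔼 (d + 1))) (θ : 𝔼 (d + 1)) (c : ℕ → ℝ) : Prop :=
  ∀ s ∈ Ioo (-1 : ℝ) 1,
    Tendsto (fun j => volume.real (E j ∩ halfSpace θ (c j + s))) atTop (𝓝 (ballCap d s))

variable [NeZero d] {E : ℕ → Set (𝔼 (d + 1))} {P : ℕ → ℝ}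

theorem isMinimizingProfile_of_isSmoothApprox (hE : ∀ j, MeasurableSet (E j))
    (hvol : ∀ j, volume (E j) = volume (ball (0 : 𝔼 (d + 1)) 1)) {η : ℕ → ℝ}
    {u : ℕ → 𝔼 (d + 1) → ℝ} (hu : ∀ j, IsSmoothApprox (E j) (P j) (η j) (u j))
    (hη : ∀ j, 2 * η j < ballVolume (d + 1)) (hη0 : Tendsto η atTop (𝓝 0))
    (hP : Tendsto P atTop (𝓝 ((d + 1) * ballVolume (d + 1))))
    {L : (ℝ × 𝔼 d) ≃L[ℝ] 𝔼 (d + 1)} (hL : IsOrthogonalSplitting L) :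
    IsMinimizingProfile d (fun j => sliceIntegral L fun x => u j x ^ (1 + (d : ℝ)⁻¹))
      (fun j => sliceIntegral L (u j)) (fun j => sliceGradIntegral L (u j)) P := by
  have hfin j : volume (E j) ≠ ⊤ := hvol j ▸ measure_ball_lt_top.ne
  have hreal j : volume.real (E j) = ballVolume (d + 1) := congrArg ENNReal.toReal (hvol j)
  have hprofile j := (hu j).isSliceProfile hL
  have hpower j : |(∫ t, sliceIntegral L (fun x => u j x ^ (1 + (d : ℝ)⁻¹)) t) -
      ballVolume (d + 1)| ≤ 2 * η j := by
    rw [hL.integral_sliceIntegral ((hu j).continuous_rpow (by positivity))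
      (hasCompactSupport_rpow (hu j).hasCompactSupport (by positivity))]
    simpa [hreal] using
      (hu j).abs_setIntegral_rpow_sub_le (hE j) (hfin j) one_add_inv_mem_Icc univ
  have hslice j : |(∫ t, sliceIntegral L (u j) t) - ballVolume (d + 1)| ≤ η j := by
    rw [hL.integral_sliceIntegral (hu j).contDiff.continuous (hu j).hasCompactSupport]
    simpa [hreal] using (hu j).abs_setIntegral_sub_le (hE j) (hfin j) univ
  have hpower_lim := tendsto_of_abs_sub_le hpower (by simpa using hη0.const_mul 2)
    tendsto_const_nhds
  refine ⟨hprofile, fun j => (hu j).sliceIntegral_rpow_le one_add_inv_mem_Icc.1,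
    fun j => by linarith [hη j, (abs_le.1 (hpower j)).1], hpower_lim, ?_, hP, fun j t => ?_⟩
  · have hsub j := integral_sub (μ := volume)
      ((hprofile j).continuous_slice.integrable_of_hasCompactSupport
        (hprofile j).hasCompactSupport_slice)
      ((hprofile j).continuous_power.integrable_of_hasCompactSupport
        (hprofile j).hasCompactSupport_power)
    simp only [hsub]
    simpa using (tendsto_of_abs_sub_le hslice hη0 tendsto_const_nhds).sub hpower_lim
  · refine (const_mul_rpow_add_rpow_le hL (hu j).contDiff (hu j).hasCompactSupport
      (fun x => ((hu j).mem_Icc x).1) t).trans ?_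
    gcongr
    exact (hu j).variation_le

theorem exists_hasBallCaps_of_isSmoothApprox (hE : ∀ j, MeasurableSet (E j))
    (hvol : ∀ j, volume (E j) = volume (ball (0 : 𝔼 (d + 1)) 1)) {η : ℕ → ℝ}
    {u : ℕ → 𝔼 (d + 1) → ℝ} (hu : ∀ j, IsSmoothApprox (E j) (P j) (η j) (u j))
    (hη : ∀ j, 2 * η j < ballVolume (d + 1)) (hη0 : Tendsto η atTop (𝓝 0))
    (hP : Tendsto P atTop (𝓝 ((d + 1) * ballVolume (d + 1)))) {θ : 𝔼 (d + 1)} (hθ : ‖θ‖ = 1) :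
    ∃ c, HasBallCaps E θ c := by
  obtain ⟨L, hL, rfl⟩ := exists_isOrthogonalSplitting (F := 𝔼 d) (by simp) hθ
  obtain ⟨c, hc⟩ :=
    (isMinimizingProfile_of_isSmoothApprox hE hvol hu hη hη0 hP hL).exists_tendsto_integral_Iic
  refine ⟨c, fun s hs => tendsto_of_abs_sub_le (fun j => ?_) (by simpa using hη0.const_mul 2)
    (hc s hs)⟩
  rw [hL.setIntegral_Iic_sliceIntegral ((hu j).integrable_rpow (by positivity)), abs_sub_comm]
  exact (hu j).abs_setIntegral_rpow_sub_le (hE j) (hvol j ▸ measure_ball_lt_top.ne)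
    one_add_inv_mem_Icc _

theorem exists_hasBallCaps (hE : ∀ j, MeasurableSet (E j))
    (hvol : ∀ j, volume (E j) = volume (ball (0 : 𝔼 (d + 1)) 1))
    (hfrontier : ∀ j, μH[d] (frontier (E j)) ≠ ⊤)
    (hperim : ∀ j, ((hausdorffFactor d)⁻¹ * μH[d] (frontier (E j))).toReal ≤ P j)
    (hP : Tendsto P atTop (𝓝 ((d + 1) * ballVolume (d + 1)))) {θ : 𝔼 (d + 1)} (hθ : ‖θ‖ = 1) :
    ∃ c, HasBallCaps E θ c := by
  have hω := ballVolume_pos (d + 1)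
  let η : ℕ → ℝ := fun j => ballVolume (d + 1) / 4 * (1 / (j + 1))
  have hηpos j : 0 < η j := by positivity
  have hη_lt j : 2 * η j < ballVolume (d + 1) := by
    have hle : 1 / ((j : ℝ) + 1) ≤ 1 := div_le_one_of_le₀ (by simp) (by positivity)
    simp only [η]
    nlinarith
  have hη0 : Tendsto η atTop (𝓝 0) := by
    simpa [η] using tendsto_one_div_add_atTop_nhds_zero_nat.const_mul (ballVolume (d + 1) / 4)
  choose u hsmooth hsupp hIcc hclose hvar using fun j =>
    exists_contDiff_approx_indicator (hE j) (hfrontier j) (hvol j ▸ measure_ball_lt_top.ne)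
      (hηpos j)
  have hu j : IsSmoothApprox (E j) (P j + η j) (η j) (u j) :=
    ⟨hsmooth j, hsupp j, hIcc j, hclose j, (hvar j).trans (by gcongr; exact hperim j)⟩
  exact exists_hasBallCaps_of_isSmoothApprox hE hvol hu hη_lt hη0 (by simpa using hP.add hη0) hθ

end AlmostMinimizing

/-! ### Common centre of the half-space volumes -/

section Clamp

/-- The truncation of `y` to the interval `[-1, 1]`. -/
def unitClamp (y : ℝ) : ℝ :=
  max (-1) (min 1 y)

theorem continuous_unitClamp : Continuous unitClamp := by
  unfold unitClamp
  fun_prop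

theorem abs_unitClamp_le (y : ℝ) : |unitClamp y| ≤ 1 :=
  abs_le.2 ⟨le_max_left _ _, max_le (by norm_num) (min_le_left _ _)⟩

theorem unitClamp_of_abs_le {y : ℝ} (hy : |y| ≤ 1) : unitClamp y = y := by
  rw [unitClamp, min_eq_right (abs_le.1 hy).2, max_eq_right (abs_le.1 hy).1]

theorem unitClamp_eq_one_sub_integral (y : ℝ) :
    unitClamp y = 1 - ∫ s in Icc (-1 : ℝ) 1, (Ici y).indicator (fun _ => (1 : ℝ)) s := by
  have hinter : Ici y ∩ Icc (-1) 1 = Icc (max y (-1)) 1 := by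
    rw [← Ici_inter_Iic, ← inter_assoc, Ici_inter_Ici, Ici_inter_Iic]
  rw [integral_indicator measurableSet_Ici, setIntegral_const,
    measureReal_restrict_apply measurableSet_Ici, hinter, Real.volume_real_Icc, smul_eq_mul,
    mul_one, unitClamp]
  grind

variable {E : Type*} [NormedAddCommGroup E] [InnerProductSpace ℝ E] [MeasurableSpace E]
  [BorelSpace E] [SecondCountableTopology E]

theorem setIntegral_unitClamp_inner_sub {μ : Measure E} {S : Set E} (hS : μ S ≠ ⊤) (θ : E) (c : ℝ) :
    ∫ x in S, unitClamp (inner ℝ θ x - c) ∂μ =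
      μ.real S - ∫ s in Icc (-1 : ℝ) 1, μ.real (S ∩ halfSpace θ (c + s)) := by
  have : IsFiniteMeasure (μ.restrict S) := isFiniteMeasure_restrict.2 hS
  have hmeas : MeasurableSet {p : E × ℝ | inner ℝ θ p.1 - c ≤ p.2} :=
    (isClosed_le (by fun_prop) (by fun_prop)).measurableSet
  have hint : Integrable (fun p : E × ℝ => (Ici (inner ℝ θ p.1 - c)).indicator
      (fun _ => (1 : ℝ)) p.2) ((μ.restrict S).prod (volume.restrict (Icc (-1) 1))) :=
    (integrable_const (1 : ℝ)).indicator hmeas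
  have hswap : ∀ s x, (Ici (inner ℝ θ x - c)).indicator (fun _ => (1 : ℝ)) s =
      (halfSpace θ (c + s)).indicator (fun _ => 1) x := fun s x => by
    simp only [indicator, mem_Ici, mem_halfSpace, sub_le_iff_le_add']
  have hslice s : ∫ x in S, (halfSpace θ (c + s)).indicator (fun _ => (1 : ℝ)) x ∂μ =
      μ.real (S ∩ halfSpace θ (c + s)) := by
    rw [integral_indicator (measurableSet_halfSpace _ _), setIntegral_const,
      measureReal_restrict_apply (measurableSet_halfSpace _ _), inter_comm, smul_eq_mul, mul_one]
  simp only [unitClamp_eq_one_sub_integral]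
  rw [integral_sub (integrable_const _) hint.integral_prod_left, integral_integral_swap hint,
    setIntegral_const, smul_eq_mul, mul_one]
  simp only [hswap, hslice]

end Clamp

section Slab

variable {E : Type*} [NormedAddCommGroup E] [InnerProductSpace ℝ E]

/-- The slab of half-width `1` orthogonal to `θ` around the height `c`. -/
def slab (θ : E) (c : ℝ) : Set E :=
  {x | |inner ℝ θ x - c| ≤ 1}

theorem measurableSet_slab [MeasurableSpace E] [BorelSpace E] (θ : E) (c : ℝ) :
    MeasurableSet (slab θ c) :=
  (isClosed_le (by fun_prop) continuous_const).measurableSet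

theorem compl_slab_subset (θ : E) (c : ℝ) {s : ℝ} (hs : s ≤ 1) :
    (slab θ c)ᶜ ⊆ halfSpace θ (c - s) ∪ (halfSpace θ (c + s))ᶜ := fun x hx => by
  simp only [slab, mem_compl_iff, mem_ofPred_eq, not_le, lt_abs] at hx
  simp only [mem_union, mem_compl_iff, mem_halfSpace, not_le]
  rcases hx with hx | hx
  · right; linarith
  · left; linarith

theorem sum_mul_setIntegral_inner_sub [MeasurableSpace E] [BorelSpace E]
    {μ : Measure E} {S : Set E} (hS : MeasurableSet S) (hfin : μ S ≠ ⊤)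
    {ι : Type*} [Fintype ι] {ψ : ι → E} {b : ι → ℝ} (hslab : ∀ i, S ⊆ slab (ψ i) (b i))
    {w : ι → ℝ} (hw : ∑ i, w i • ψ i = 0) :
    ∑ i, w i * ∫ x in S, (inner ℝ (ψ i) x - b i) ∂μ = -(∑ i, w i * b i) * μ.real S := by
  have hint i : IntegrableOn (fun x => inner ℝ (ψ i) x - b i) S μ := by
    refine Measure.integrableOn_of_bounded (M := 1) hfin
      (Continuous.aestronglyMeasurable (by fun_prop)) ?_
    filter_upwards [ae_restrict_mem hS] with x hx using hslab i hx
  have hsum x : ∑ i, w i * (inner ℝ (ψ i) x - b i) = -∑ i, w i * b i := by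
    have hzero : ∑ i, w i * inner ℝ (ψ i) x = 0 := by
      simp only [← real_inner_smul_left, ← sum_inner, hw, inner_zero_left]
    simp only [mul_sub, Finset.sum_sub_distrib, hzero, zero_sub]
  simp only [← integral_const_mul]
  rw [← integral_finsetSum _ fun i _ => (hint i).const_mul (w i)]
  simp only [hsum, setIntegral_const, smul_eq_mul, mul_comm]

end Slab

section Centre

variable {d : ℕ} [NeZero d]

theorem ballCap_add_ballCap_neg (s : ℝ) : ballCap d s + ballCap d (-s) = ballVolume (d + 1) := by
  have hint a b := (continuous_ballSection d).intervalIntegrable (μ := volume) a b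
  have hneg : ballCap d (-s) = ∫ x in s..1, ballSection d x := by
    rw [ballCap, ← intervalIntegral.integral_comp_neg]
    simp only [ballSection_neg]
  rw [hneg, ballCap, intervalIntegral.integral_add_adjacent_intervals (hint _ _) (hint _ _),
    integral_ballSection]

theorem integral_ballCap : ∫ s in (-1)..1, ballCap d s = ballVolume (d + 1) := by
  have hcont := continuous_ballCap d
  have hcont_neg : Continuous fun s => ballCap d (-s) := hcont.comp continuous_neg
  have hreflect : ∫ s in (-1)..1, ballCap d (-s) = ∫ s in (-1)..1, ballCap d s := by
    rw [intervalIntegral.integral_comp_neg, neg_neg]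
  have hsum : ∫ s in (-1)..1, (ballCap d s + ballCap d (-s)) = 2 * ballVolume (d + 1) := by
    simp only [ballCap_add_ballCap_neg, intervalIntegral.integral_const, smul_eq_mul]
    norm_num
  rw [intervalIntegral.integral_add (hcont.intervalIntegrable _ _)
    (hcont_neg.intervalIntegrable _ _), hreflect] at hsum
  linarith

namespace HasBallCaps

variable {E : ℕ → Set (𝔼 (d + 1))} (hvol : ∀ j, volume (E j) = volume (ball (0 : 𝔼 (d + 1)) 1))
include hvol

theorem tendsto_integral_measureReal_inter {θ : 𝔼 (d + 1)} {c : ℕ → ℝ} (h : HasBallCaps E θ c) :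
    Tendsto (fun j => ∫ s in Icc (-1 : ℝ) 1, volume.real (E j ∩ halfSpace θ (c j + s))) atTop
      (𝓝 (ballVolume (d + 1))) := by
  have hfin j : volume (E j) ≠ ⊤ := hvol j ▸ measure_ball_lt_top.ne
  have hmono j : Monotone fun s => volume.real (E j ∩ halfSpace θ (c j + s)) := fun s t hst =>
    measureReal_mono (inter_subset_inter_right _ (halfSpace_subset_halfSpace θ (by gcongr)))
      (measure_ne_top_of_subset inter_subset_left (hfin j))
  have hbound j s : ‖volume.real (E j ∩ halfSpace θ (c j + s))‖ ≤ ballVolume (d + 1) := by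
    rw [Real.norm_of_nonneg measureReal_nonneg]
    exact (measureReal_mono inter_subset_left (hfin j)).trans_eq (congrArg ENNReal.toReal (hvol j))
  rw [← integral_ballCap, intervalIntegral.integral_of_le (by norm_num),
    integral_Ioc_eq_integral_Ioo]
  simp only [integral_Icc_eq_integral_Ioo]
  refine tendsto_integral_of_dominated_convergence (fun _ => ballVolume (d + 1))
    (fun j => (hmono j).measurable.aestronglyMeasurable) (integrable_const _)
    (fun j => .of_forall (hbound j)) ?_
  filter_upwards [ae_restrict_mem measurableSet_Ioo] with s hs using h s hs

theorem tendsto_setIntegral_unitClamp {θ : 𝔼 (d + 1)} {c : ℕ → ℝ} (h : HasBallCaps E θ c) :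
    Tendsto (fun j => ∫ x in E j, unitClamp (inner ℝ θ x - c j)) atTop (𝓝 0) := by
  have hreal j : volume.real (E j) = ballVolume (d + 1) := congrArg ENNReal.toReal (hvol j)
  simp only [setIntegral_unitClamp_inner_sub (hvol _ ▸ measure_ball_lt_top.ne), hreal]
  simpa using (h.tendsto_integral_measureReal_inter hvol).const_sub (ballVolume (d + 1))

theorem tendsto_measureReal_diff_slab {θ : 𝔼 (d + 1)} {c : ℕ → ℝ} (h : HasBallCaps E θ c) :
    Tendsto (fun j => volume.real (E j \ slab θ (c j))) atTop (𝓝 0) := by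
  have hfin j : volume (E j) ≠ ⊤ := hvol j ▸ measure_ball_lt_top.ne
  have hreal j : volume.real (E j) = ballVolume (d + 1) := congrArg ENNReal.toReal (hvol j)
  have hle : ∀ s ≤ 1, ∀ j, volume.real (E j \ slab θ (c j)) ≤
      volume.real (E j ∩ halfSpace θ (c j + -s)) +
        (ballVolume (d + 1) - volume.real (E j ∩ halfSpace θ (c j + s))) := fun s hs j => by
    have hsplit := measureReal_inter_add_sdiff (measurableSet_halfSpace θ (c j + s)) (hfin j)
    have hsub : E j \ slab θ (c j) ⊆
        (E j ∩ halfSpace θ (c j + -s)) ∪ (E j \ halfSpace θ (c j + s)) := by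
      rw [sdiff_eq, sdiff_eq, ← inter_union_distrib_left]
      exact inter_subset_inter_right _ (compl_slab_subset θ (c j) hs)
    have hmono := measureReal_mono hsub
      (measure_ne_top_of_subset (union_subset inter_subset_left sdiff_subset) (hfin j))
    linarith [measureReal_union_le (μ := volume) (E j ∩ halfSpace θ (c j + -s))
      (E j \ halfSpace θ (c j + s)), hreal j]
  have hcap : Tendsto (fun s => ballCap d (-s) + (ballVolume (d + 1) - ballCap d s)) (𝓝[<] 1)
      (𝓝 0) := by
    have hcont := continuous_ballCap d
    have hcont' : Continuous fun s => ballCap d (-s) + (ballVolume (d + 1) - ballCap d s) := by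
      fun_prop
    simpa [ballCap_neg_one, ballCap_one] using (hcont'.tendsto 1).mono_left nhdsWithin_le_nhds
  refine tendsto_order.2 ⟨fun a ha => .of_forall fun j => ha.trans_le measureReal_nonneg,
    fun ε hε => ?_⟩
  obtain ⟨s, hsε, hs⟩ :=
    ((hcap.eventually_lt_const hε).and (Ioo_mem_nhdsLT (neg_lt_self one_pos))).exists
  have hlim := (h (-s) ⟨neg_lt_neg hs.2, neg_lt.1 hs.1⟩).add
    ((h s hs).const_sub (ballVolume (d + 1)))
  filter_upwards [hlim.eventually_lt_const hsε] with j hj using (hle s hs.2.le j).trans_lt hj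

theorem tendsto_setIntegral_inner_sub {θ : 𝔼 (d + 1)} {c : ℕ → ℝ} (h : HasBallCaps E θ c)
    {G : ℕ → Set (𝔼 (d + 1))} (hG : ∀ j, MeasurableSet (G j)) (hGE : ∀ j, G j ⊆ E j)
    (hGslab : ∀ j, G j ⊆ slab θ (c j))
    (hGlim : Tendsto (fun j => volume.real (E j \ G j)) atTop (𝓝 0)) :
    Tendsto (fun j => ∫ x in G j, (inner ℝ θ x - c j)) atTop (𝓝 0) := by
  have hfin j : volume (E j) ≠ ⊤ := hvol j ▸ measure_ball_lt_top.ne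
  refine tendsto_of_abs_sub_le (fun j => ?_) hGlim (h.tendsto_setIntegral_unitClamp hvol)
  have hcont : Continuous fun x => unitClamp (inner ℝ θ x - c j) :=
    continuous_unitClamp.comp (by fun_prop)
  have hint : IntegrableOn (fun x => unitClamp (inner ℝ θ x - c j)) (E j) :=
    Measure.integrableOn_of_bounded (M := 1) (hfin j) hcont.aestronglyMeasurable
      (.of_forall fun x => abs_unitClamp_le _)
  have hclamp : ∫ x in G j, (inner ℝ θ x - c j) = ∫ x in G j, unitClamp (inner ℝ θ x - c j) :=
    setIntegral_congr_fun (hG j) fun x hx => (unitClamp_of_abs_le (hGslab j hx)).symm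
  rw [hclamp, abs_sub_comm, ← setIntegral_sdiff (hG j) hint (hGE j)]
  simpa using norm_setIntegral_le_of_norm_le_const (μ := volume) (C := 1)
    (f := fun x => unitClamp (inner ℝ θ x - c j))
    (measure_lt_top_of_subset sdiff_subset (hfin j)) fun x _ => abs_unitClamp_le _

section Family

variable {ι : Type*} {ψ : ι → 𝔼 (d + 1)} {b : ι → ℕ → ℝ}
  (h : ∀ i, HasBallCaps E (ψ i) (b i))
include h

theorem tendsto_measureReal_diff_iInter_slab [Finite ι] :
    Tendsto (fun j => volume.real (E j \ (E j ∩ ⋂ i, slab (ψ i) (b i j)))) atTop (𝓝 0) := by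
  have := Fintype.ofFinite ι
  have hsum : Tendsto (fun j => ∑ i, volume.real (E j \ slab (ψ i) (b i j))) atTop (𝓝 0) := by
    simpa using tendsto_finsetSum Finset.univ fun i _ => (h i).tendsto_measureReal_diff_slab hvol
  refine squeeze_zero (fun j => measureReal_nonneg) (fun j => ?_) hsum
  rw [sdiff_self_inter, sdiff_iInter]
  exact measureReal_iUnion_fintype_le _

theorem tendsto_sum_mul_of_sum_smul_eq_zero [Fintype ι] (hE : ∀ j, MeasurableSet (E j)) {w : ι → ℝ}
    (hw : ∑ i, w i • ψ i = 0) : Tendsto (fun j => ∑ i, w i * b i j) atTop (𝓝 0) := by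
  have hfin j : volume (E j) ≠ ⊤ := hvol j ▸ measure_ball_lt_top.ne
  let G j := E j ∩ ⋂ i, slab (ψ i) (b i j)
  have hGE j : G j ⊆ E j := inter_subset_left
  have hG j : MeasurableSet (G j) := (hE j).inter (.iInter fun i => measurableSet_slab _ _)
  have hGslab i j : G j ⊆ slab (ψ i) (b i j) := fun x hx => mem_iInter.1 hx.2 i
  have hGlim := tendsto_measureReal_diff_iInter_slab hvol h
  have hGvol : Tendsto (fun j => volume.real (G j)) atTop (𝓝 (ballVolume (d + 1))) := by
    have hreal j : volume.real (G j) = ballVolume (d + 1) - volume.real (E j \ G j) := by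
      have hEreal : volume.real (E j) = ballVolume (d + 1) := congrArg ENNReal.toReal (hvol j)
      rw [measureReal_sdiff (hGE j) (hG j) (hfin j), hEreal, sub_sub_cancel]
    simpa only [hreal, sub_zero] using hGlim.const_sub (ballVolume (d + 1))
  have hintegral j : ∑ i, w i * ∫ x in G j, (inner ℝ (ψ i) x - b i j) =
      -(∑ i, w i * b i j) * volume.real (G j) :=
    sum_mul_setIntegral_inner_sub (hG j) (measure_ne_top_of_subset (hGE j) (hfin j))
      (hGslab · j) hw
  have hprod := tendsto_finsetSum Finset.univ fun i _ =>
    ((h i).tendsto_setIntegral_inner_sub hvol hG hGE (hGslab i) hGlim).const_mul (w i)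
  simp only [hintegral, mul_zero, Finset.sum_const_zero] at hprod
  have hdiv := (hprod.div hGvol (ballVolume_pos _).ne').neg
  rw [zero_div, neg_zero] at hdiv
  refine hdiv.congr' ?_
  filter_upwards [hGvol.eventually_const_lt (ballVolume_pos _)] with j hj
  simp only [Pi.div_apply]
  rw [mul_div_cancel_right₀ _ hj.ne', neg_neg]

end Family

theorem tendsto_measureReal_diff_halfSpace {θ : 𝔼 (d + 1)} {c : ℕ → ℝ} (h : HasBallCaps E θ c)
    {b : ℕ → ℝ} (hbc : Tendsto (fun j => b j - c j) atTop (𝓝 0)) {r : ℝ} (hr : 1 < r) :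
    Tendsto (fun j => volume.real (E j \ halfSpace θ (b j + r))) atTop (𝓝 0) := by
  refine squeeze_zero' (.of_forall fun j => measureReal_nonneg) ?_
    (h.tendsto_measureReal_diff_slab hvol)
  filter_upwards [hbc.eventually_const_lt (show 1 - r < 0 by linarith)] with j hj
  refine measureReal_mono (sdiff_subset_sdiff_right fun x hx => ?_)
    (measure_ne_top_of_subset sdiff_subset (hvol j ▸ measure_ball_lt_top.ne))
  have hx' : |inner ℝ θ x - c j| ≤ 1 := hx
  rw [mem_halfSpace]
  linarith [(abs_le.1 hx').2]

end HasBallCaps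

theorem exists_tendsto_measureReal_diff_halfSpace {E : ℕ → Set (𝔼 (d + 1))}
    (hE : ∀ j, MeasurableSet (E j)) (hvol : ∀ j, volume (E j) = volume (ball (0 : 𝔼 (d + 1)) 1))
    (h : ∀ θ : 𝔼 (d + 1), ‖θ‖ = 1 → ∃ c, HasBallCaps E θ c) :
    ∃ z : ℕ → 𝔼 (d + 1), ∀ θ : 𝔼 (d + 1), ‖θ‖ = 1 → ∀ r > 1,
      Tendsto (fun j => volume.real (E j \ halfSpace θ (inner ℝ θ (z j) + r))) atTop (𝓝 0) := by
  let e : Fin (d + 1) → 𝔼 (d + 1) := fun i => EuclideanSpace.single i 1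
  choose b hb using fun i => h (e i) (by simp [e])
  refine ⟨fun j => WithLp.toLp 2 fun i => b i j, fun θ hθ r hr => ?_⟩
  obtain ⟨c, hc⟩ := h θ hθ
  refine hc.tendsto_measureReal_diff_halfSpace hvol ?_ hr
  have hfamily : ∀ i : Option (Fin (d + 1)), HasBallCaps E (i.elim θ e) (i.elim c b) :=
    Option.rec hc hb
  have hrel : ∑ i : Option (Fin (d + 1)), i.elim (-1) θ • i.elim θ e = 0 := by
    have hrepr := (EuclideanSpace.basisFun (Fin (d + 1)) ℝ).sum_repr θ
    simp only [EuclideanSpace.basisFun_repr, EuclideanSpace.basisFun_apply] at hrepr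
    simp only [Fintype.sum_option, Option.elim, e, hrepr, neg_smul, one_smul, neg_add_cancel]
  have hlim := HasBallCaps.tendsto_sum_mul_of_sum_smul_eq_zero hvol hfamily hE hrel
  refine hlim.congr fun j => ?_
  rw [Fintype.sum_option]
  simp only [Option.elim_none, Option.elim_some, PiLp.inner_apply, RCLike.inner_apply,
    Real.ringHom_apply, mul_comm]
  ring

end Centre

/-! ### From half-spaces to balls -/

section Balls

variable {X : Type*} [NormedAddCommGroup X] [InnerProductSpace ℝ X]

theorem exists_finset_compl_closedBall_subset [ProperSpace X] {r R : ℝ} (hr : 0 < r) (hrR : r < R) :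
    ∃ N : Finset X, (∀ θ ∈ N, ‖θ‖ = 1) ∧
      ∀ z, (closedBall z R)ᶜ ⊆ ⋃ θ ∈ N, (halfSpace θ (inner ℝ θ z + r))ᶜ := by
  have hR : 0 < R := hr.trans hrR
  obtain ⟨N, hNsphere, hNfin, hcover⟩ :=
    (isCompact_sphere (0 : X) 1).finite_cover_balls (div_pos (sub_pos.2 hrR) hR)
  refine ⟨hNfin.toFinset, fun θ hθ => by simpa using hNsphere (hNfin.mem_toFinset.1 hθ),
    fun z x hx => ?_⟩
  have hw : R < ‖x - z‖ := by simpa [dist_eq_norm] using hx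
  have hw0 : 0 < ‖x - z‖ := hR.trans hw
  set u : X := ‖x - z‖⁻¹ • (x - z)
  have hu : ‖u‖ = 1 := norm_smul_inv_norm (𝕜 := ℝ) (norm_pos_iff.1 hw0)
  have hxu : x - z = ‖x - z‖ • u := (smul_inv_smul₀ hw0.ne' _).symm
  obtain ⟨θ, hθN, hθu⟩ := mem_iUnion₂.1 (hcover (mem_sphere_zero_iff_norm.2 hu))
  refine mem_iUnion₂.2 ⟨θ, hNfin.mem_toFinset.2 hθN, ?_⟩
  have hinner : r / R < inner ℝ θ u := by
    have hcs := real_inner_le_norm (u - θ) u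
    rw [inner_sub_left, real_inner_self_eq_norm_sq, hu, mul_one, ← dist_eq_norm] at hcs
    rw [mem_ball, sub_div, div_self hR.ne'] at hθu
    linarith
  have hlt : r < inner ℝ θ (x - z) := calc
    r = R * (r / R) := by field_simp
    _ < ‖x - z‖ * inner ℝ θ u := by gcongr
    _ = inner ℝ θ (x - z) := by rw [← real_inner_smul_right, ← hxu]
  rw [inner_sub_right] at hlt
  rw [mem_compl_iff, mem_halfSpace]
  linarith

variable [FiniteDimensional ℝ X] [MeasurableSpace X] {μ : Measure X} {E : ℕ → Set X} {z : ℕ → X}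

theorem tendsto_measureReal_diff_closedBall_of_one_lt (hfin : ∀ j, μ (E j) ≠ ⊤)
    (h : ∀ θ : X, ‖θ‖ = 1 → ∀ r > 1,
      Tendsto (fun j => μ.real (E j \ halfSpace θ (inner ℝ θ (z j) + r))) atTop (𝓝 0))
    {R : ℝ} (hR : 1 < R) :
    Tendsto (fun j => μ.real (E j \ closedBall (z j) R)) atTop (𝓝 0) := by
  have : ProperSpace X := FiniteDimensional.proper ℝ X
  obtain ⟨r, hr, hrR⟩ := exists_between hR
  obtain ⟨N, hN, hcover⟩ :=
    exists_finset_compl_closedBall_subset (X := X) (one_pos.trans hr) hrR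
  have hsum := tendsto_finsetSum N fun θ hθ => h θ (hN θ hθ) r hr
  rw [Finset.sum_const_zero] at hsum
  refine squeeze_zero (fun j => measureReal_nonneg) (fun j => ?_) hsum
  have hsub : E j \ closedBall (z j) R ⊆
      ⋃ θ ∈ N, E j \ halfSpace θ (inner ℝ θ (z j) + r) := by
    simp only [sdiff_eq, ← inter_iUnion]
    exact inter_subset_inter_right _ (hcover (z j))
  exact (measureReal_mono hsub (measure_ne_top_of_subset
    (iUnion₂_subset fun θ _ => sdiff_subset) (hfin j))).trans (measureReal_biUnion_finset_le _ _)

variable [BorelSpace X] [μ.IsAddHaarMeasure]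

theorem tendsto_measureReal_diff_closedBall_one (hfin : ∀ j, μ (E j) ≠ ⊤)
    (h : ∀ R > 1, Tendsto (fun j => μ.real (E j \ closedBall (z j) R)) atTop (𝓝 0)) :
    Tendsto (fun j => μ.real (E j \ closedBall (z j) 1)) atTop (𝓝 0) := by
  let shell R := (R ^ Module.finrank ℝ X - 1) * μ.real (ball (0 : X) 1)
  have hle : ∀ R > 1, ∀ j, μ.real (E j \ closedBall (z j) 1) ≤
      μ.real (E j \ closedBall (z j) R) + shell R := fun R hR j => by
    have hball : μ (closedBall (z j) R) ≠ ⊤ := measure_closedBall_lt_top.ne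
    have hshell : μ.real (closedBall (z j) R \ closedBall (z j) 1) = shell R := by
      rw [measureReal_sdiff (closedBall_subset_closedBall hR.le) measurableSet_closedBall hball,
        Measure.addHaar_real_closedBall _ _ (by linarith),
        Measure.addHaar_real_closedBall _ _ zero_le_one, one_pow, ← sub_mul]
    rw [← hshell]
    exact (measureReal_mono (sdiff_triangle _ _ _) (measure_union_ne_top
      (measure_ne_top_of_subset sdiff_subset (hfin j))
      (measure_ne_top_of_subset sdiff_subset hball))).trans (measureReal_union_le _ _)
  have hshell : Tendsto shell (𝓝[>] 1) (𝓝 0) := by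
    have hcont : Continuous shell := by fun_prop
    simpa [shell] using (hcont.tendsto 1).mono_left nhdsWithin_le_nhds
  refine tendsto_order.2 ⟨fun a ha => .of_forall fun j => ha.trans_le measureReal_nonneg,
    fun ε hε => ?_⟩
  obtain ⟨R, hRε, hR⟩ := ((hshell.eventually_lt_const hε).and self_mem_nhdsWithin).exists
  have hlim := (h R hR).add_const (shell R)
  rw [zero_add] at hlim
  filter_upwards [hlim.eventually_lt_const hRε] with j hj using (hle R hR j).trans_lt hj

theorem tendsto_measure_symmDiff_closedBall_one (hE : ∀ j, MeasurableSet (E j))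
    (hμ : ∀ j, μ (E j) = μ (closedBall (0 : X) 1))
    (h : Tendsto (fun j => μ.real (E j \ closedBall (z j) 1)) atTop (𝓝 0)) :
    Tendsto (fun j => μ (symmDiff (E j) (closedBall (z j) 1))) atTop (𝓝 0) := by
  have hfin j : μ (E j) ≠ ⊤ := hμ j ▸ measure_closedBall_lt_top.ne
  have hsymm j : μ (symmDiff (E j) (closedBall (z j) 1)) = 2 * μ (E j \ closedBall (z j) 1) := by
    have hB := (measurableSet_closedBall (x := z j) (ε := 1)).nullMeasurableSet (μ := μ)
    rw [measure_symmDiff_eq (hE j).nullMeasurableSet hB, measure_sdiff_symm hB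
      (hE j).nullMeasurableSet (by rw [hμ, Measure.addHaar_closedBall_center])
      (measure_ne_top_of_subset inter_subset_right (hfin j)), two_mul]
  have hlim : Tendsto (fun j => μ (E j \ closedBall (z j) 1)) atTop (𝓝 0) :=
    (ENNReal.tendsto_toReal_iff (fun j => measure_ne_top_of_subset sdiff_subset (hfin j))
      ENNReal.zero_ne_top).1 h
  simp only [hsymm]
  simpa using ENNReal.Tendsto.const_mul hlim (.inr ENNReal.ofNat_ne_top)

end Balls

section UnitVolume

variable {d : ℕ} [NeZero d] {E : ℕ → Set (𝔼 (d + 1))}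

theorem toReal_hausdorffMeasure_sphere_le (d : ℕ) :
    ((hausdorffFactor d)⁻¹ * μH[d] (sphere (0 : 𝔼 (d + 1)) 1)).toReal ≤
      (d + 1) * ballVolume (d + 1) := by
  refine ENNReal.toReal_le_of_le_ofReal (mul_nonneg (by positivity) (ballVolume_pos _).le) ?_
  rw [← ENNReal.div_eq_inv_mul]
  exact ENNReal.div_le_of_le_mul' (hausdorffMeasure_sphere_le d)

theorem hausdorffMeasure_sphere_ne_top (d : ℕ) : μH[d] (sphere (0 : 𝔼 (d + 1)) 1) ≠ ⊤ :=
  ((hausdorffMeasure_sphere_le d).trans_lt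
    (ENNReal.mul_lt_top (hausdorffFactor_ne_top d).lt_top ENNReal.ofReal_lt_top)).ne

variable {d : ℕ} [NeZero d] {E : ℕ → Set (𝔼 (d + 1))}

theorem exists_hasBallCaps_of_tendsto (hE : ∀ j, MeasurableSet (E j))
    (hvol : ∀ j, volume (E j) = volume (ball (0 : 𝔼 (d + 1)) 1))
    (hfin : ∀ j, μH[d] (frontier (E j)) ≠ ⊤)
    (hfrontier : Tendsto (fun j => μH[d] (frontier (E j))) atTop
      (𝓝 (μH[d] (sphere (0 : 𝔼 (d + 1)) 1)))) {θ : 𝔼 (d + 1)} (hθ : ‖θ‖ = 1) :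
    ∃ c, HasBallCaps E θ c := by
  have hinv : (hausdorffFactor d)⁻¹ ≠ ⊤ := ENNReal.inv_ne_top.2 (hausdorffFactor_ne_zero d)
  have hlim : Tendsto (fun j => ((hausdorffFactor d)⁻¹ * μH[d] (frontier (E j))).toReal) atTop
      (𝓝 ((hausdorffFactor d)⁻¹ * μH[d] (sphere (0 : 𝔼 (d + 1)) 1)).toReal) :=
    (ENNReal.tendsto_toReal (ENNReal.mul_ne_top hinv (hausdorffMeasure_sphere_ne_top d))).comp
      (ENNReal.Tendsto.const_mul hfrontier (.inr hinv))
  -- Only the upper bound on the area of the sphere is available, so the defect is added to `P`.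
  have hP := hlim.add_const ((d + 1) * ballVolume (d + 1) -
    ((hausdorffFactor d)⁻¹ * μH[d] (sphere (0 : 𝔼 (d + 1)) 1)).toReal)
  rw [add_sub_cancel] at hP
  exact exists_hasBallCaps hE hvol hfin (fun j => le_add_of_nonneg_right
    (sub_nonneg.2 (toReal_hausdorffMeasure_sphere_le d))) hP hθ

theorem exists_tendsto_volume_symmDiff_closedBall_one (hE : ∀ j, MeasurableSet (E j))
    (hvol : ∀ j, volume (E j) = volume (ball (0 : 𝔼 (d + 1)) 1))
    (hfrontier : Tendsto (fun j => μH[d] (frontier (E j))) atTop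
      (𝓝 (μH[d] (sphere (0 : 𝔼 (d + 1)) 1)))) :
    ∃ z : ℕ → 𝔼 (d + 1),
      Tendsto (fun j => volume (symmDiff (E j) (closedBall (z j) 1))) atTop (𝓝 0) := by
  obtain ⟨N, hN⟩ := eventually_atTop.1
    (hfrontier.eventually_ne (hausdorffMeasure_sphere_ne_top d))
  obtain ⟨z, hz⟩ := exists_tendsto_measureReal_diff_halfSpace (fun j => hE (j + N))
    (fun j => hvol (j + N)) fun θ => exists_hasBallCaps_of_tendsto (fun j => hE (j + N))
      (fun j => hvol (j + N)) (fun j => hN (j + N) (Nat.le_add_left N j))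
      (hfrontier.comp (tendsto_add_atTop_nat N))
  have hfin j : volume (E (j + N)) ≠ ⊤ := hvol (j + N) ▸ measure_ball_lt_top.ne
  have hdiff := tendsto_measureReal_diff_closedBall_one hfin fun R =>
    tendsto_measureReal_diff_closedBall_of_one_lt hfin hz
  refine ⟨fun j => z (j - N), (tendsto_add_atTop_iff_nat N).1 ?_⟩
  simp only [Nat.add_sub_cancel]
  exact tendsto_measure_symmDiff_closedBall_one (fun j => hE (j + N))
    (fun j => by rw [hvol, Measure.addHaar_closedBall_eq_addHaar_ball]) hdiff

end UnitVolume

/-! ### Rescaling to unit volume -/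

section Scaling

open scoped Pointwise

variable {X : Type*} [NormedAddCommGroup X] [NormedSpace ℝ X] {r : ℝ}

theorem frontier_smul_set₀ (hr : r ≠ 0) (S : Set X) : frontier (r • S) = r • frontier S :=
  ((Homeomorph.smulOfNeZero r hr).image_frontier S).symm

variable [FiniteDimensional ℝ X] [MeasurableSpace X] [BorelSpace X] (μ : Measure X)
  [μ.IsAddHaarMeasure]

theorem exists_pos_measure_inv_smul_eq [Nontrivial X] {S : Set X} (hpos : μ S ≠ 0)
    (hfin : μ S ≠ ⊤) : ∃ r : ℝ, 0 < r ∧ μ (r⁻¹ • S) = μ (ball (0 : X) 1) := by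
  have hball : 0 < μ.real (ball (0 : X) 1) :=
    ENNReal.toReal_pos (measure_ball_pos μ _ one_pos).ne' measure_ball_lt_top.ne
  have hS : 0 < μ.real S := ENNReal.toReal_pos hpos hfin
  refine ⟨(μ.real S / μ.real (ball (0 : X) 1)) ^ ((Module.finrank ℝ X : ℝ)⁻¹), by positivity, ?_⟩
  rw [Measure.addHaar_smul, inv_pow, Real.rpow_inv_natCast_pow (by positivity)
    Module.finrank_pos.ne', inv_div, abs_of_pos (by positivity), ← ofReal_measureReal hfin,
    ← ENNReal.ofReal_mul (by positivity), div_mul_cancel₀ _ hS.ne',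
    ofReal_measureReal measure_ball_lt_top.ne]

theorem measure_smul_div_measure_smul (hr : r ≠ 0) (S T : Set X) :
    μ (r • S) / μ (r • T) = μ S / μ T := by
  rw [Measure.addHaar_smul, Measure.addHaar_smul, ENNReal.mul_div_mul_left _ _ _
    ENNReal.ofReal_ne_top]
  simpa using pow_ne_zero _ hr

theorem measure_symmDiff_closedBall_smul_div (hr : 0 < r) (S : Set X) (z : X) :
    μ (symmDiff S (closedBall (r • z) r)) / μ S =
      μ (symmDiff (r⁻¹ • S) (closedBall z 1)) / μ (r⁻¹ • S) := by
  have hball : closedBall (r • z) r = r • closedBall z 1 := by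
    rw [_root_.smul_closedBall _ _ zero_le_one, Real.norm_of_nonneg hr.le, mul_one]
  rw [← measure_smul_div_measure_smul μ hr.ne' (symmDiff (r⁻¹ • S) _), smul_set_symmDiff₀ hr.ne',
    smul_inv_smul₀ hr.ne', hball]

end Scaling

section IsoperimetricRatio

open scoped Pointwise

/-- The scale-invariant quotient of the Hausdorff measure of the frontier of a set by the power of
its volume with exponent `(n - 1) / n`; its value on balls is the isoperimetric constant. -/
noncomputable def isoperimetricRatio {n : ℕ} (S : Set (𝔼 n)) : ℝ≥0∞ :=
  μH[(n : ℝ) - 1] (frontier S) / volume S ^ (((n : ℝ) - 1) / n)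

variable {d : ℕ}

theorem isoperimetricRatio_eq (S : Set (𝔼 (d + 1))) :
    isoperimetricRatio S = μH[d] (frontier S) / volume S ^ ((d : ℝ) / (d + 1)) := by
  simp only [isoperimetricRatio, Nat.cast_add, Nat.cast_one, add_sub_cancel_right]

theorem isoperimetricRatio_smul {r : ℝ} (hr : 0 < r) (S : Set (𝔼 (d + 1))) :
    isoperimetricRatio (r • S) = isoperimetricRatio S := by
  have hd : (0 : ℝ) < d + 1 := by positivity
  have hfrontier : μH[d] (frontier (r • S)) = ENNReal.ofReal (r ^ d) * μH[d] (frontier S) := by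
    rw [frontier_smul_set₀ hr.ne', Measure.hausdorffMeasure_smul₀ d.cast_nonneg hr.ne',
      NNReal.rpow_natCast, ENNReal.smul_def, smul_eq_mul, ENNReal.coe_pow,
      ENNReal.ofReal_pow hr.le, ← enorm_eq_nnnorm, Real.enorm_eq_ofReal hr.le]
  have hvolume : volume (r • S) ^ ((d : ℝ) / (d + 1)) =
      ENNReal.ofReal (r ^ d) * volume S ^ ((d : ℝ) / (d + 1)) := by
    have hpow : (r ^ (d + 1)) ^ ((d : ℝ) / (d + 1)) = r ^ d := by
      rw [← Real.rpow_natCast, ← Real.rpow_mul hr.le, Nat.cast_succ, mul_div_cancel₀ _ hd.ne',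
        Real.rpow_natCast]
    rw [Measure.addHaar_smul, finrank_euclideanSpace_fin, abs_of_pos (by positivity),
      ENNReal.mul_rpow_of_nonneg _ _ (by positivity), ENNReal.ofReal_rpow_of_pos (by positivity),
      hpow]
  rw [isoperimetricRatio_eq, isoperimetricRatio_eq, hfrontier, hvolume,
    ENNReal.mul_div_mul_left _ _ (by simpa using pow_pos hr d) ENNReal.ofReal_ne_top]

theorem tendsto_hausdorffMeasure_frontier_of_tendsto_isoperimetricRatio
    {E : ℕ → Set (𝔼 (d + 1))} (hvol : ∀ j, volume (E j) = volume (ball (0 : 𝔼 (d + 1)) 1))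
    (h : Tendsto (fun j => isoperimetricRatio (E j)) atTop
      (𝓝 (isoperimetricRatio (closedBall (0 : 𝔼 (d + 1)) 1)))) :
    Tendsto (fun j => μH[d] (frontier (E j))) atTop (𝓝 (μH[d] (sphere (0 : 𝔼 (d + 1)) 1))) := by
  set V := volume (ball (0 : 𝔼 (d + 1)) 1) ^ ((d : ℝ) / (d + 1))
  have hV_ne_zero : V ≠ 0 :=
    (ENNReal.rpow_pos (measure_ball_pos volume _ one_pos) measure_ball_lt_top.ne).ne'
  have hV_ne_top : V ≠ ⊤ :=
    ENNReal.rpow_ne_top_of_nonneg (by positivity) measure_ball_lt_top.ne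
  simp only [isoperimetricRatio_eq, hvol, Measure.addHaar_closedBall_eq_addHaar_ball,
    frontier_closedBall _ one_ne_zero] at h
  change Tendsto (fun j => μH[d] (frontier (E j)) / V) atTop (𝓝 (μH[d] (sphere 0 1) / V)) at h
  simpa only [ENNReal.div_mul_cancel hV_ne_zero hV_ne_top] using
    ENNReal.Tendsto.mul_const h (.inr hV_ne_top)

end IsoperimetricRatio

end Isoperimetric

open Isoperimetric
open scoped Pointwise

/-- A sequence of measurable sets whose isoperimetric ratio tends to the
Euclidean isoperimetric constant `c_n` is close to balls in relative volume. -/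
theorem stmt_9 (n : ℕ) (hn : 2 ≤ n) (E : ℕ → Set (EuclideanSpace ℝ (Fin n)))
    (hmeas : ∀ j, MeasurableSet (E j))
    (hpos : ∀ j, 0 < volume (E j)) (hfin : ∀ j, volume (E j) < ⊤)
    (hiso :
      Filter.Tendsto
        (fun j =>
          μH[(n : ℝ) - 1] (frontier (E j)) / (volume (E j)) ^ (((n : ℝ) - 1) / n))
        Filter.atTop
        (nhds (μH[(n : ℝ) - 1] (Metric.sphere (0 : EuclideanSpace ℝ (Fin n)) 1) /
          (volume (Metric.closedBall (0 : EuclideanSpace ℝ (Fin n)) 1)) ^ (((n : ℝ) - 1) / n)))) :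
    ∃ (p : ℕ → EuclideanSpace ℝ (Fin n)) (R : ℕ → ℝ),
      Filter.Tendsto
        (fun j => volume (symmDiff (E j) (Metric.closedBall (p j) (R j))) / volume (E j))
        Filter.atTop (nhds 0) := by
  obtain ⟨d, rfl⟩ : ∃ d, n = d + 1 := ⟨n - 1, by omega⟩
  have : NeZero d := ⟨by omega⟩
  choose r hr hvol using fun j =>
    exists_pos_measure_inv_smul_eq volume (hpos j).ne' (hfin j).ne
  have hratio : Tendsto (fun j => isoperimetricRatio ((r j)⁻¹ • E j)) atTop
      (nhds (isoperimetricRatio (Metric.closedBall (0 : EuclideanSpace ℝ (Fin (d + 1))) 1))) := by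
    simp only [isoperimetricRatio_smul (inv_pos.2 (hr _))]
    simpa only [isoperimetricRatio, frontier_closedBall _ one_ne_zero] using hiso
  obtain ⟨z, hz⟩ := exists_tendsto_volume_symmDiff_closedBall_one
    (fun j => (hmeas j).const_smul₀ _) hvol
    (tendsto_hausdorffMeasure_frontier_of_tendsto_isoperimetricRatio hvol hratio)
  refine ⟨fun j => r j • z j, r, ?_⟩
  simp only [measure_symmDiff_closedBall_smul_div volume (hr _), hvol]
  simpa only [ENNReal.zero_div] using
    ENNReal.Tendsto.div_const hz (.inr (Metric.measure_ball_pos volume _ one_pos).ne')
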